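/- arXiv:math/0306417 — 2 statements merged into one kernel-verified Lean document; each statement's English description precedes it below -/
import Mathlib

section
/- Let α be a map from the dyadic rectangles of ℝ^d to [0,∞) with finite product Carleson measure norm ‖α‖_CM = sup_{U⊂ℝ^d, 0<|U|<∞} |U|^{-1} Σ_{R dyadic, R⊂U} α(R), the supremum over all measurable sets U of finite measure. Then for every 1 < p < ∞ there is a constant C_p such that for every measurable set U of finite measure, ‖Σ_{R dyadic, R⊂U} (α(R)/|R|) 1_R‖_{L^p(ℝ^d)} ≤ C_p ‖α‖_CM |U|^{1/p}. -/
open MeasureTheory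
open scoped ENNReal NNReal
attribute [local instance] Classical.propDecidable

/-- The dyadic rectangle `∏_j [n_j 2^{k_j}, (n_j+1) 2^{k_j})` in `ℝ^d`. -/
noncomputable def dyRect {d : ℕ} (k n : Fin d → ℤ) : Set (Fin d → ℝ) :=
  Set.univ.pi fun j => Set.Ico ((n j : ℝ) * 2 ^ (k j)) (((n j : ℝ) + 1) * 2 ^ (k j))

/-!
By `L^p`–`L^q` duality it suffices to pair the balayage `∑_{R ⊆ U} (α(R)/|R|) 1_R` with
`g ∈ L^q`, which gives `∑_{R ⊆ U} α(R) ⨍_R g`. A rectangle `R ⊆ U` on which `g` has average larger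
than `t` lies in `U ∩ {M g > t}`, where `M` is the maximal function over dyadic rectangles. The
Carleson condition on this set and integration in `t` bound the sum by `N ∫_U M g`, and Hölder's
inequality together with the boundedness of `M` on `L^q` concludes. That boundedness follows by
iterating in each coordinate the one-dimensional maximal theorem, which only uses that any two
dyadic intervals are nested or disjoint.
-/

open Set

section Integral

variable {X Y : Type*} [MeasurableSpace X] [MeasurableSpace Y] {μ : Measure X} {ν : Measure Y}

lemma measurable_measure_ofReal_lt (μ : Measure X) (f : X → ℝ≥0∞) :
    Measurable fun t : ℝ => μ {x | ENNReal.ofReal t < f x} :=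
  Antitone.measurable fun _ _ hst =>
    measure_mono fun _ hx => (ENNReal.ofReal_le_ofReal hst).trans_lt hx

lemma lintegral_rpow_eq_lintegral_measure_ofReal_lt_mul_of_ne_top (μ : Measure X) {f : X → ℝ≥0∞}
    (hf : Measurable f) (hfin : ∀ x, f x ≠ ⊤) {p : ℝ} (hp : 0 < p) :
    ∫⁻ x, f x ^ p ∂μ = ENNReal.ofReal p *
      ∫⁻ t in Ioi (0 : ℝ), μ {x | ENNReal.ofReal t < f x} * ENNReal.ofReal (t ^ (p - 1)) := by
  have hpow : ∀ x, f x ^ p = ENNReal.ofReal ((f x).toReal ^ p) := fun x => by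
    rw [← ENNReal.ofReal_rpow_of_nonneg ENNReal.toReal_nonneg hp.le, ENNReal.ofReal_toReal (hfin x)]
  simp_rw [hpow]
  rw [lintegral_rpow_eq_lintegral_meas_lt_mul μ (ae_of_all _ fun _ => ENNReal.toReal_nonneg)
    hf.ennreal_toReal.aemeasurable hp]
  congr 1
  refine setLIntegral_congr_fun measurableSet_Ioi fun t (ht : 0 < t) => ?_
  simp only [ENNReal.ofReal_lt_iff_lt_toReal ht.le (hfin _)]

/-- This extends `MeasureTheory.lintegral_rpow_eq_lintegral_meas_lt_mul` to functions that may be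
infinite on a set of positive measure. -/
lemma lintegral_rpow_eq_lintegral_measure_ofReal_lt_mul (μ : Measure X) {f : X → ℝ≥0∞}
    (hf : Measurable f) {p : ℝ} (hp : 0 < p) :
    ∫⁻ x, f x ^ p ∂μ = ENNReal.ofReal p *
      ∫⁻ t in Ioi (0 : ℝ), μ {x | ENNReal.ofReal t < f x} * ENNReal.ofReal (t ^ (p - 1)) := by
  have hmono : Monotone fun (n : ℕ) x => min (f x) n := fun m n hmn x =>
    min_le_min_left _ (Nat.cast_le.2 hmn)
  have hsup : ∀ x, ⨆ n : ℕ, min (f x) n = f x := fun x => by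
    rw [← inf_iSup_eq, ENNReal.iSup_natCast, inf_top_eq]
  have hpow : ∀ x, f x ^ p = ⨆ n : ℕ, min (f x) n ^ p := fun x => by
    conv_lhs => rw [← hsup x]
    exact (ENNReal.orderIsoRpow p hp).map_iSup _
  have hmeas : ∀ t : ℝ, μ {x | ENNReal.ofReal t < f x}
      = ⨆ n : ℕ, μ {x | ENNReal.ofReal t < min (f x) n} := fun t => by
    have hset : {x | ENNReal.ofReal t < f x} = ⋃ n : ℕ, {x | ENNReal.ofReal t < min (f x) n} := by
      ext x
      conv_lhs => rw [mem_ofPred_eq, ← hsup x, lt_iSup_iff]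
      simp only [mem_iUnion, mem_ofPred_eq]
    rw [hset]
    exact Monotone.measure_iUnion fun m n hmn x hx => lt_of_lt_of_le hx (hmono hmn x)
  simp_rw [hpow, hmeas, ENNReal.iSup_mul]
  rw [lintegral_iSup (fun n => (hf.min measurable_const).pow_const p)
      fun m n hmn x => ENNReal.rpow_le_rpow (hmono hmn x) hp.le,
    lintegral_iSup (fun n => (measurable_measure_ofReal_lt μ _).fun_mul (by fun_prop))
      fun m n hmn t =>
        mul_le_mul_left (measure_mono fun x hx => lt_of_lt_of_le hx (hmono hmn x)) _,
    ENNReal.mul_iSup]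
  exact iSup_congr fun n => lintegral_rpow_eq_lintegral_measure_ofReal_lt_mul_of_ne_top μ
    (hf.min measurable_const) (fun x => ne_top_of_le_ne_top (by simp) (min_le_right _ _)) hp

lemma lintegral_eq_lintegral_measure_ofReal_lt (μ : Measure X) {f : X → ℝ≥0∞}
    (hf : Measurable f) :
    ∫⁻ x, f x ∂μ = ∫⁻ t in Ioi (0 : ℝ), μ {x | ENNReal.ofReal t < f x} := by
  simpa using lintegral_rpow_eq_lintegral_measure_ofReal_lt_mul μ hf one_pos

lemma lintegral_le_mul_lintegral_of_measure_lt_le {f : X → ℝ≥0∞} {g : Y → ℝ≥0∞}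
    (hf : Measurable f) (hg : Measurable g) {K : ℝ≥0∞}
    (h : ∀ t, μ {x | t < f x} ≤ K * ν {y | t < g y}) :
    ∫⁻ x, f x ∂μ ≤ K * ∫⁻ y, g y ∂ν := by
  rw [lintegral_eq_lintegral_measure_ofReal_lt μ hf, lintegral_eq_lintegral_measure_ofReal_lt ν hg,
    ← lintegral_const_mul _ (measurable_measure_ofReal_lt ν g)]
  exact lintegral_mono fun t => h _

lemma lintegral_rpow_le_of_mul_measure_lt_le {f : X → ℝ≥0∞} {g : Y → ℝ≥0∞}
    (hf : Measurable f) (hg : Measurable g) {K : ℝ≥0∞}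
    (h : ∀ t, t * μ {x | t < f x} ≤ K * ν {y | t < g y}) {q : ℝ} (hq : 1 < q) :
    ∫⁻ x, f x ^ q ∂μ ≤ ENNReal.ofReal (q / (q - 1)) * K * ∫⁻ y, g y ^ (q - 1) ∂ν := by
  have hq1 : 0 < q - 1 := sub_pos.2 hq
  have hpow : ∀ t : ℝ, 0 < t → ENNReal.ofReal (t ^ (q - 1))
      = ENNReal.ofReal t * ENNReal.ofReal (t ^ (q - 1 - 1)) := fun t ht => by
    rw [← ENNReal.ofReal_mul ht.le, Real.rpow_sub_one ht.ne' (q - 1), mul_div_cancel₀ _ ht.ne']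
  calc ∫⁻ x, f x ^ q ∂μ
      = ENNReal.ofReal q *
          ∫⁻ t in Ioi (0 : ℝ), μ {x | ENNReal.ofReal t < f x} * ENNReal.ofReal (t ^ (q - 1)) :=
        lintegral_rpow_eq_lintegral_measure_ofReal_lt_mul μ hf (zero_lt_one.trans hq)
    _ ≤ ENNReal.ofReal q * ∫⁻ t in Ioi (0 : ℝ),
          K * (ν {y | ENNReal.ofReal t < g y} * ENNReal.ofReal (t ^ (q - 1 - 1))) := by
        gcongr ENNReal.ofReal q * ?_
        refine setLIntegral_mono' measurableSet_Ioi fun t (ht : 0 < t) => ?_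
        rw [hpow t ht, ← mul_assoc, ← mul_assoc, mul_comm (μ _)]
        exact mul_le_mul_left (h _) _
    _ = ENNReal.ofReal (q / (q - 1)) * K * (ENNReal.ofReal (q - 1) * ∫⁻ t in Ioi (0 : ℝ),
          ν {y | ENNReal.ofReal t < g y} * ENNReal.ofReal (t ^ (q - 1 - 1))) := by
        rw [lintegral_const_mul _ ((measurable_measure_ofReal_lt ν g).fun_mul (by fun_prop)),
          ← div_mul_cancel₀ q hq1.ne', ENNReal.ofReal_mul (by positivity),
          div_mul_cancel₀ q hq1.ne']
        ring
    _ = ENNReal.ofReal (q / (q - 1)) * K * ∫⁻ y, g y ^ (q - 1) ∂ν := by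
        rw [← lintegral_rpow_eq_lintegral_measure_ofReal_lt_mul ν hg hq1]

lemma le_rpow_of_le_mul_rpow_one_div {p q : ℝ} (hpq : p.HolderConjugate q) {A K : ℝ≥0∞}
    (hA : A ≠ ⊤) (h : A ≤ K * A ^ (1 / q)) : A ≤ K ^ p := by
  rcases eq_or_ne A 0 with rfl | h0
  · exact zero_le
  have hsum : 1 / p + 1 / q = 1 := by simpa using hpq.inv_add_inv_eq_one
  have hroot : A ^ (1 / p) ≤ K := by
    have hne : A ^ (1 / q) ≠ 0 := by simp [ENNReal.rpow_eq_zero_iff, h0, hA]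
    have hnt : A ^ (1 / q) ≠ ⊤ := ENNReal.rpow_ne_top_of_nonneg hpq.symm.one_div_nonneg hA
    rw [← ENNReal.mul_le_mul_iff_left hne hnt, ← ENNReal.rpow_add _ _ h0 hA, hsum,
      ENNReal.rpow_one]
    exact h
  rwa [one_div, ENNReal.rpow_inv_le_iff hpq.pos] at hroot

lemma exists_simpleFunc_le_lintegral_lt_top_lt [SigmaFinite μ] {f : X → ℝ≥0∞} {L : ℝ≥0∞}
    (h : L < ∫⁻ x, f x ∂μ) :
    ∃ φ : SimpleFunc X ℝ≥0, (∀ x, φ x ≤ f x) ∧ ∫⁻ x, φ x ∂μ < ⊤ ∧ L < ∫⁻ x, φ x ∂μ := by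
  rw [lintegral_eq_nnreal] at h
  simp only [lt_iSup_iff] at h
  obtain ⟨ψ, hψf, hψ⟩ := h
  rw [← SimpleFunc.lintegral_eq_lintegral] at hψ
  obtain ⟨φ, hφψ, hφ⟩ := SimpleFunc.exists_lt_lintegral_simpleFunc_of_lt_lintegral hψ
  exact ⟨φ, fun x => (ENNReal.coe_le_coe.2 (hφψ x)).trans (hψf x), hφ⟩

lemma lintegral_rpow_le_of_forall_lintegral_mul_le [SigmaFinite μ] {p q : ℝ}
    (hpq : p.HolderConjugate q) {f : X → ℝ≥0∞} {K : ℝ≥0∞}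
    (h : ∀ g : X → ℝ≥0∞, Measurable g →
      ∫⁻ x, f x * g x ∂μ ≤ K * (∫⁻ x, g x ^ q ∂μ) ^ (1 / q)) :
    ∫⁻ x, f x ^ p ∂μ ≤ K ^ p := by
  by_contra! hlt
  obtain ⟨φ, hφf, hφtop, hφK⟩ := exists_simpleFunc_le_lintegral_lt_top_lt hlt
  have hsum : 1 / p + 1 / q = 1 := by simpa using hpq.inv_add_inv_eq_one
  have hle : ∀ x, (φ x : ℝ≥0∞) ≤ f x * (φ x : ℝ≥0∞) ^ (1 / q) := fun x => by
    calc (φ x : ℝ≥0∞) = (φ x : ℝ≥0∞) ^ (1 / p) * (φ x : ℝ≥0∞) ^ (1 / q) := by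
          rw [← ENNReal.rpow_add_of_nonneg _ _ hpq.one_div_nonneg hpq.symm.one_div_nonneg, hsum,
            ENNReal.rpow_one]
      _ ≤ f x * (φ x : ℝ≥0∞) ^ (1 / q) := by
          gcongr
          rw [one_div, ENNReal.rpow_inv_le_iff hpq.pos]
          exact hφf x
  refine hφK.not_ge (le_rpow_of_le_mul_rpow_one_div hpq hφtop.ne ?_)
  calc ∫⁻ x, φ x ∂μ ≤ ∫⁻ x, f x * (φ x : ℝ≥0∞) ^ (1 / q) ∂μ := lintegral_mono hle
    _ ≤ K * (∫⁻ x, ((φ x : ℝ≥0∞) ^ (1 / q)) ^ q ∂μ) ^ (1 / q) :=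
        h _ (φ.measurable.coe_nnreal_ennreal.pow_const _)
    _ = K * (∫⁻ x, φ x ∂μ) ^ (1 / q) := by
        simp only [one_div, ENNReal.rpow_inv_rpow hpq.symm.ne_zero]

end Integral

section MaximalFunction

variable {X Y ι κ : Type*} [MeasurableSpace X] [MeasurableSpace Y] {μ : Measure X} {ν : Measure Y}

/-- The maximal function of `f` with respect to the family of sets `I`. Sets of measure zero and
sets of infinite measure do not contribute, since the average over them is `0`. -/
noncomputable def maximalFunction (μ : Measure X) (I : ι → Set X) (f : X → ℝ≥0∞) (x : X) : ℝ≥0∞ :=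
  ⨆ (i) (_ : x ∈ I i), ⨍⁻ y in I i, f y ∂μ

lemma setLAverage_le_maximalFunction (μ : Measure X) {I : ι → Set X} (f : X → ℝ≥0∞) {i : ι} {x : X}
    (hx : x ∈ I i) : ⨍⁻ y in I i, f y ∂μ ≤ maximalFunction μ I f x :=
  le_iSup₂_of_le i hx le_rfl

lemma setOf_lt_maximalFunction (μ : Measure X) (I : ι → Set X) (f : X → ℝ≥0∞) (t : ℝ≥0∞) :
    {x | t < maximalFunction μ I f x} = ⋃ i : {i // t < ⨍⁻ y in I i, f y ∂μ}, I i := by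
  ext x
  simp [maximalFunction, lt_iSup_iff, and_comm]

lemma measurable_maximalFunction [Countable ι] (μ : Measure X) {I : ι → Set X}
    (hI : ∀ i, MeasurableSet (I i)) (f : X → ℝ≥0∞) : Measurable (maximalFunction μ I f) := by
  refine measurable_of_Ioi fun t => ?_
  change MeasurableSet {x | t < maximalFunction μ I f x}
  rw [setOf_lt_maximalFunction]
  exact MeasurableSet.iUnion fun i => hI i

lemma measurable_maximalFunction_prodMk_right [Countable ι] (μ : Measure X) [SFinite μ]
    {I : ι → Set X} (hI : ∀ i, MeasurableSet (I i)) {f : X × Y → ℝ≥0∞} (hf : Measurable f) :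
    Measurable fun z : X × Y => maximalFunction μ I (fun x => f (x, z.2)) z.1 := by
  have havg : ∀ i, Measurable fun y => ⨍⁻ x in I i, f (x, y) ∂μ := fun i => by
    simp only [setLAverage_eq]
    exact hf.lintegral_prod_left'.div_const _
  refine measurable_of_Ioi fun t => ?_
  have hset : (fun z : X × Y => maximalFunction μ I (fun x => f (x, z.2)) z.1) ⁻¹' Ioi t
      = ⋃ i, I i ×ˢ {y | t < ⨍⁻ x in I i, f (x, y) ∂μ} := by
    ext z
    simp [maximalFunction, lt_iSup_iff]
  rw [hset]
  exact MeasurableSet.iUnion fun i => (hI i).prod (measurableSet_lt measurable_const (havg i))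

/-- The maximal function with respect to `I` is bounded on `L^q`, with norm at most
`C ^ (1 / q)`. -/
def MaximalStrongType (μ : Measure X) (I : ι → Set X) (q : ℝ) (C : ℝ≥0∞) : Prop :=
  ∀ f : X → ℝ≥0∞, Measurable f → ∫⁻ x, maximalFunction μ I f x ^ q ∂μ ≤ C * ∫⁻ x, f x ^ q ∂μ

lemma maximalFunction_comp_index_le (μ : Measure X) (I : ι → Set X) (φ : κ → ι) (f : X → ℝ≥0∞)
    (x : X) : maximalFunction μ (fun k => I (φ k)) f x ≤ maximalFunction μ I f x :=
  iSup₂_le fun _ hx => setLAverage_le_maximalFunction μ f hx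

lemma MaximalStrongType.comp_index {I : ι → Set X} {q : ℝ} (hq : 0 ≤ q) {C : ℝ≥0∞}
    (h : MaximalStrongType μ I q C) (φ : κ → ι) :
    MaximalStrongType μ (fun k => I (φ k)) q C := fun f hf =>
  (lintegral_mono fun x =>
    ENNReal.rpow_le_rpow (maximalFunction_comp_index_le μ I φ f x) hq).trans (h f hf)

lemma maximalFunction_preimage_comp (e : X ≃ᵐ Y) (he : MeasurePreserving e μ ν) (I : ι → Set Y)
    (f : Y → ℝ≥0∞) (x : X) :
    maximalFunction μ (fun i => e ⁻¹' I i) (fun x => f (e x)) x = maximalFunction ν I f (e x) := by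
  simp only [maximalFunction, setLAverage_eq, mem_preimage, he.measure_preimage_equiv,
    he.setLIntegral_comp_preimage_emb e.measurableEmbedding]

lemma MaximalStrongType.preimage {I : ι → Set Y} {q : ℝ} {C : ℝ≥0∞}
    (h : MaximalStrongType ν I q C) (e : X ≃ᵐ Y) (he : MeasurePreserving e μ ν) :
    MaximalStrongType μ (fun i => e ⁻¹' I i) q C := by
  intro f hf
  obtain ⟨g, rfl⟩ : ∃ g : Y → ℝ≥0∞, f = fun x => g (e x) := ⟨fun y => f (e.symm y), by simp⟩
  have hg : Measurable g := (e.measurable_comp_iff).1 hf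
  simp only [maximalFunction_preimage_comp e he]
  rw [he.lintegral_comp_emb e.measurableEmbedding (fun y => maximalFunction ν I g y ^ q),
    he.lintegral_comp_emb e.measurableEmbedding (fun y => g y ^ q)]
  exact h g hg

end MaximalFunction

section Laminar

variable {X ι κ : Type*}

/-- A laminar family: any two of its sets are nested or disjoint. Dyadic intervals are the main
example. -/
def IsLaminar (I : ι → Set X) : Prop :=
  ∀ i j, I i ⊆ I j ∨ I j ⊆ I i ∨ Disjoint (I i) (I j)

lemma IsLaminar.comp_index {I : ι → Set X} (hI : IsLaminar I) (φ : κ → ι) :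
    IsLaminar fun k => I (φ k) :=
  fun _ _ => hI _ _

lemma IsLaminar.exists_pairwiseDisjoint_biUnion_eq {I : ι → Set X} (hI : IsLaminar I)
    (T : Finset ι) :
    ∃ S ⊆ T, (S : Set ι).PairwiseDisjoint I ∧ ⋃ i ∈ S, I i = ⋃ i ∈ T, I i := by
  obtain ⟨S, hST, hS⟩ := exists_minimal_le_of_wellFoundedLT
    (fun S : Finset ι => ⋃ i ∈ S, I i = ⋃ i ∈ T, I i) T rfl
  have hredundant : ∀ i ∈ S, ∀ j ∈ S, i ≠ j → ¬ I i ⊆ I j := fun i hi j hj hij hsub => by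
    refine (hS.not_prop_of_lt (S.erase_ssubset hi)) (Eq.trans ?_ hS.prop)
    conv_rhs => rw [← Finset.insert_erase hi, Finset.set_biUnion_insert]
    exact (union_eq_right.2 (hsub.trans
      (subset_biUnion_of_mem (u := I) (Finset.mem_erase.2 ⟨hij.symm, hj⟩)))).symm
  refine ⟨S, hST, fun i hi j hj hij => ?_, hS.prop⟩
  rcases hI i j with h | h | h
  · exact absurd h (hredundant i hi j hj hij)
  · exact absurd h (hredundant j hj i hi hij.symm)
  · exact h

variable [MeasurableSpace X] {μ ν : Measure X}

lemma IsLaminar.mul_measure_biUnion_finset_le {I : ι → Set X} (hI : IsLaminar I)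
    (hIm : ∀ i, MeasurableSet (I i)) {c : ℝ≥0∞} (hc : ∀ i, c * μ (I i) ≤ ν (I i)) (T : Finset ι) :
    c * μ (⋃ i ∈ T, I i) ≤ ν (⋃ i ∈ T, I i) := by
  obtain ⟨S, -, hdisj, hS⟩ := hI.exists_pairwiseDisjoint_biUnion_eq T
  rw [← hS]
  calc c * μ (⋃ i ∈ S, I i) ≤ c * ∑ i ∈ S, μ (I i) := by gcongr; exact measure_biUnion_finset_le S I
    _ ≤ ∑ i ∈ S, ν (I i) := by rw [Finset.mul_sum]; exact Finset.sum_le_sum fun i _ => hc i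
    _ = ν (⋃ i ∈ S, I i) := (measure_biUnion_finset hdisj fun i _ => hIm i).symm

lemma IsLaminar.mul_measure_iUnion_le [Countable ι] {I : ι → Set X} (hI : IsLaminar I)
    (hIm : ∀ i, MeasurableSet (I i)) {c : ℝ≥0∞} (hc : ∀ i, c * μ (I i) ≤ ν (I i)) :
    c * μ (⋃ i, I i) ≤ ν (⋃ i, I i) := by
  have hdir : Directed (· ⊆ ·) fun T : Finset ι => ⋃ i ∈ T, I i :=
    Monotone.directed_le fun _ _ h => biUnion_subset_biUnion_left h
  rw [iUnion_eq_iUnion_finset, hdir.measure_iUnion, hdir.measure_iUnion, ENNReal.mul_iSup]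
  exact iSup_mono fun T => hI.mul_measure_biUnion_finset_le hIm hc T

/-- Only the part of `f` above half of its average matters: this localisation to `{t < 2 * f}`
gives the maximal theorem without any a priori finiteness of the maximal function. -/
lemma mul_measure_le_setLIntegral_of_lt_setLAverage {f : X → ℝ≥0∞} (hf : Measurable f)
    {s : Set X} {t : ℝ≥0∞} (h : t < ⨍⁻ y in s, f y ∂μ) :
    t * μ s ≤ 2 * ∫⁻ y in s ∩ {y | t < 2 * f y}, f y ∂μ := by
  rw [setLAverage_eq] at h
  have htop : t * μ s ≠ ⊤ := ENNReal.mul_ne_top h.ne_top fun hs => by simp [hs] at h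
  have hmeas : MeasurableSet {y | t < 2 * f y} :=
    measurableSet_lt measurable_const (hf.const_mul 2)
  have hsmall : ∫⁻ y in s \ {y | t < 2 * f y}, 2 * f y ∂μ ≤ t * μ s := by
    calc ∫⁻ y in s \ {y | t < 2 * f y}, 2 * f y ∂μ
        ≤ ∫⁻ _ in s \ {y | t < 2 * f y}, t ∂μ := by
          refine setLIntegral_mono measurable_const fun y hy => ?_
          exact not_lt.1 hy.2
      _ ≤ t * μ s := by
          rw [setLIntegral_const]
          gcongr
          exact sdiff_subset
  refine (ENNReal.add_le_add_iff_right htop).1 ?_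
  calc t * μ s + t * μ s ≤ 2 * ∫⁻ y in s, f y ∂μ := by
        rw [← two_mul]
        gcongr
        exact ENNReal.mul_le_of_le_div h.le
    _ = 2 * ∫⁻ y in s ∩ {y | t < 2 * f y}, f y ∂μ + ∫⁻ y in s \ {y | t < 2 * f y}, 2 * f y ∂μ := by
        rw [← lintegral_inter_add_sdiff f s hmeas, mul_add, lintegral_const_mul _ hf]
    _ ≤ 2 * ∫⁻ y in s ∩ {y | t < 2 * f y}, f y ∂μ + t * μ s := by gcongr

lemma IsLaminar.mul_measure_lt_maximalFunction_le [Countable ι] {I : ι → Set X} (hI : IsLaminar I)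
    (hIm : ∀ i, MeasurableSet (I i)) {f : X → ℝ≥0∞} (hf : Measurable f) (t : ℝ≥0∞) :
    t * μ {x | t < maximalFunction μ I f x} ≤ 2 * μ.withDensity f {x | t < 2 * f x} := by
  have hmeas : MeasurableSet {y | t < 2 * f y} :=
    measurableSet_lt measurable_const (hf.const_mul 2)
  set ρ : Measure X := (2 : ℝ≥0∞) • (μ.withDensity f).restrict {y | t < 2 * f y} with hρ
  have hle : ∀ i : {i // t < ⨍⁻ y in I i, f y ∂μ}, t * μ (I i) ≤ ρ (I i) := fun i => by
    rw [hρ, Measure.smul_apply, Measure.restrict_apply (hIm i),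
      withDensity_apply _ ((hIm i).inter hmeas), smul_eq_mul]
    exact mul_measure_le_setLIntegral_of_lt_setLAverage hf i.2
  rw [setOf_lt_maximalFunction]
  refine ((hI.comp_index Subtype.val).mul_measure_iUnion_le (fun i => hIm i) hle).trans ?_
  exact (measure_mono (subset_univ _)).trans_eq (by simp [hρ])

theorem IsLaminar.maximalStrongType [Countable ι] {I : ι → Set X} (hI : IsLaminar I)
    (hIm : ∀ i, MeasurableSet (I i)) {q : ℝ} (hq : 1 < q) :
    MaximalStrongType μ I q (ENNReal.ofReal (q / (q - 1)) * 2 ^ q) := by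
  intro f hf
  have hq1 : 0 ≤ q - 1 := sub_nonneg.2 hq.le
  have hsplit : ∀ a : ℝ≥0∞, a ^ q = a * a ^ (q - 1) := fun a => by
    conv_lhs => rw [← add_sub_cancel 1 q, ENNReal.rpow_add_of_nonneg _ _ zero_le_one hq1,
      ENNReal.rpow_one]
  calc ∫⁻ x, maximalFunction μ I f x ^ q ∂μ
      ≤ ENNReal.ofReal (q / (q - 1)) * 2 * ∫⁻ x, (2 * f x) ^ (q - 1) ∂μ.withDensity f :=
        lintegral_rpow_le_of_mul_measure_lt_le (measurable_maximalFunction μ hIm f)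
          (hf.const_mul 2) (hI.mul_measure_lt_maximalFunction_le hIm hf) hq
    _ = ENNReal.ofReal (q / (q - 1)) * 2 ^ q * ∫⁻ x, f x ^ q ∂μ := by
        rw [lintegral_withDensity_eq_lintegral_mul _ hf ((hf.const_mul 2).pow_const _), hsplit 2,
          ← mul_assoc, mul_assoc _ ((2 : ℝ≥0∞) ^ (q - 1)), ← lintegral_const_mul _ (hf.pow_const q)]
        congr 1
        refine lintegral_congr fun x => ?_
        rw [Pi.mul_apply, ENNReal.mul_rpow_of_nonneg _ _ hq1, hsplit (f x)]
        ring

end Laminar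

section Product

variable {X Y ι κ : Type*} [MeasurableSpace X] [MeasurableSpace Y] {μ : Measure X} {ν : Measure Y}

lemma laverage_prod_symm [SFinite μ] [SFinite ν] {f : X × Y → ℝ≥0∞} (hf : Measurable f) :
    ⨍⁻ z, f z ∂μ.prod ν = ⨍⁻ y, ⨍⁻ x, f (x, y) ∂μ ∂ν := by
  rcases eq_zero_or_neZero μ with rfl | hμ
  · simp
  rcases eq_zero_or_neZero ν with rfl | hν
  · simp
  have hinv : (μ univ * ν univ)⁻¹ = (μ univ)⁻¹ * (ν univ)⁻¹ :=
    ENNReal.mul_inv (.inl (NeZero.ne _)) (.inr (NeZero.ne _))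
  simp only [laverage_eq, div_eq_mul_inv]
  rw [lintegral_mul_const _ hf.lintegral_prod_left', ← lintegral_prod_symm _ hf.aemeasurable,
    ← univ_prod_univ, Measure.prod_prod, hinv, mul_assoc]

lemma maximalFunction_prod_le [SFinite μ] [SFinite ν] (I : ι → Set X) (J : κ → Set Y)
    {f : X × Y → ℝ≥0∞} (hf : Measurable f) (x : X) (y : Y) :
    maximalFunction (μ.prod ν) (fun r : ι × κ => I r.1 ×ˢ J r.2) f (x, y)
      ≤ maximalFunction ν J (fun y' => maximalFunction μ I (fun x' => f (x', y')) x) y := by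
  refine iSup₂_le fun r hr => ?_
  calc ⨍⁻ z in I r.1 ×ˢ J r.2, f z ∂μ.prod ν
      = ⨍⁻ y' in J r.2, ⨍⁻ x' in I r.1, f (x', y') ∂μ ∂ν := by
        rw [← Measure.prod_restrict, laverage_prod_symm hf]
    _ ≤ ⨍⁻ y' in J r.2, maximalFunction μ I (fun x' => f (x', y')) x ∂ν :=
        lintegral_mono fun y' => setLAverage_le_maximalFunction μ _ hr.1
    _ ≤ maximalFunction ν J (fun y' => maximalFunction μ I (fun x' => f (x', y')) x) y :=
        setLAverage_le_maximalFunction ν _ hr.2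

theorem MaximalStrongType.prod [SFinite μ] [SFinite ν] [Countable ι] [Countable κ]
    {I : ι → Set X} {J : κ → Set Y} (hI : ∀ i, MeasurableSet (I i)) (hJ : ∀ j, MeasurableSet (J j))
    {q : ℝ} (hq : 0 ≤ q) {C D : ℝ≥0∞}
    (hμ : MaximalStrongType μ I q C) (hν : MaximalStrongType ν J q D) :
    MaximalStrongType (μ.prod ν) (fun r : ι × κ => I r.1 ×ˢ J r.2) q (C * D) := by
  intro f hf
  set G : X × Y → ℝ≥0∞ := fun z => maximalFunction μ I (fun x => f (x, z.2)) z.1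
  have hGm : Measurable G := measurable_maximalFunction_prodMk_right μ hI hf
  have hM := measurable_maximalFunction (μ.prod ν) (I := fun r : ι × κ => I r.1 ×ˢ J r.2)
    (fun r => (hI r.1).prod (hJ r.2)) f
  calc ∫⁻ z, maximalFunction (μ.prod ν) (fun r : ι × κ => I r.1 ×ˢ J r.2) f z ^ q ∂μ.prod ν
      = ∫⁻ x, ∫⁻ y, maximalFunction (μ.prod ν) (fun r : ι × κ => I r.1 ×ˢ J r.2) f (x, y) ^ q
          ∂ν ∂μ := lintegral_prod _ (hM.pow_const q).aemeasurable
    _ ≤ ∫⁻ x, ∫⁻ y, maximalFunction ν J (fun y' => G (x, y')) y ^ q ∂ν ∂μ :=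
        lintegral_mono fun x => lintegral_mono fun y =>
          ENNReal.rpow_le_rpow (maximalFunction_prod_le I J hf x y) hq
    _ ≤ ∫⁻ x, D * ∫⁻ y, G (x, y) ^ q ∂ν ∂μ :=
        lintegral_mono fun x => hν _ (hGm.comp measurable_prodMk_left)
    _ = D * ∫⁻ y, ∫⁻ x, G (x, y) ^ q ∂μ ∂ν := by
        have hGq := hGm.pow_const q
        rw [lintegral_const_mul _ hGq.lintegral_prod_right', ← lintegral_prod _ hGq.aemeasurable,
          lintegral_prod_symm _ hGq.aemeasurable]
    _ ≤ D * ∫⁻ y, C * ∫⁻ x, f (x, y) ^ q ∂μ ∂ν := by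
        gcongr with y
        exact hμ _ (hf.comp measurable_prodMk_right)
    _ = C * D * ∫⁻ z, f z ^ q ∂μ.prod ν := by
        have hfq := hf.pow_const q
        rw [lintegral_const_mul _ hfq.lintegral_prod_left',
          ← lintegral_prod_symm _ hfq.aemeasurable, ← mul_assoc, mul_comm D]

lemma maximalFunction_le_of_subsingleton [Subsingleton X] (I : ι → Set X)
    (f : X → ℝ≥0∞) (x : X) : maximalFunction μ I f x ≤ f x := by
  refine iSup₂_le fun i _ => ?_
  have hf : f = fun _ => f x := funext fun y => congrArg f (Subsingleton.elim y x)
  rw [hf]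
  exact (setLAverage_le_essSup _ _).trans (essSup_le_of_ae_le _ (ae_of_all _ fun _ => le_rfl))

theorem MaximalStrongType.pi {d : ℕ} {X ι : Fin d → Type*} [∀ j, MeasurableSpace (X j)]
    [∀ j, Countable (ι j)] {μ : ∀ j, Measure (X j)} [∀ j, SigmaFinite (μ j)]
    {I : ∀ j, ι j → Set (X j)} (hI : ∀ j i, MeasurableSet (I j i)) {q : ℝ} (hq : 0 ≤ q)
    {C : Fin d → ℝ≥0∞} (h : ∀ j, MaximalStrongType (μ j) (I j) q (C j)) :
    MaximalStrongType (Measure.pi μ) (fun i : ∀ j, ι j => univ.pi fun j => I j (i j)) q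
      (∏ j, C j) := by
  induction d with
  | zero =>
    intro f _
    rw [Fin.prod_univ_zero, one_mul]
    exact lintegral_mono fun x => ENNReal.rpow_le_rpow (maximalFunction_le_of_subsingleton _ f x) hq
  | succ d ih =>
    have htail := ih (fun j => hI (Fin.succAbove 0 j)) fun j => h (Fin.succAbove 0 j)
    have hprod := (h 0).prod (hI 0)
      (fun i : ∀ j : Fin d, ι (Fin.succAbove 0 j) => .univ_pi fun j => hI _ (i j)) hq htail
    have hpi := (hprod.preimage (MeasurableEquiv.piFinSuccAbove X 0)
      (measurePreserving_piFinSuccAbove μ 0)).comp_index hq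
        fun i : ∀ j, ι j => (i 0, fun j => i (Fin.succAbove 0 j))
    rw [Fin.prod_univ_succAbove C 0]
    convert hpi using 2 with i
    ext x
    rw [mem_univ_pi, Fin.forall_iff_succAbove 0]
    exact and_congr_right fun _ => mem_univ_pi.symm

end Product

section Carleson

variable {X ι : Type*} [MeasurableSpace X] {μ : Measure X}

/-- The Carleson condition: the mass of `a` on the members of the family `I` contained in a set `V`
is at most `N` times the measure of `V`. The smallest such `N` is the Carleson norm of `a`. -/
def IsCarleson (μ : Measure X) (I : ι → Set X) (a : ι → ℝ≥0∞) (N : ℝ≥0∞) : Prop :=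
  ∀ V, MeasurableSet V → μ V < ⊤ → (∑' i, if I i ⊆ V then a i else 0) ≤ N * μ V

/-- The balayage on `U` of the weights `a`: each mass `a i` with `I i ⊆ U` is spread evenly over
`I i`. -/
noncomputable def balayage (μ : Measure X) (I : ι → Set X) (a : ι → ℝ≥0∞) (U : Set X) (x : X) :
    ℝ≥0∞ :=
  ∑' i, if I i ⊆ U then (I i).indicator (fun _ => a i / μ (I i)) x else 0

lemma lintegral_balayage_mul [Countable ι] {I : ι → Set X} (hI : ∀ i, MeasurableSet (I i))
    (a : ι → ℝ≥0∞) (U : Set X) {g : X → ℝ≥0∞} (hg : Measurable g) :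
    ∫⁻ x, balayage μ I a U x * g x ∂μ
      = ∑' i, (if I i ⊆ U then a i else 0) * ⨍⁻ y in I i, g y ∂μ := by
  have hterm : ∀ i x, (if I i ⊆ U then (I i).indicator (fun _ => a i / μ (I i)) x else 0) * g x
      = (I i).indicator (fun x => (if I i ⊆ U then a i else 0) / μ (I i) * g x) x := fun i x => by
    by_cases hx : x ∈ I i <;> by_cases hi : I i ⊆ U <;> simp [hx, hi]
  simp only [balayage, ← ENNReal.tsum_mul_right, hterm]
  rw [lintegral_tsum fun i => ((hg.const_mul _).indicator (hI i)).aemeasurable]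
  refine tsum_congr fun i => ?_
  rw [lintegral_indicator (hI i), lintegral_const_mul _ hg, setLAverage_eq]
  simp only [div_eq_mul_inv]
  ring

lemma IsCarleson.tsum_mul_setLAverage_le [Countable ι] {I : ι → Set X}
    (hI : ∀ i, MeasurableSet (I i)) {a : ι → ℝ≥0∞} {N : ℝ≥0∞} (ha : IsCarleson μ I a N)
    {U : Set X} (hU : MeasurableSet U) (hUtop : μ U < ⊤) (g : X → ℝ≥0∞) :
    ∑' i, (if I i ⊆ U then a i else 0) * ⨍⁻ y in I i, g y ∂μ
      ≤ N * ∫⁻ x in U, maximalFunction μ I g x ∂μ := by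
  let : MeasurableSpace ι := ⊤
  set ν : Measure ι := Measure.sum fun i => (if I i ⊆ U then a i else 0) • Measure.dirac i with hν
  have hM := measurable_maximalFunction μ hI g
  have hlevel : ∀ t, ν {i | t < ⨍⁻ y in I i, g y ∂μ}
      ≤ N * μ.restrict U {x | t < maximalFunction μ I g x} := fun t => by
    have hmeas : MeasurableSet {x | t < maximalFunction μ I g x} :=
      measurableSet_lt measurable_const hM
    rw [Measure.restrict_apply hmeas]
    refine le_trans ?_ (ha _ (hmeas.inter hU) ((measure_mono inter_subset_right).trans_lt hUtop))
    rw [hν, Measure.sum_apply _ MeasurableSpace.measurableSet_top]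
    refine ENNReal.tsum_le_tsum fun i => ?_
    by_cases hi : I i ⊆ U ∧ t < ⨍⁻ y in I i, g y ∂μ
    · have hsub : I i ⊆ {x | t < maximalFunction μ I g x} ∩ U := fun x hx =>
        ⟨hi.2.trans_le (setLAverage_le_maximalFunction μ g hx), hi.1 hx⟩
      simp [hi.1, hi.2, hsub]
    · by_cases hiU : I i ⊆ U <;> simp_all
  calc ∑' i, (if I i ⊆ U then a i else 0) * ⨍⁻ y in I i, g y ∂μ
      = ∫⁻ i, ⨍⁻ y in I i, g y ∂μ ∂ν := by
        simp only [hν, lintegral_sum_measure, lintegral_smul_measure, lintegral_dirac, smul_eq_mul]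
    _ ≤ N * ∫⁻ x in U, maximalFunction μ I g x ∂μ :=
        lintegral_le_mul_lintegral_of_measure_lt_le measurable_from_top hM hlevel

lemma setLIntegral_le_measure_rpow_mul_lintegral_rpow {p q : ℝ} (hpq : p.HolderConjugate q)
    {f : X → ℝ≥0∞} (hf : Measurable f) (U : Set X) :
    ∫⁻ x in U, f x ∂μ ≤ μ U ^ (1 / p) * (∫⁻ x, f x ^ q ∂μ) ^ (1 / q) := by
  have hholder := ENNReal.lintegral_mul_le_Lp_mul_Lq (μ.restrict U) hpq
    (aemeasurable_const (b := (1 : ℝ≥0∞))) hf.aemeasurable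
  simp only [Pi.mul_apply, one_mul, ENNReal.one_rpow, lintegral_one,
    Measure.restrict_apply_univ] at hholder
  exact hholder.trans (mul_le_mul_right (ENNReal.rpow_le_rpow (setLIntegral_le_lintegral _ _)
    hpq.symm.one_div_nonneg) _)

theorem IsCarleson.lintegral_balayage_rpow_le [Countable ι] [SigmaFinite μ] {I : ι → Set X}
    (hI : ∀ i, MeasurableSet (I i)) {p q : ℝ} (hpq : p.HolderConjugate q) {C : ℝ≥0∞}
    (hmax : MaximalStrongType μ I q C) {a : ι → ℝ≥0∞} {N : ℝ≥0∞} (ha : IsCarleson μ I a N)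
    {U : Set X} (hU : MeasurableSet U) (hUtop : μ U < ⊤) :
    ∫⁻ x, balayage μ I a U x ^ p ∂μ ≤ (C ^ (1 / q) * N) ^ p * μ U := by
  have hpair : ∀ g : X → ℝ≥0∞, Measurable g → ∫⁻ x, balayage μ I a U x * g x ∂μ
      ≤ C ^ (1 / q) * N * μ U ^ (1 / p) * (∫⁻ x, g x ^ q ∂μ) ^ (1 / q) := fun g hg => by
    calc ∫⁻ x, balayage μ I a U x * g x ∂μ
        ≤ N * ∫⁻ x in U, maximalFunction μ I g x ∂μ :=
          (lintegral_balayage_mul hI a U hg).trans_le (ha.tsum_mul_setLAverage_le hI hU hUtop g)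
      _ ≤ N * (μ U ^ (1 / p) * (∫⁻ x, maximalFunction μ I g x ^ q ∂μ) ^ (1 / q)) := by
          gcongr
          exact setLIntegral_le_measure_rpow_mul_lintegral_rpow hpq
            (measurable_maximalFunction μ hI g) U
      _ ≤ N * (μ U ^ (1 / p) * (C * ∫⁻ x, g x ^ q ∂μ) ^ (1 / q)) := by
          gcongr
          · exact hpq.symm.one_div_nonneg
          · exact hmax g hg
      _ = C ^ (1 / q) * N * μ U ^ (1 / p) * (∫⁻ x, g x ^ q ∂μ) ^ (1 / q) := by
          rw [ENNReal.mul_rpow_of_nonneg _ _ hpq.symm.one_div_nonneg]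
          ring
  refine (lintegral_rpow_le_of_forall_lintegral_mul_le hpq hpair).trans_eq ?_
  rw [ENNReal.mul_rpow_of_nonneg _ _ hpq.nonneg, ← ENNReal.rpow_mul,
    one_div_mul_cancel hpq.ne_zero, ENNReal.rpow_one]

end Carleson

section Box

variable {ι : Type*} [Countable ι] {d : ℕ} {X : Fin d → Type*} [∀ j, MeasurableSpace (X j)]
  {μ : ∀ j, Measure (X j)} [∀ j, SigmaFinite (μ j)] {R : ι → ∀ j, Set (X j)}

theorem maximalStrongType_pi_of_isLaminar (hRm : ∀ i j, MeasurableSet (R i j))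
    (hR : ∀ j, IsLaminar fun i => R i j) {q : ℝ} (hq : 1 < q) :
    MaximalStrongType (Measure.pi μ) (fun i => univ.pi (R i)) q
      ((ENNReal.ofReal (q / (q - 1)) * 2 ^ q) ^ d) := by
  have hq0 : 0 ≤ q := zero_le_one.trans hq.le
  have hpi := MaximalStrongType.pi (μ := μ) (I := fun j i => R i j) (fun j i => hRm i j) hq0
    fun j => (hR j).maximalStrongType (fun i => hRm i j) hq
  rw [Finset.prod_const, Finset.card_univ, Fintype.card_fin] at hpi
  exact hpi.comp_index hq0 fun i _ => i

theorem product_john_nirenberg_general (hRm : ∀ i j, MeasurableSet (R i j))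
    (hR : ∀ j, IsLaminar fun i => R i j) {p : ℝ} (hp : 1 < p) :
    ∃ C : ℝ, 0 < C ∧ ∀ (a : ι → ℝ≥0∞) (N : ℝ≥0∞),
      IsCarleson (Measure.pi μ) (fun i => univ.pi (R i)) a N →
      ∀ U, MeasurableSet U → Measure.pi μ U < ⊤ →
        ∫⁻ x, balayage (Measure.pi μ) (fun i => univ.pi (R i)) a U x ^ p ∂Measure.pi μ
          ≤ (ENNReal.ofReal C * N) ^ p * Measure.pi μ U := by
  have hpq := Real.HolderConjugate.conjExponent hp
  set q := p.conjExponent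
  set K : ℝ≥0∞ := ((ENNReal.ofReal (q / (q - 1)) * 2 ^ q) ^ d) ^ (1 / q)
  have hKtop : K ≠ ⊤ := by
    have := hpq.symm.nonneg
    finiteness
  refine ⟨K.toReal + 1, by positivity, fun a N ha U hU hUtop => ?_⟩
  calc ∫⁻ x, balayage (Measure.pi μ) (fun i => univ.pi (R i)) a U x ^ p ∂Measure.pi μ
      ≤ (K * N) ^ p * Measure.pi μ U :=
        ha.lintegral_balayage_rpow_le (fun i => .univ_pi (hRm i)) hpq
          (maximalStrongType_pi_of_isLaminar hRm hR hpq.symm.lt) hU hUtop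
    _ ≤ (ENNReal.ofReal (K.toReal + 1) * N) ^ p * Measure.pi μ U := by
        gcongr
        rw [ENNReal.le_ofReal_iff_toReal_le hKtop (by positivity)]
        exact le_add_of_nonneg_right zero_le_one

end Box

section Dyadic

/-- The dyadic interval `[n 2^k, (n+1) 2^k)`, indexed by `(k, n)`. -/
noncomputable def dyInterval (r : ℤ × ℤ) : Set ℝ :=
  Ico ((r.2 : ℝ) * 2 ^ r.1) (((r.2 : ℝ) + 1) * 2 ^ r.1)

lemma measurableSet_dyInterval (r : ℤ × ℤ) : MeasurableSet (dyInterval r) := measurableSet_Ico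

lemma dyInterval_subset_or_disjoint {r s : ℤ × ℤ} (h : r.1 ≤ s.1) :
    dyInterval r ⊆ dyInterval s ∨ Disjoint (dyInterval r) (dyInterval s) := by
  obtain ⟨k, n⟩ := r
  obtain ⟨l, m⟩ := s
  obtain ⟨j, rfl⟩ := Int.le.dest h
  refine or_iff_not_imp_right.2 fun hdis => ?_
  obtain ⟨x, ⟨hnx, hxn⟩, ⟨hmx, hxm⟩⟩ := not_disjoint_iff.1 hdis
  have hk : (0 : ℝ) < 2 ^ k := by positivity
  have hpow : (2 : ℝ) ^ (k + (j : ℤ)) = ((2 ^ j : ℤ) : ℝ) * 2 ^ k := by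
    rw [zpow_add₀ two_ne_zero, zpow_natCast]
    push_cast
    ring
  simp only [hpow, ← mul_assoc] at hnx hxn hmx hxm
  have hleft : m * 2 ^ j ≤ n := by
    have hlt := lt_of_mul_lt_mul_right (hmx.trans_lt hxn) hk.le
    exact Int.lt_add_one_iff.1 (by exact_mod_cast hlt)
  have hright : n + 1 ≤ (m + 1) * 2 ^ j := by
    have hlt := lt_of_mul_lt_mul_right (hnx.trans_lt hxm) hk.le
    exact Int.add_one_le_iff.2 (by exact_mod_cast hlt)
  refine Ico_subset_Ico ?_ ?_ <;> simp only [hpow, ← mul_assoc]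
  · exact mul_le_mul_of_nonneg_right (by exact_mod_cast hleft) hk.le
  · exact mul_le_mul_of_nonneg_right (by exact_mod_cast hright) hk.le

lemma isLaminar_dyInterval : IsLaminar dyInterval := fun r s => by
  rcases le_total r.1 s.1 with h | h
  · exact (dyInterval_subset_or_disjoint h).imp_right .inr
  · exact .inr ((dyInterval_subset_or_disjoint h).imp_right fun hd => hd.symm)

end Dyadic

/-- **The Chang–Fefferman John–Nirenberg inequality for product Carleson measures.**
Let `α : {dyadic rectangles of ℝ^d} → [0,∞)` satisfy the product Carleson measure
condition `∑_{R ⊆ U} α(R) ≤ N |U|` for all measurable sets `U` of finite measure.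
Then for `1 < p < ∞` and every measurable `U` of finite measure,
`‖∑_{R ⊆ U} (α(R)/|R|) 1_R‖_p ≤ C_p N |U|^{1/p}`, stated in the equivalent form
`∫ (∑_{R ⊆ U} (α(R)/|R|) 1_R)^p ≤ (C_p N)^p |U|`. -/
theorem product_john_nirenberg (d : ℕ) (p : ℝ) (hp : 1 < p) :
    ∃ C : ℝ, 0 < C ∧
      ∀ α : (Fin d → ℤ) × (Fin d → ℤ) → ℝ, (∀ r, 0 ≤ α r) →
      ∀ N : ℝ, 0 ≤ N →
        (∀ U : Set (Fin d → ℝ), MeasurableSet U → volume U < ⊤ →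
          (∑' r : (Fin d → ℤ) × (Fin d → ℤ),
              if dyRect r.1 r.2 ⊆ U then ENNReal.ofReal (α r) else 0)
            ≤ ENNReal.ofReal N * volume U) →
        ∀ U : Set (Fin d → ℝ), MeasurableSet U → volume U < ⊤ →
          ∫⁻ x : Fin d → ℝ,
              (∑' r : (Fin d → ℤ) × (Fin d → ℤ),
                if dyRect r.1 r.2 ⊆ U
                then (dyRect r.1 r.2).indicator
                  (fun _ => ENNReal.ofReal (α r) / volume (dyRect r.1 r.2)) x
                else 0) ^ p
            ≤ ENNReal.ofReal (C * N) ^ p * volume U := by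
  obtain ⟨C, hC, h⟩ := product_john_nirenberg_general (μ := fun _ : Fin d => volume)
    (R := fun (r : (Fin d → ℤ) × (Fin d → ℤ)) j => dyInterval (r.1 j, r.2 j))
    (fun _ _ => measurableSet_dyInterval _) (fun _ => isLaminar_dyInterval.comp_index _) hp
  refine ⟨C, hC, fun α _ N _ hα U hU hUtop => ?_⟩
  rw [ENNReal.ofReal_mul hC.le]
  exact h (fun r => ENNReal.ofReal (α r)) _ hα U hU hUtop
end

section
/- Let Δ = {ε[2^k,2^{k+1}) : ε∈{±1}, k∈ℤ} be the lacunary dyadic intervals, and suppose the bounded function m : ℝ → ℂ has the form m = Σ_{ω∈Δ} a_ω 1_ω for real (or complex) coefficients a_ω. Then for every 1 < p < ∞ there is a constant C_p such that ‖A_m‖_{L^p(ℝ)→L^p(ℝ)} ≤ C_p sup_{ω∈Δ} |a_ω|. -/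
open MeasureTheory Complex
open scoped ENNReal NNReal

/-- The Fourier transform `f̂(ξ) = ∫ f(x) e^{-i x ξ} dx`. -/
noncomputable def ft (f : ℝ → ℂ) (ξ : ℝ) : ℂ :=
  ∫ x : ℝ, f x * Complex.exp (-(Complex.I * (x : ℂ) * (ξ : ℂ)))

/-- The Fourier multiplier operator `A_m f(x) = ∫ m(ξ) f̂(ξ) e^{i x ξ} dξ`. -/
noncomputable def multOp (m : ℝ → ℂ) (f : ℝ → ℂ) (x : ℝ) : ℂ :=
  ∫ ξ : ℝ, m ξ * ft f ξ * Complex.exp (Complex.I * (ξ : ℂ) * (x : ℂ))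

/-- The lacunary (dyadic) interval `ε [2^k, 2^{k+1})`, for `ε = ±1` encoded as a `Bool`. -/
noncomputable def lacI (k : ℤ) (ε : Bool) : Set ℝ :=
  if ε then Set.Ico ((2:ℝ) ^ k) ((2:ℝ) ^ (k + 1))
  else Set.Ioc (-(2:ℝ) ^ (k + 1)) (-(2:ℝ) ^ k)

/-!
By duality it is enough to bound `∫ (A_m f) g = ∫ m(ξ) f̂(ξ) ĝ(-ξ) dξ` by a multiple of
`∫ |f| ^ p + ∫ |g| ^ q`.

Burkholder's function is concave along diagonals, so its partial Legendre transform becomes convex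
after adding `± x y`. Such a Bellman function controls the variation of the pairing of `f` and `g`
along averaging operators. Telescoping over the Gaussian averages at the scales `2 ^ j` bounds the
differences of the heat semigroup at these scales with arbitrary bounded coefficients: these
differences, the bands with symbols `profile (ξ / 2 ^ j)`, satisfy a randomised Littlewood-Paley
inequality.

M. Riesz's argument bounds the projection to a frequency half-line: the values of the Cauchy
integral of a nonnegative function lie in a half-plane, where `|z| ^ p` is dominated by `(re z) ^ p`
and the real part of a power of `z`, and the contour integral of that power is negligible. Applied
to random signed sums of modulated bands, it bounds the cut-offs of the bands at arbitrary
frequencies `α j` simultaneously: averaging over the signs decouples the bands, and the contraction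
principle removes the modulations.

On the block `[2 ^ j, 2 ^ (j + 1))` the bands of `f` and `g` multiply `f̂ ĝ` by `profile ^ 2`, which
is bounded below there. Integration by parts against `profile ^ (-2)` writes the sharp block as a
superposition of the cut-offs at `α j = 2 ^ j s`, `1 ≤ s ≤ 2`.
-/

namespace LacunaryMultiplier

section Burkholder

/-- Up to sign and an affine function, Burkholder's function beyond the diagonal, where `c = ± b`.
It vanishes at `y = b`. -/
noncomputable def burkholderTail (p b c y : ℝ) : ℝ :=
  p * c * (y ^ (p - 1) - y * b ^ (p - 2)) + (p - 2) * (y ^ p - b ^ p)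

variable {p : ℝ}

lemma mul_rpow_sub_two {y : ℝ} (hp : 2 ≤ p) (hy : 0 ≤ y) : y * y ^ (p - 2) = y ^ (p - 1) := by
  rw [← Real.rpow_one_add' hy (by linarith)]
  congr 1
  ring

lemma mul_rpow_sub_one {y : ℝ} (hp : 1 ≤ p) (hy : 0 ≤ y) : y * y ^ (p - 1) = y ^ p := by
  rw [← Real.rpow_one_add' hy (by linarith), add_sub_cancel]

lemma mul_mul_rpow_sub_two_le {b y : ℝ} (hp : 2 ≤ p) (hb : 0 ≤ b) (hy : 0 ≤ y) :
    (p - 1) * (b * y ^ (p - 2)) ≤ (p - 2) * y ^ (p - 1) + b ^ (p - 1) := by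
  have hp1 : 0 < p - 1 := by linarith
  have amgm := Real.geom_mean_le_arith_mean2_weighted (w₁ := (p - 2) / (p - 1))
    (w₂ := 1 / (p - 1)) (p₁ := y ^ (p - 1)) (p₂ := b ^ (p - 1))
    (div_nonneg (by linarith) hp1.le) (by positivity) (by positivity) (by positivity)
    (by field_simp; ring)
  rw [← Real.rpow_mul hy, ← Real.rpow_mul hb, mul_div_cancel₀ _ hp1.ne',
    mul_div_cancel₀ _ hp1.ne', Real.rpow_one] at amgm
  calc (p - 1) * (b * y ^ (p - 2)) = (p - 1) * (y ^ (p - 2) * b) := by ring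
    _ ≤ _ := mul_le_mul_of_nonneg_left amgm hp1.le
    _ = _ := by field_simp

lemma burkholderTail_deriv_nonneg {b c y : ℝ} (hp : 2 ≤ p) (hc : |c| ≤ b) (hy : b < y) :
    0 ≤ p * c * ((p - 1) * y ^ (p - 2) - b ^ (p - 2)) + (p - 2) * (p * y ^ (p - 1)) := by
  have hb : 0 ≤ b := (abs_nonneg c).trans hc
  have hbracket : 0 ≤ (p - 1) * y ^ (p - 2) - b ^ (p - 2) := by
    have hmono : b ^ (p - 2) ≤ y ^ (p - 2) := Real.rpow_le_rpow hb hy.le (by linarith)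
    have hpos : 0 ≤ y ^ (p - 2) := Real.rpow_nonneg (hb.trans hy.le) _
    nlinarith
  have hworst : -b * ((p - 1) * y ^ (p - 2) - b ^ (p - 2)) ≤
      c * ((p - 1) * y ^ (p - 2) - b ^ (p - 2)) :=
    mul_le_mul_of_nonneg_right (abs_le.1 hc).1 hbracket
  have hsum : 0 ≤ c * ((p - 1) * y ^ (p - 2) - b ^ (p - 2)) + (p - 2) * y ^ (p - 1) := by
    linarith [mul_mul_rpow_sub_two_le hp hb (hb.trans hy.le), mul_rpow_sub_two hp hb]
  linarith [mul_nonneg (by linarith : 0 ≤ p) hsum]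

lemma hasDerivAt_burkholderTail (p b c : ℝ) {y : ℝ} (hy : 0 < y) :
    HasDerivAt (burkholderTail p b c)
      (p * c * ((p - 1) * y ^ (p - 2) - b ^ (p - 2)) + (p - 2) * (p * y ^ (p - 1))) y := by
  have h₁ : HasDerivAt (fun y : ℝ => y ^ (p - 1)) ((p - 1) * y ^ (p - 2)) y := by
    convert! Real.hasDerivAt_rpow_const (p := p - 1) (Or.inl hy.ne') using 3
    ring
  have h₂ : HasDerivAt (fun y : ℝ => y ^ p) (p * y ^ (p - 1)) y :=
    Real.hasDerivAt_rpow_const (Or.inl hy.ne')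
  exact (((h₁.sub ((hasDerivAt_id y).mul_const _)).const_mul (p * c)).add
    ((h₂.sub_const (b ^ p)).const_mul (p - 2))).congr_deriv (by ring)

lemma continuous_burkholderTail (hp : 1 ≤ p) (b c : ℝ) : Continuous (burkholderTail p b c) := by
  have h₁ : Continuous fun y : ℝ => y ^ (p - 1) := Real.continuous_rpow_const (by linarith)
  have h₂ : Continuous fun y : ℝ => y ^ p := Real.continuous_rpow_const (by linarith)
  unfold burkholderTail
  fun_prop

lemma monotoneOn_burkholderTail {b c : ℝ} (hp : 2 ≤ p) (hc : |c| ≤ b) :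
    MonotoneOn (burkholderTail p b c) (Set.Ici b) := by
  have hb : 0 ≤ b := (abs_nonneg c).trans hc
  refine monotoneOn_of_hasDerivWithinAt_nonneg (convex_Ici b)
    (continuous_burkholderTail (by linarith) b c).continuousOn
    (fun y hy => (hasDerivAt_burkholderTail p b c ?_).hasDerivWithinAt)
    (fun y hy => burkholderTail_deriv_nonneg hp hc ?_)
  · exact hb.trans_lt (by simpa only [interior_Ici, Set.mem_Ioi] using hy)
  · simpa only [interior_Ici, Set.mem_Ioi] using hy

lemma convexOn_burkholderTail {b c : ℝ} (hp : 2 ≤ p) (hc : |c| ≤ b) :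
    ConvexOn ℝ (Set.Ici b) (burkholderTail p b c) := by
  have hb : 0 ≤ b := (abs_nonneg c).trans hc
  have hderiv : ∀ y : ℝ, 0 < y → HasDerivAt
      (fun y => p * c * ((p - 1) * y ^ (p - 2) - b ^ (p - 2)) + (p - 2) * (p * y ^ (p - 1)))
      (p * (p - 1) * (p - 2) * (y ^ (p - 3) * (y + c))) y := by
    intro y hy
    have h₁ : HasDerivAt (fun y : ℝ => y ^ (p - 2)) ((p - 2) * y ^ (p - 3)) y := by
      convert! Real.hasDerivAt_rpow_const (p := p - 2) (Or.inl hy.ne') using 3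
      ring
    have h₂ : HasDerivAt (fun y : ℝ => y ^ (p - 1)) ((p - 1) * (y ^ (p - 3) * y)) y := by
      convert! Real.hasDerivAt_rpow_const (p := p - 1) (Or.inl hy.ne') using 2
      rw [← Real.rpow_add_one hy.ne']
      congr 1
      ring
    exact ((((h₁.const_mul (p - 1)).sub_const (b ^ (p - 2))).const_mul (p * c)).add
      ((h₂.const_mul p).const_mul (p - 2))).congr_deriv (by ring)
  refine convexOn_of_hasDerivWithinAt2_nonneg (convex_Ici b)
    (continuous_burkholderTail (by linarith) b c).continuousOn
    (fun y hy => (hasDerivAt_burkholderTail p b c ?_).hasDerivWithinAt)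
    (fun y hy => (hderiv y ?_).hasDerivWithinAt) (fun y hy => ?_) <;>
    rw [interior_Ici, Set.mem_Ioi] at hy
  · exact hb.trans_lt hy
  · exact hb.trans_lt hy
  · have hcoeff : 0 ≤ p * (p - 1) * (p - 2) :=
      mul_nonneg (mul_nonneg (by linarith) (by linarith)) (by linarith)
    exact mul_nonneg hcoeff (mul_nonneg (Real.rpow_nonneg (hb.trans hy.le) _)
      (by linarith [(abs_le.1 hc).1]))

lemma convexOn_burkholderTail_max {b c : ℝ} (hp : 2 ≤ p) (hc : |c| ≤ b) {f : ℝ → ℝ}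
    (hf : ConvexOn ℝ Set.univ f) :
    ConvexOn ℝ Set.univ fun a => burkholderTail p b c (max (f a) b) := by
  have himage : (fun a => max (f a) b) '' Set.univ ⊆ Set.Ici b := by
    rintro _ ⟨a, -, rfl⟩
    exact le_max_right (f a) b
  have hmax : ConvexOn ℝ Set.univ fun a => max (f a) b := hf.sup (convexOn_const b convex_univ)
  refine ⟨convex_univ, fun x hx y hy α β hα hβ hαβ => ?_⟩
  have hx' := himage ⟨x, hx, rfl⟩
  have hy' := himage ⟨y, hy, rfl⟩
  exact (monotoneOn_burkholderTail hp hc (himage ⟨_, trivial, rfl⟩)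
    (convex_Ici b hx' hy' hα hβ hαβ) (hmax.2 hx hy hα hβ hαβ)).trans
    ((convexOn_burkholderTail hp hc).2 hx' hy' hα hβ hαβ)

/-- Burkholder's function `2 (|h| - (p - 1) |x|) (|x| + |h|) ^ (p - 1)` in the diagonal coordinates
`a = x + h`, `b = x - h`, in which it is separately concave. -/
noncomputable def burkholder (p a b : ℝ) : ℝ :=
  -(p * (a * b) * max |a| |b| ^ (p - 2) + (p - 2) * max |a| |b| ^ p)

lemma burkholder_comm (p a b : ℝ) : burkholder p a b = burkholder p b a := by
  simp only [burkholder, max_comm, mul_comm]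

lemma burkholder_neg_neg (p a b : ℝ) : burkholder p (-a) (-b) = burkholder p a b := by
  simp only [burkholder, abs_neg, neg_mul_neg]

lemma neg_burkholder_eq_add_burkholderTail {b : ℝ} (hp : 2 ≤ p) (hb : 0 ≤ b) (a : ℝ) :
    -burkholder p a b = p * b ^ (p - 1) * a + (p - 2) * b ^ p
      + burkholderTail p b b (max a b) + burkholderTail p b (-b) (max (-a) b) := by
  unfold burkholder burkholderTail
  rw [abs_of_nonneg hb]
  rcases le_total b a with hba | hab
  · rw [abs_of_nonneg (hb.trans hba), max_eq_left hba, max_eq_right (by linarith : -a ≤ b),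
      ← mul_rpow_sub_two hp (hb.trans hba), ← mul_rpow_sub_two hp hb]
    ring
  · rcases le_total b (-a) with hba | hab'
    · rw [abs_of_nonpos (by linarith), max_eq_right hab, max_eq_left hba,
        ← mul_rpow_sub_two hp hb, ← mul_rpow_sub_two hp (by linarith : 0 ≤ -a)]
      ring
    · rw [max_eq_right (abs_le.2 ⟨by linarith, hab⟩), max_eq_right hab, max_eq_right hab',
        ← mul_rpow_sub_two hp hb]
      ring

lemma convexOn_neg_burkholder (hp : 2 ≤ p) (b : ℝ) :
    ConvexOn ℝ Set.univ fun a => -burkholder p a b := by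
  wlog hb : 0 ≤ b generalizing b
  · refine ((this (-b) (by linarith)).comp_linearMap (-LinearMap.id : ℝ →ₗ[ℝ] ℝ)).congr
      fun a _ => ?_
    simp only [Function.comp_apply, LinearMap.neg_apply, LinearMap.id_apply, burkholder_neg_neg]
  have hlinear : ConvexOn ℝ Set.univ fun a : ℝ => p * b ^ (p - 1) * a :=
    (LinearMap.mulLeft ℝ (p * b ^ (p - 1))).convexOn convex_univ
  have hright := convexOn_burkholderTail_max hp (abs_of_nonneg hb).le (convexOn_id convex_univ)
  have hleft := convexOn_burkholderTail_max hp (abs_neg b ▸ (abs_of_nonneg hb).le)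
    (concaveOn_id convex_univ).neg
  exact (((hlinear.add (convexOn_const ((p - 2) * b ^ p) convex_univ)).add hright).add
    hleft).congr fun a _ => (neg_burkholder_eq_add_burkholderTail hp hb a).symm

lemma max_abs_add_abs_sub (x h : ℝ) : max |x + h| |x - h| = |x| + |h| := by
  refine le_antisymm (max_le (abs_add_le x h) (abs_sub x h)) (le_max_iff.2 ?_)
  rcases le_total 0 (x * h) with hxh | hxh
  · exact Or.inl (abs_add_eq_add_abs_iff x h |>.2 (by simpa [mul_nonneg_iff] using hxh)).ge
  · refine Or.inr ?_
    rw [sub_eq_add_neg, ← abs_neg h]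
    exact (abs_add_eq_add_abs_iff x (-h) |>.2
      (by simpa [mul_nonpos_iff] using hxh)).ge

lemma burkholder_add_sub (hp : 2 ≤ p) (x h : ℝ) :
    burkholder p (x + h) (x - h) = 2 * (|h| - (p - 1) * |x|) * (|x| + |h|) ^ (p - 1) := by
  have hnonneg : 0 ≤ |x| + |h| := by positivity
  have hprod : (x + h) * (x - h) = |x| ^ 2 - |h| ^ 2 := by rw [sq_abs, sq_abs]; ring
  rw [burkholder, max_abs_add_abs_sub, hprod,
    ← mul_rpow_sub_one (p := p) (by linarith) hnonneg,
    ← mul_rpow_sub_two hp hnonneg]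
  ring

lemma exists_sub_le_burkholder (hp : 2 ≤ p) : ∃ C : ℝ, 0 ≤ C ∧ ∀ x h : ℝ,
    |h| ^ p - C * |x| ^ p ≤ burkholder p (x + h) (x - h) := by
  have hp1 : 0 < p - 1 := by linarith
  set D : ℝ := 1 + 2 * (p - 1)
  have hD : 0 < D := by positivity
  refine ⟨(2 * (p - 1)) ^ p + 2 * (p - 1) * D ^ (p - 1), by positivity, fun x h => ?_⟩
  rw [burkholder_add_sub hp x h]
  have hx := abs_nonneg x
  have hh := abs_nonneg h
  rcases le_total (2 * (p - 1) * |x|) |h| with hlarge | hsmall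
  · have hfactor : |h| ^ (p - 1) ≤ (|x| + |h|) ^ (p - 1) :=
      Real.rpow_le_rpow hh (by linarith) hp1.le
    have hprod : |h| * |h| ^ (p - 1) ≤ 2 * (|h| - (p - 1) * |x|) * (|x| + |h|) ^ (p - 1) :=
      mul_le_mul (by linarith) hfactor (by positivity) (by nlinarith)
    rw [mul_rpow_sub_one (by linarith) hh] at hprod
    have : 0 ≤ ((2 * (p - 1)) ^ p + 2 * (p - 1) * D ^ (p - 1)) * |x| ^ p := by positivity
    linarith
  · have hpow : |h| ^ p ≤ (2 * (p - 1)) ^ p * |x| ^ p := by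
      rw [← Real.mul_rpow (by positivity) hx]
      exact Real.rpow_le_rpow hh hsmall (by linarith)
    have hfactor : |x| * (|x| + |h|) ^ (p - 1) ≤ D ^ (p - 1) * |x| ^ p := by
      rw [← mul_rpow_sub_one (p := p) (by linarith) hx, mul_left_comm, ← Real.mul_rpow hD.le hx]
      gcongr
      linarith
    have hnonneg : 0 ≤ |h| * (|x| + |h|) ^ (p - 1) := by positivity
    linarith [mul_le_mul_of_nonneg_left hfactor hp1.le]

end Burkholder

section Bellman

variable {p q C : ℝ}

/-- The partial Legendre transform of Burkholder's function in the variable `h`. Concavity of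
`burkholder` along the diagonals makes its perturbations by `± z.1 * z.2` convex. -/
noncomputable def realBellman (p : ℝ) (z : ℝ × ℝ) : ℝ :=
  ⨆ h : ℝ, (h * z.2 - burkholder p (z.1 + h) (z.1 - h))

lemma exists_mul_sub_burkholder_le (hpq : p.HolderConjugate q) (hp : 2 ≤ p) :
    ∃ C : ℝ, 0 ≤ C ∧ ∀ u v h : ℝ,
      h * v - burkholder p (u + h) (u - h) ≤ C * (|u| ^ p + |v| ^ q) := by
  obtain ⟨C, hC, hlow⟩ := exists_sub_le_burkholder hp
  refine ⟨C + 1, by positivity, fun u v h => ?_⟩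
  have hyoung := Real.young_inequality h v hpq
  have hh : |h| ^ p / p ≤ |h| ^ p := div_le_self (by positivity) hpq.lt.le
  have hv : |v| ^ q / q ≤ |v| ^ q := div_le_self (by positivity) hpq.symm.lt.le
  have hu : 0 ≤ |u| ^ p := by positivity
  have hCv : 0 ≤ C * |v| ^ q := by positivity
  linarith [hlow u h]

lemma bddAbove_range_mul_sub_burkholder (hpq : p.HolderConjugate q) (hp : 2 ≤ p) (z : ℝ × ℝ) :
    BddAbove (Set.range fun h : ℝ => h * z.2 - burkholder p (z.1 + h) (z.1 - h)) := by
  obtain ⟨C, -, hC⟩ := exists_mul_sub_burkholder_le hpq hp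
  exact ⟨C * (|z.1| ^ p + |z.2| ^ q), Set.forall_mem_range.2 (hC z.1 z.2)⟩

lemma realBellman_nonneg (hpq : p.HolderConjugate q) (hp : 2 ≤ p) (z : ℝ × ℝ) :
    0 ≤ realBellman p z := by
  refine le_trans ?_ (le_ciSup (bddAbove_range_mul_sub_burkholder hpq hp z) 0)
  rw [burkholder_add_sub hp, abs_zero, add_zero]
  have : 0 ≤ (p - 1) * |z.1| * |z.1| ^ (p - 1) := by
    have : 0 ≤ p - 1 := by linarith
    positivity
  linarith

lemma exists_realBellman_le (hpq : p.HolderConjugate q) (hp : 2 ≤ p) :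
    ∃ C : ℝ, 0 ≤ C ∧ ∀ z : ℝ × ℝ, realBellman p z ≤ C * (|z.1| ^ p + |z.2| ^ q) := by
  obtain ⟨C, hC, hle⟩ := exists_mul_sub_burkholder_le hpq hp
  exact ⟨C, hC, fun z => ciSup_le fun h => hle z.1 z.2 h⟩

lemma burkholder_diagonal {s : ℝ} (hs : s = 1 ∨ s = -1) (p t k : ℝ) :
    burkholder p (t + (k - s * t)) (t - (k - s * t)) = burkholder p (2 * t - s * k) (s * k) := by
  rcases hs with rfl | rfl
  · rw [burkholder_comm]
    congr 1 <;> ring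
  · congr 1 <;> ring

-- Shifting `h` by `s * z.1` moves `z.1` along a diagonal, where Burkholder's function is concave.
lemma convexOn_realBellman_add_sign_mul {s : ℝ} (hpq : p.HolderConjugate q) (hp : 2 ≤ p)
    (hs : s = 1 ∨ s = -1) :
    ConvexOn ℝ Set.univ fun z : ℝ × ℝ => realBellman p z + s * (z.1 * z.2) := by
  refine ⟨convex_univ, fun x _ y _ α β hα hβ hαβ => ?_⟩
  set w := α • x + β • y
  have hw₁ : w.1 = α * x.1 + β * y.1 := rfl
  have hw₂ : w.2 = α * x.2 + β * y.2 := rfl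
  rw [← le_sub_iff_add_le]
  refine ciSup_le fun h => ?_
  obtain ⟨k, rfl⟩ : ∃ k, h = k - s * w.1 := ⟨h + s * w.1, by ring⟩
  have hsup (z : ℝ × ℝ) :
      (k - s * z.1) * z.2 - burkholder p (2 * z.1 - s * k) (s * k) ≤ realBellman p z := by
    rw [← burkholder_diagonal hs]
    exact le_ciSup (bddAbove_range_mul_sub_burkholder hpq hp z) (k - s * z.1)
  have hconcave := (convexOn_neg_burkholder hp (s * k)).2
    (Set.mem_univ (2 * x.1 - s * k)) (Set.mem_univ (2 * y.1 - s * k)) hα hβ hαβ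
  have hcomb : α • (2 * x.1 - s * k) + β • (2 * y.1 - s * k) = 2 * w.1 - s * k := by
    simp only [smul_eq_mul, hw₁]
    linear_combination (-s * k) * hαβ
  rw [hcomb] at hconcave
  simp only [smul_eq_mul] at hconcave ⊢
  rw [burkholder_diagonal hs]
  have hlinear : k * w.2 = α * (k * x.2) + β * (k * y.2) := by rw [hw₂]; ring
  linarith [mul_le_mul_of_nonneg_left (hsup x) hα, mul_le_mul_of_nonneg_left (hsup y) hβ]

lemma convexOn_realBellman_add_mul {s : ℝ} (hpq : p.HolderConjugate q) (hp : 2 ≤ p)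
    (hs : |s| ≤ 1) :
    ConvexOn ℝ Set.univ fun z : ℝ × ℝ => realBellman p z + s * (z.1 * z.2) := by
  obtain ⟨hs₁, hs₂⟩ := abs_le.1 hs
  have hplus := (convexOn_realBellman_add_sign_mul hpq hp (Or.inl rfl)).smul
    (by linarith : 0 ≤ (1 + s) / 2)
  have hminus := (convexOn_realBellman_add_sign_mul hpq hp (Or.inr rfl)).smul
    (by linarith : 0 ≤ (1 - s) / 2)
  refine (hplus.add hminus).congr fun z _ => ?_
  simp only [Pi.add_apply, smul_eq_mul]
  ring

/-- `Q` is a Bellman function with constant `C` for the bilinear form `(z, w) ↦ z * w` at the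
exponents `p` and `q`: Jensen's inequality for `Q ± ℓ (z * w)` controls the variation of pairings
along averaging operators by that of `Q`, whose size is at most `C * (‖z‖ ^ p + ‖w‖ ^ q)`. -/
structure IsBellman (p q C : ℝ) (Q : ℂ × ℂ → ℝ) : Prop where
  nonneg : ∀ z, 0 ≤ Q z
  le : ∀ z, Q z ≤ C * (‖z.1‖ ^ p + ‖z.2‖ ^ q)
  convexOn_add : ∀ ℓ : ℂ →L[ℝ] ℝ, ‖ℓ‖ ≤ 1 →
    ConvexOn ℝ Set.univ fun z : ℂ × ℂ => Q z + ℓ (z.1 * z.2)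

namespace IsBellman

variable {Q : ℂ × ℂ → ℝ}

lemma const_nonneg (h : IsBellman p q C Q) : 0 ≤ C := by
  have := (h.nonneg (1, 1)).trans (h.le (1, 1))
  norm_num at this
  linarith

lemma swap (h : IsBellman p q C Q) : IsBellman q p C fun z => Q z.swap := by
  refine ⟨fun z => h.nonneg _, fun z => (h.le z.swap).trans_eq (by rw [add_comm]; rfl),
    fun ℓ hℓ => ?_⟩
  refine ((h.convexOn_add ℓ hℓ).comp_linearMap
    (LinearEquiv.prodComm ℝ ℂ ℂ).toLinearMap).congr fun z _ => ?_
  simp only [Function.comp_apply, LinearEquiv.coe_coe, LinearEquiv.prodComm_apply, Prod.fst_swap,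
    Prod.snd_swap, mul_comm z.1]

lemma continuous (h : IsBellman p q C Q) : Continuous Q := by
  have hconvex : ConvexOn ℝ Set.univ Q := by simpa using h.convexOn_add 0 (by simp)
  exact continuousOn_univ.1 (hconvex.continuousOn isOpen_univ)

end IsBellman

/-- The Bellman function of `(z, w) ↦ z * w`, built from the products of real and imaginary parts
occurring in it. -/
noncomputable def complexBellman (p : ℝ) (z : ℂ × ℂ) : ℝ :=
  realBellman p (z.1.re, z.2.re) + realBellman p (z.1.im, z.2.im) +
    (realBellman p (z.1.re, z.2.im) + realBellman p (z.1.im, z.2.re))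

lemma convexOn_complexBellman_add (hpq : p.HolderConjugate q) (hp : 2 ≤ p)
    {ℓ : ℂ →L[ℝ] ℝ} (hℓ : ‖ℓ‖ ≤ 1) :
    ConvexOn ℝ Set.univ fun z : ℂ × ℂ => complexBellman p z + ℓ (z.1 * z.2) := by
  have hcoord : ∀ (s : ℝ), |s| ≤ 1 → ∀ a b : ℂ →ₗ[ℝ] ℝ, ConvexOn ℝ Set.univ fun z : ℂ × ℂ =>
      realBellman p (a z.1, b z.2) + s * (a z.1 * b z.2) := fun s hs a b =>
    (convexOn_realBellman_add_mul hpq hp hs).comp_linearMap (a.prodMap b)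
  have hone : |ℓ 1| ≤ 1 := by simpa using ℓ.le_of_opNorm_le hℓ 1
  have hI : |ℓ I| ≤ 1 := by simpa using ℓ.le_of_opNorm_le hℓ I
  refine (((hcoord (ℓ 1) hone reLm reLm).add
    (hcoord (-ℓ 1) ((abs_neg _).trans_le hone) imLm imLm)).add
    ((hcoord (ℓ I) hI reLm imLm).add (hcoord (ℓ I) hI imLm reLm))).congr fun z _ => ?_
  have hℓz : ℓ (z.1 * z.2) = (z.1 * z.2).re * ℓ 1 + (z.1 * z.2).im * ℓ I := by
    conv_lhs => rw [← Complex.re_add_im (z.1 * z.2)]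
    simpa only [map_add, map_smul, smul_eq_mul, real_smul, mul_one]
      using congrArg₂ (· + ·) (ℓ.map_smul (z.1 * z.2).re 1) (ℓ.map_smul (z.1 * z.2).im I)
  simp only [Pi.add_apply, complexBellman, hℓz, mul_re, mul_im, reLm_coe, imLm_coe]
  ring

lemma exists_isBellman_of_two_le (hpq : p.HolderConjugate q) (hp : 2 ≤ p) :
    ∃ C, IsBellman p q C (complexBellman p) := by
  obtain ⟨C, hC, hle⟩ := exists_realBellman_le hpq hp
  have hcoord : ∀ {z : ℂ × ℂ} {a b : ℝ}, |a| ≤ ‖z.1‖ → |b| ≤ ‖z.2‖ →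
      realBellman p (a, b) ≤ C * (‖z.1‖ ^ p + ‖z.2‖ ^ q) := fun ha hb => by
    have := hpq.nonneg
    have := hpq.symm.nonneg
    refine (hle _).trans ?_
    dsimp only
    gcongr
  refine ⟨4 * C, fun z => ?_, fun z => ?_, fun ℓ hℓ => convexOn_complexBellman_add hpq hp hℓ⟩
  · have hnonneg := realBellman_nonneg hpq hp
    exact add_nonneg (add_nonneg (hnonneg _) (hnonneg _)) (add_nonneg (hnonneg _) (hnonneg _))
  · have hre := fun z : ℂ => abs_re_le_norm z
    have him := fun z : ℂ => abs_im_le_norm z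
    unfold complexBellman
    linarith [hcoord (hre z.1) (hre z.2), hcoord (him z.1) (him z.2),
      hcoord (hre z.1) (him z.2), hcoord (him z.1) (hre z.2)]

lemma exists_isBellman (hpq : p.HolderConjugate q) : ∃ C Q, IsBellman p q C Q := by
  rcases le_total 2 p with hp | hp
  · exact (exists_isBellman_of_two_le hpq hp).imp fun C h => ⟨_, h⟩
  · have hq : 2 ≤ q := by nlinarith [hpq.mul_eq_add, hpq.lt, hpq.symm.pos]
    exact (exists_isBellman_of_two_le hpq.symm hq).imp fun C h => ⟨_, h.swap⟩

end Bellman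

section TestFunctions

variable {α E R : Type*} [MeasureSpace α] [NormedAddCommGroup E] [NormedRing R]

/-- The class of test functions: strongly measurable, integrable and bounded functions. It is
preserved by all the averaging operators and Fourier truncations used here. -/
structure IsTest (f : α → E) : Prop where
  stronglyMeasurable : StronglyMeasurable f
  integrable : Integrable f
  bounded : ∃ B, ∀ x, ‖f x‖ ≤ B

namespace IsTest

variable {f g : α → E} {u v : α → R}

lemma add (hf : IsTest f) (hg : IsTest g) : IsTest fun x => f x + g x := by
  obtain ⟨B, hB⟩ := hf.bounded
  obtain ⟨D, hD⟩ := hg.bounded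
  exact ⟨hf.stronglyMeasurable.add hg.stronglyMeasurable, hf.integrable.add hg.integrable, B + D,
    fun x => norm_add_le_of_le (hB x) (hD x)⟩

lemma neg (hf : IsTest f) : IsTest fun x => -f x :=
  ⟨hf.stronglyMeasurable.neg, hf.integrable.neg, by simpa only [norm_neg] using hf.bounded⟩

lemma sub (hf : IsTest f) (hg : IsTest g) : IsTest fun x => f x - g x := by
  simpa only [sub_eq_add_neg] using hf.add hg.neg

lemma zero : IsTest fun _ : α => (0 : E) :=
  ⟨stronglyMeasurable_const, integrable_zero _ _ _, 0, fun _ => norm_zero.le⟩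

lemma sum {ι : Type*} (s : Finset ι) {F : ι → α → E} (hF : ∀ i ∈ s, IsTest (F i)) :
    IsTest fun x => ∑ i ∈ s, F i x := by
  classical
  induction s using Finset.induction_on with
  | empty => simpa using zero
  | insert i s hi ih =>
    simp only [Finset.sum_insert hi]
    exact (hF i (Finset.mem_insert_self i s)).add
      (ih fun j hj => hF j (Finset.mem_insert_of_mem hj))

lemma bdd_mul (hv : IsTest v) (hu : StronglyMeasurable u) {D : ℝ} (hD : ∀ x, ‖u x‖ ≤ D) :
    IsTest fun x => u x * v x := by
  obtain ⟨B, hB⟩ := hv.bounded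
  exact ⟨hu.mul hv.stronglyMeasurable, hv.integrable.bdd_mul hu.aestronglyMeasurable
    (Filter.Eventually.of_forall hD), D * B, fun x => norm_mul_le_of_le (hD x) (hB x)⟩

lemma const_mul (hv : IsTest v) (c : R) : IsTest fun x => c * v x :=
  hv.bdd_mul stronglyMeasurable_const fun _ => le_rfl

lemma mul (hu : IsTest u) (hv : IsTest v) : IsTest fun x => u x * v x := by
  obtain ⟨B, hB⟩ := hu.bounded
  exact hv.bdd_mul hu.stronglyMeasurable hB

lemma integrable_norm_rpow (hf : IsTest f) {p : ℝ} (hp : 1 ≤ p) :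
    Integrable fun x => ‖f x‖ ^ p := by
  obtain ⟨B, hB⟩ := hf.bounded
  have hsplit (x : α) : ‖f x‖ ^ p = ‖f x‖ ^ (p - 1) * ‖f x‖ := by
    rw [mul_comm, mul_rpow_sub_one hp (norm_nonneg _)]
  simp only [hsplit]
  refine hf.integrable.norm.bdd_mul (c := B ^ (p - 1))
    (hf.stronglyMeasurable.norm.measurable.pow_const _).aestronglyMeasurable
    (Filter.Eventually.of_forall fun x => ?_)
  rw [Real.norm_of_nonneg (by positivity)]
  exact Real.rpow_le_rpow (norm_nonneg _) (hB x) (by linarith)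

lemma comp_neg {G : Type*} [MeasureSpace G] [AddGroup G] [MeasurableNeg G]
    [(volume : Measure G).IsNegInvariant] {f : G → E} (hf : IsTest f) :
    IsTest fun x => f (-x) := by
  obtain ⟨B, hB⟩ := hf.bounded
  exact ⟨hf.stronglyMeasurable.comp_measurable measurable_neg, hf.integrable.comp_neg, B,
    fun x => hB _⟩

end IsTest

lemma IsBellman.integrable {p q C : ℝ} {Q : ℂ × ℂ → ℝ} (h : IsBellman p q C Q)
    (hpq : p.HolderConjugate q) {f g : α → ℂ} (hf : IsTest f) (hg : IsTest g) :
    Integrable fun x => Q (f x, g x) := by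
  refine (((hf.integrable_norm_rpow hpq.lt.le).add
    (hg.integrable_norm_rpow hpq.symm.lt.le)).const_mul C).mono'
    (h.continuous.comp_stronglyMeasurable
      (hf.stronglyMeasurable.prodMk hg.stronglyMeasurable)).aestronglyMeasurable
    (Filter.Eventually.of_forall fun x => ?_)
  rw [Real.norm_of_nonneg (h.nonneg _)]
  exact h.le _

end TestFunctions

section Averages

variable {G E : Type*} [AddCommGroup G] [MeasureSpace G] [MeasurableAdd₂ G] [MeasurableNeg G]
  [NormedAddCommGroup E] {μ ν : Measure G} [IsProbabilityMeasure μ] [IsProbabilityMeasure ν]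
  {F : G → E}

lemma IsTest.integrable_translate (hF : IsTest F) (x : G) :
    Integrable (fun y => F (x - y)) μ := by
  obtain ⟨B, hB⟩ := hF.bounded
  exact Integrable.of_bound (hF.stronglyMeasurable.comp_measurable
    (measurable_const.sub measurable_id)).aestronglyMeasurable B
    (Filter.Eventually.of_forall fun y => hB _)

lemma integrable_comp_sub_prod [SFinite (volume : Measure G)]
    [(volume : Measure G).IsAddRightInvariant] (hF : StronglyMeasurable F) (hint : Integrable F) :
    Integrable (fun z : G × G => F (z.1 - z.2)) (volume.prod μ) := by
  have hmeas : StronglyMeasurable fun z : G × G => F (z.1 - z.2) :=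
    hF.comp_measurable measurable_sub
  rw [integrable_prod_iff' hmeas.aestronglyMeasurable]
  refine ⟨Filter.Eventually.of_forall fun y => hint.comp_sub_right y, ?_⟩
  simp only [integral_sub_right_eq_self (fun x => ‖F x‖)]
  exact integrable_const _

variable [NormedSpace ℝ E]

/-- The convolution of the function `f` with the measure `μ`, seen as an average of translates
of `f`. -/
noncomputable def avg (μ : Measure G) (f : G → E) (x : G) : E := ∫ y, f (x - y) ∂μ

section Invariant

variable [SFinite (volume : Measure G)] [(volume : Measure G).IsAddRightInvariant]

lemma integrable_avg (hF : StronglyMeasurable F) (hint : Integrable F) : Integrable (avg μ F) :=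
  (integrable_comp_sub_prod hF hint).integral_prod_left

lemma integral_avg [CompleteSpace E] (hF : StronglyMeasurable F) (hint : Integrable F) :
    ∫ x, avg μ F x = ∫ x, F x := by
  calc ∫ x, avg μ F x = ∫ y, ∫ x, F (x - y) ∂volume ∂μ :=
        integral_integral_swap (integrable_comp_sub_prod hF hint)
    _ = ∫ x, F x := by simp only [integral_sub_right_eq_self F, integral_const, probReal_univ,
        one_smul]

lemma IsTest.avg (hF : IsTest F) : IsTest (avg μ F) := by
  obtain ⟨B, hB⟩ := hF.bounded
  refine ⟨?_, integrable_avg hF.stronglyMeasurable hF.integrable, B, fun x => ?_⟩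
  · have hmeas : StronglyMeasurable (Function.uncurry fun x y : G => F (x - y)) :=
      hF.stronglyMeasurable.comp_measurable measurable_sub
    exact hmeas.integral_prod_right
  · refine (norm_integral_le_of_norm_le_const (Filter.Eventually.of_forall fun y =>
      hB (x - y))).trans_eq ?_
    rw [probReal_univ, mul_one]

end Invariant

lemma avg_conv (hF : IsTest F) (x : G) : avg (μ.conv ν) F x = avg μ (avg ν F) x := by
  obtain ⟨B, hB⟩ := hF.bounded
  have htranslate : StronglyMeasurable fun y => F (x - y) :=
    hF.stronglyMeasurable.comp_measurable (measurable_const.sub measurable_id)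
  have hint : Integrable (fun z : G × G => F (x - (z.1 + z.2))) (μ.prod ν) :=
    Integrable.of_bound (htranslate.comp_measurable measurable_add).aestronglyMeasurable B
      (Filter.Eventually.of_forall fun _ => hB _)
  calc avg (μ.conv ν) F x = ∫ z, F (x - (z.1 + z.2)) ∂(μ.prod ν) :=
        integral_map measurable_add.aemeasurable htranslate.aestronglyMeasurable
    _ = ∫ y, ∫ y', F (x - (y + y')) ∂ν ∂μ := integral_prod _ hint
    _ = avg μ (avg ν F) x := by simp only [avg, sub_sub]

lemma integral_avg_mul [SFinite (volume : Measure G)]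
    [(volume : Measure G).IsAddRightInvariant] [μ.IsNegInvariant] {f g : G → ℂ}
    (hf : IsTest f) (hg : IsTest g) :
    ∫ x, avg μ f x * g x = ∫ x, f x * avg μ g x := by
  obtain ⟨B, hB⟩ := hg.bounded
  have hleft : Integrable (fun z : G × G => f (z.1 - z.2) * g z.1) (volume.prod μ) :=
    (integrable_comp_sub_prod hf.stronglyMeasurable hf.integrable).mul_bdd
      (hg.stronglyMeasurable.comp_measurable measurable_fst).aestronglyMeasurable
      (Filter.Eventually.of_forall fun z => hB z.1)
  have hright : Integrable (fun z : G × G => f z.1 * g (z.1 - z.2)) (volume.prod μ) :=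
    (hf.integrable.comp_fst μ).mul_bdd
      (hg.stronglyMeasurable.comp_measurable measurable_sub).aestronglyMeasurable
      (Filter.Eventually.of_forall fun z => hB _)
  have hshift (y : G) : ∫ x, f (x - y) * g x = ∫ x, f x * g (x - -y) := by
    rw [← integral_sub_right_eq_self (fun x => f x * g (x - -y)) y]
    simp only [sub_neg_eq_add, sub_add_cancel]
  calc ∫ x, avg μ f x * g x = ∫ x, ∫ y, f (x - y) * g x ∂μ := by
        simp only [avg, integral_mul_const]
    _ = ∫ y, ∫ x, f (x - y) * g x ∂volume ∂μ := integral_integral_swap hleft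
    _ = ∫ y, ∫ x, f x * g (x - -y) ∂volume ∂μ := by simp only [hshift]
    _ = ∫ y, ∫ x, f x * g (x - y) ∂volume ∂μ :=
        integral_neg_eq_self (fun y => ∫ x, f x * g (x - y)) μ
    _ = ∫ x, ∫ y, f x * g (x - y) ∂μ := (integral_integral_swap hright).symm
    _ = ∫ x, f x * avg μ g x := by simp only [avg, integral_const_mul]

namespace IsBellman

variable {p q C : ℝ} {Q : ℂ × ℂ → ℝ} {f g : G → ℂ}

lemma integrable_translate (h : IsBellman p q C Q) (hpq : p.HolderConjugate q)
    (hf : IsTest f) (hg : IsTest g) (x : G) :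
    Integrable (fun y => Q (f (x - y), g (x - y))) μ := by
  obtain ⟨B, hB⟩ := hf.bounded
  obtain ⟨D, hD⟩ := hg.bounded
  refine Integrable.of_bound (C := C * (B ^ p + D ^ q)) (h.continuous.comp_stronglyMeasurable
    ((hf.stronglyMeasurable.prodMk hg.stronglyMeasurable).comp_measurable
      (measurable_const.sub measurable_id))).aestronglyMeasurable
    (Filter.Eventually.of_forall fun y => ?_)
  rw [Real.norm_of_nonneg (h.nonneg _)]
  refine (h.le _).trans (mul_le_mul_of_nonneg_left (add_le_add ?_ ?_) h.const_nonneg)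
  · exact Real.rpow_le_rpow (norm_nonneg _) (hB _) hpq.nonneg
  · exact Real.rpow_le_rpow (norm_nonneg _) (hD _) hpq.symm.nonneg

lemma norm_avg_mul_sub_le (h : IsBellman p q C Q) (hpq : p.HolderConjugate q)
    (hf : IsTest f) (hg : IsTest g) (x : G) :
    ‖avg μ (fun x => f x * g x) x - avg μ f x * avg μ g x‖ ≤
      avg μ (fun x => Q (f x, g x)) x - Q (avg μ f x, avg μ g x) := by
  have hpair : Integrable (fun y => (f (x - y), g (x - y))) μ :=
    (hf.integrable_translate x).prodMk (hg.integrable_translate x)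
  have hmul : Integrable (fun y => f (x - y) * g (x - y)) μ :=
    (hf.mul hg).integrable_translate x
  have hQ := h.integrable_translate (μ := μ) hpq hf hg x
  obtain ⟨ℓ, hℓ, hnorm⟩ := exists_dual_vector'' ℝ
    (avg μ f x * avg μ g x - avg μ (fun x => f x * g x) x)
  have jensen := (h.convexOn_add ℓ hℓ).map_integral_le
    (h.continuous.add (by fun_prop)).continuousOn isClosed_univ
    (Filter.Eventually.of_forall fun _ => Set.mem_univ _) hpair
    (hQ.add (ℓ.integrable_comp hmul))
  rw [integral_pair (hf.integrable_translate x) (hg.integrable_translate x),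
    integral_add hQ (ℓ.integrable_comp hmul), ℓ.integral_comp_comm hmul] at jensen
  rw [map_sub, RCLike.ofReal_real_eq_id, id] at hnorm
  rw [norm_sub_rev, ← hnorm]
  simp only [avg] at jensen ⊢
  linarith

lemma norm_integral_mul_sub_le [SFinite (volume : Measure G)]
    [(volume : Measure G).IsAddRightInvariant] (h : IsBellman p q C Q)
    (hpq : p.HolderConjugate q) (hf : IsTest f) (hg : IsTest g) :
    ‖(∫ x, f x * g x) - ∫ x, avg μ f x * avg μ g x‖ ≤
      (∫ x, Q (f x, g x)) - ∫ x, Q (avg μ f x, avg μ g x) := by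
  have hfg := hf.mul hg
  have hQ := h.integrable hpq hf hg
  have hQmeas : StronglyMeasurable fun x => Q (f x, g x) :=
    h.continuous.comp_stronglyMeasurable (hf.stronglyMeasurable.prodMk hg.stronglyMeasurable)
  have hQavg := h.integrable hpq (hf.avg (μ := μ)) (hg.avg (μ := μ))
  rw [← integral_avg (μ := μ) hfg.stronglyMeasurable hfg.integrable,
    ← integral_avg (μ := μ) hQmeas hQ,
    ← integral_sub hfg.avg.integrable (hf.avg.mul hg.avg).integrable,
    ← integral_sub (integrable_avg hQmeas hQ) hQavg]
  exact norm_integral_le_of_norm_le ((integrable_avg hQmeas hQ).sub hQavg)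
    (Filter.Eventually.of_forall fun x => h.norm_avg_mul_sub_le hpq hf hg x)

end IsBellman

end Averages

section FourierTransform

variable {f g : ℝ → ℂ}

lemma norm_exp_neg_I_mul (x ξ : ℝ) : ‖cexp (-(I * (x : ℂ) * (ξ : ℂ)))‖ = 1 := by
  rw [Complex.norm_exp]
  simp

lemma integrable_mul_exp (hf : Integrable f) (ξ : ℝ) :
    Integrable fun x : ℝ => f x * cexp (-(I * (x : ℂ) * (ξ : ℂ))) :=
  hf.mul_bdd (c := 1) (by fun_prop)
    (Filter.Eventually.of_forall fun x => (norm_exp_neg_I_mul _ _).le)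

lemma norm_ft_le (f : ℝ → ℂ) (ξ : ℝ) : ‖ft f ξ‖ ≤ ∫ x, ‖f x‖ := by
  refine (norm_integral_le_integral_norm _).trans_eq ?_
  simp only [norm_mul, norm_exp_neg_I_mul, mul_one]

lemma continuous_ft (hf : Integrable f) : Continuous (ft f) := by
  refine continuous_of_dominated (fun ξ => (integrable_mul_exp hf ξ).aestronglyMeasurable)
    (fun ξ => Filter.Eventually.of_forall fun x => ?_) hf.norm
    (Filter.Eventually.of_forall fun x => by fun_prop)
  rw [norm_mul, norm_exp_neg_I_mul, mul_one]

lemma ft_sub (hf : Integrable f) (hg : Integrable g) (ξ : ℝ) :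
    ft (fun x => f x - g x) ξ = ft f ξ - ft g ξ := by
  simp only [ft, sub_mul]
  exact integral_sub (integrable_mul_exp hf ξ) (integrable_mul_exp hg ξ)

lemma ft_const_mul (c : ℂ) (f : ℝ → ℂ) (ξ : ℝ) : ft (fun x => c * f x) ξ = c * ft f ξ := by
  simp only [ft, mul_assoc, integral_const_mul]

lemma ft_sum {ι : Type*} (s : Finset ι) {F : ι → ℝ → ℂ} (hF : ∀ i ∈ s, Integrable (F i))
    (ξ : ℝ) : ft (fun x => ∑ i ∈ s, F i x) ξ = ∑ i ∈ s, ft (F i) ξ := by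
  simp only [ft, Finset.sum_mul]
  exact integral_finsetSum _ fun i hi => integrable_mul_exp (hF i hi) ξ

lemma ft_comp_neg (f : ℝ → ℂ) (ξ : ℝ) : ft (fun x => f (-x)) ξ = ft f (-ξ) := by
  rw [ft, ← integral_neg_eq_self]
  simp only [ft, neg_neg, ofReal_neg, mul_neg, neg_mul]

lemma ft_modulate (f : ℝ → ℂ) (α ξ : ℝ) :
    ft (fun x => cexp (-(I * x * α)) * f x) ξ = ft f (ξ + α) := by
  refine integral_congr_ae (Filter.Eventually.of_forall fun x => ?_)
  simp only [mul_comm (cexp _) (f x), mul_assoc, ← Complex.exp_add]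
  congr 2
  push_cast
  ring

lemma ft_avg {μ : Measure ℝ} [IsProbabilityMeasure μ] (hf : IsTest f) (ξ : ℝ) :
    ft (avg μ f) ξ = charFun μ (-ξ) * ft f ξ := by
  have hint : Integrable (fun z : ℝ × ℝ => f (z.1 - z.2) * cexp (-(I * (z.1 : ℂ) * (ξ : ℂ))))
      (volume.prod μ) :=
    (integrable_comp_sub_prod hf.stronglyMeasurable hf.integrable).mul_bdd
      (c := 1) (by fun_prop) (Filter.Eventually.of_forall fun z => (norm_exp_neg_I_mul _ _).le)
  have htranslate (y : ℝ) : ∫ x : ℝ, f (x - y) * cexp (-(I * (x : ℂ) * (ξ : ℂ))) =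
      cexp ((-ξ : ℝ) * y * I) * ft f ξ := by
    rw [ft, ← integral_sub_right_eq_self (fun x : ℝ => f x * cexp (-(I * (x : ℂ) * (ξ : ℂ)))) y,
      ← integral_const_mul]
    refine integral_congr_ae (Filter.Eventually.of_forall fun x => ?_)
    dsimp only
    rw [mul_left_comm, ← Complex.exp_add]
    congr 2
    push_cast
    ring
  calc ft (avg μ f) ξ = ∫ x, ∫ y, f (x - y) * cexp (-(I * (x : ℂ) * (ξ : ℂ))) ∂μ := by
        simp only [ft, avg, integral_mul_const]
    _ = ∫ y, ∫ x : ℝ, f (x - y) * cexp (-(I * (x : ℂ) * (ξ : ℂ))) ∂volume ∂μ :=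
        integral_integral_swap hint
    _ = charFun μ (-ξ) * ft f ξ := by
        simp only [htranslate]
        rw [integral_mul_const, charFun_apply_real]

end FourierTransform

section Heat

variable {f g : ℝ → ℂ}

/-- The heat semigroup at time `v`: the convolution with the centred Gaussian of variance
`2 * v`. -/
noncomputable def heat (v : ℝ≥0) (f : ℝ → ℂ) : ℝ → ℂ :=
  avg (ProbabilityTheory.gaussianReal 0 (2 * v)) f

lemma IsTest.heat (hf : IsTest f) (v : ℝ≥0) : IsTest (heat v f) := hf.avg

lemma heat_add (v w : ℝ≥0) (hf : IsTest f) : heat (v + w) f = heat v (heat w f) := by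
  ext x
  simp only [heat]
  rw [← avg_conv hf, ProbabilityTheory.gaussianReal_conv_gaussianReal, add_zero, mul_add]

lemma integral_heat_mul (v : ℝ≥0) (hf : IsTest f) (hg : IsTest g) :
    ∫ x, heat v f x * g x = ∫ x, f x * heat v g x := by
  have : (ProbabilityTheory.gaussianReal 0 (2 * v)).IsNegInvariant :=
    ⟨ProbabilityTheory.gaussianReal_map_neg.trans (by rw [neg_zero])⟩
  exact integral_avg_mul hf hg

lemma ft_heat (v : ℝ≥0) (hf : IsTest f) (ξ : ℝ) :
    ft (heat v f) ξ = Real.exp (-(v * ξ ^ 2)) * ft f ξ := by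
  rw [heat, ft_avg hf, ProbabilityTheory.charFun_gaussianReal]
  push_cast
  congr 2
  ring

namespace IsBellman

variable {p q C : ℝ} {Q : ℂ × ℂ → ℝ}

lemma norm_integral_heat_mul_sub_le (h : IsBellman p q C Q) (hpq : p.HolderConjugate q)
    (hf : IsTest f) (hg : IsTest g) {v w : ℝ≥0} (hvw : v ≤ w) :
    ‖(∫ x, heat v f x * heat v g x) - ∫ x, heat w f x * heat w g x‖ ≤
      (∫ x, Q (heat v f x, heat v g x)) - ∫ x, Q (heat w f x, heat w g x) := by
  have hstep {f : ℝ → ℂ} (hf : IsTest f) : heat w f = heat (w - v) (heat v f) := by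
    rw [← heat_add _ _ hf, tsub_add_cancel_of_le hvw]
  rw [hstep hf, hstep hg]
  exact h.norm_integral_mul_sub_le hpq (hf.heat v) (hg.heat v)

lemma integral_heat_le (h : IsBellman p q C Q) (hpq : p.HolderConjugate q)
    (hf : IsTest f) (hg : IsTest g) (v : ℝ≥0) :
    ∫ x, Q (heat v f x, heat v g x) ≤ ∫ x, Q (f x, g x) :=
  sub_nonneg.1 ((norm_nonneg _).trans (h.norm_integral_mul_sub_le hpq hf hg))

lemma sum_norm_integral_heat_mul_sub_le (h : IsBellman p q C Q) (hpq : p.HolderConjugate q)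
    (hf : IsTest f) (hg : IsTest g) {w : ℕ → ℝ≥0} (hw : Monotone w) (L : ℕ) :
    ∑ n ∈ Finset.range L, ‖(∫ x, heat (w n) f x * heat (w n) g x) -
        ∫ x, heat (w (n + 1)) f x * heat (w (n + 1)) g x‖ ≤ ∫ x, Q (f x, g x) := by
  calc _ ≤ ∑ n ∈ Finset.range L, ((∫ x, Q (heat (w n) f x, heat (w n) g x)) -
        ∫ x, Q (heat (w (n + 1)) f x, heat (w (n + 1)) g x)) :=
        Finset.sum_le_sum fun n _ => h.norm_integral_heat_mul_sub_le hpq hf hg (hw n.le_succ)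
    _ = (∫ x, Q (heat (w 0) f x, heat (w 0) g x)) -
        ∫ x, Q (heat (w L) f x, heat (w L) g x) := Finset.sum_range_sub' _ L
    _ ≤ ∫ x, Q (heat (w 0) f x, heat (w 0) g x) :=
        sub_le_self _ (integral_nonneg fun x => h.nonneg _)
    _ ≤ _ := h.integral_heat_le hpq hf hg (w 0)

end IsBellman

end Heat

section LittlewoodPaley

variable {f g : ℝ → ℂ} {p q C : ℝ} {Q : ℂ × ℂ → ℝ}

/-- The profile of the symbols of the smooth band-pass operators `band j`. -/
noncomputable def profile (s : ℝ) : ℝ := Real.exp (-s ^ 2) - Real.exp (-(4 * s ^ 2))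

/-- The smooth band-pass operator selecting the frequencies of order `2 ^ j`, as a difference of
heat operators at consecutive dyadic scales. -/
noncomputable def band (j : ℤ) (f : ℝ → ℂ) (x : ℝ) : ℂ :=
  heat ((4 : ℝ≥0) ^ (-j)) f x - heat ((4 : ℝ≥0) ^ (1 - j)) f x

lemma IsTest.band (hf : IsTest f) (j : ℤ) : IsTest (band j f) :=
  (hf.heat _).sub (hf.heat _)

lemma ft_band (j : ℤ) (hf : IsTest f) (ξ : ℝ) :
    ft (band j f) ξ = profile (ξ / 2 ^ j) * ft f ξ := by
  have hscale : (ξ / 2 ^ j) ^ 2 = 4 ^ (-j) * ξ ^ 2 := by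
    have hsq : ((2 : ℝ) ^ j) ^ 2 = 4 ^ j := by
      rw [← zpow_natCast, ← zpow_mul, mul_comm, zpow_mul]
      norm_num
    rw [div_pow, hsq, zpow_neg, div_eq_inv_mul]
  have hnext : (4 : ℝ) ^ (1 - j) = 4 * 4 ^ (-j) := by
    rw [sub_eq_add_neg, zpow_add₀ (by norm_num), zpow_one]
  refine (ft_sub (hf.heat _).integrable (hf.heat _).integrable ξ).trans ?_
  rw [ft_heat _ hf, ft_heat _ hf, profile, hscale, ← sub_mul, ← ofReal_sub]
  simp only [NNReal.coe_zpow, NNReal.coe_ofNat, hnext, mul_assoc]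

lemma integral_heat_mul_heat (v : ℝ≥0) (hf : IsTest f) (hg : IsTest g) :
    ∫ x, heat (v / 2) f x * heat (v / 2) g x = ∫ x, heat v f x * g x := by
  rw [← integral_heat_mul _ (hf.heat _) hg, ← heat_add _ _ hf, add_halves]

lemma integral_band_mul (j : ℤ) (hf : IsTest f) (hg : IsTest g) :
    ∫ x, band j f x * g x =
      (∫ x, heat (4 ^ (-j) / 2) f x * heat (4 ^ (-j) / 2) g x) -
        ∫ x, heat (4 ^ (1 - j) / 2) f x * heat (4 ^ (1 - j) / 2) g x := by
  rw [integral_heat_mul_heat _ hf hg, integral_heat_mul_heat _ hf hg,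
    ← integral_sub ((hf.heat _).mul hg).integrable ((hf.heat _).mul hg).integrable]
  simp only [band, sub_mul]

lemma IsBellman.sum_norm_integral_band_mul_le (h : IsBellman p q C Q)
    (hpq : p.HolderConjugate q) (hf : IsTest f) (hg : IsTest g) (S : Finset ℤ) :
    ∑ j ∈ S, ‖∫ x, band j f x * g x‖ ≤ ∫ x, Q (f x, g x) := by
  obtain ⟨N, hN⟩ := S.bddAbove
  obtain ⟨M, hM⟩ := S.bddBelow
  set L := (N - M).toNat + 1
  let w : ℕ → ℝ≥0 := fun n => 4 ^ ((n : ℤ) - N) / 2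
  have hw : Monotone w := fun m n hmn => by
    dsimp only [w]
    gcongr
    norm_num
  have hsub : S ⊆ (Finset.range L).image fun n : ℕ => N - n := fun j hj => by
    have := hN hj
    have := hM hj
    exact Finset.mem_image.2 ⟨(N - j).toNat, Finset.mem_range.2 (by omega), by omega⟩
  calc _ ≤ ∑ j ∈ (Finset.range L).image fun n : ℕ => N - n, ‖∫ x, band j f x * g x‖ :=
        Finset.sum_le_sum_of_subset_of_nonneg hsub fun _ _ _ => norm_nonneg _
    _ = ∑ n ∈ Finset.range L, ‖∫ x, band (N - n) f x * g x‖ :=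
        Finset.sum_image fun m _ n _ hmn => by simpa using hmn
    _ = ∑ n ∈ Finset.range L, ‖(∫ x, heat (w n) f x * heat (w n) g x) -
          ∫ x, heat (w (n + 1)) f x * heat (w (n + 1)) g x‖ := by
        refine Finset.sum_congr rfl fun n _ => ?_
        have hfine : -(N - n) = (n : ℤ) - N := by ring
        have hcoarse : 1 - (N - n) = ((n + 1 : ℕ) : ℤ) - N := by push_cast; ring
        rw [integral_band_mul _ hf hg, hfine, hcoarse]
    _ ≤ _ := h.sum_norm_integral_heat_mul_sub_le hpq hf hg hw L

lemma IsBellman.integral_le {α : Type*} [MeasureSpace α] {f g : α → ℂ} (h : IsBellman p q C Q)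
    (hpq : p.HolderConjugate q) (hf : IsTest f) (hg : IsTest g) :
    ∫ x, Q (f x, g x) ≤ C * ((∫ x, ‖f x‖ ^ p) + ∫ x, ‖g x‖ ^ q) := by
  have hfp := hf.integrable_norm_rpow hpq.lt.le
  have hgq := hg.integrable_norm_rpow hpq.symm.lt.le
  rw [← integral_add hfp hgq, ← integral_const_mul]
  exact integral_mono (h.integrable hpq hf hg) ((hfp.add hgq).const_mul C) fun x => h.le _

lemma exists_norm_integral_sum_band_mul_le (hpq : p.HolderConjugate q) :
    ∃ C, 0 ≤ C ∧ ∀ (S : Finset ℤ) (c : ℤ → ℂ), (∀ j, ‖c j‖ ≤ 1) → ∀ f g : ℝ → ℂ,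
      IsTest f → IsTest g → ‖∫ x, (∑ j ∈ S, c j * band j f x) * g x‖ ≤
        C * ((∫ x, ‖f x‖ ^ p) + ∫ x, ‖g x‖ ^ q) := by
  obtain ⟨C, Q, h⟩ := exists_isBellman hpq
  refine ⟨C, h.const_nonneg, fun S c hc f g hf hg => ?_⟩
  calc ‖∫ x, (∑ j ∈ S, c j * band j f x) * g x‖
      = ‖∑ j ∈ S, c j * ∫ x, band j f x * g x‖ := by
        simp only [Finset.sum_mul, mul_assoc]
        rw [integral_finsetSum _ fun j _ => (((hf.band j).mul hg).const_mul (c j)).integrable]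
        simp only [integral_const_mul]
    _ ≤ ∑ j ∈ S, ‖∫ x, band j f x * g x‖ := norm_sum_le_of_le _ fun j _ => by
        rw [norm_mul]
        exact mul_le_of_le_one_left (norm_nonneg _) (hc j)
    _ ≤ ∫ x, Q (f x, g x) := h.sum_norm_integral_band_mul_le hpq hf hg S
    _ ≤ _ := h.integral_le hpq hf hg

end LittlewoodPaley

section Duality

variable {p q : ℝ}

/-- The function `conj z * ‖z‖ ^ (p - 2)`, which sends a function in `L^p` to the one in the dual
space attaining its norm. -/
noncomputable def dualElt (p : ℝ) (z : ℂ) : ℂ := (starRingEnd ℂ) z * ((‖z‖ ^ (p - 2) : ℝ) : ℂ)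

lemma measurable_dualElt (p : ℝ) : Measurable (dualElt p) := by
  unfold dualElt
  fun_prop

lemma norm_dualElt (hp : 1 < p) (z : ℂ) : ‖dualElt p z‖ = ‖z‖ ^ (p - 1) := by
  rcases eq_or_ne z 0 with rfl | hz
  · simp [dualElt, Real.zero_rpow (by linarith : p - 1 ≠ 0)]
  · rw [dualElt, norm_mul, RCLike.norm_conj, Complex.norm_of_nonneg (by positivity),
      mul_comm, ← Real.rpow_add_one (norm_pos_iff.2 hz).ne']
    congr 1
    ring

lemma mul_dualElt (hp : 1 < p) (z : ℂ) : z * dualElt p z = ((‖z‖ ^ p : ℝ) : ℂ) := by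
  rcases eq_or_ne z 0 with rfl | hz
  · simp [Real.zero_rpow (by linarith : p ≠ 0)]
  · rw [dualElt, ← mul_assoc, Complex.mul_conj, ← Complex.ofReal_mul, Complex.normSq_eq_norm_sq,
      ← Real.rpow_natCast, ← Real.rpow_add (norm_pos_iff.2 hz)]
    congr 2
    push_cast
    ring

variable {α : Type*} [MeasureSpace α] {h : α → ℂ} {s : Set α} {a b B : ℝ}

lemma isTest_indicator_const_mul_dualElt (hp : 1 < p) (hmeas : StronglyMeasurable h)
    (hB : ∀ x, ‖h x‖ ≤ B) (hs : MeasurableSet s) (hfin : volume s < ∞) (θ : ℝ) :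
    IsTest (s.indicator fun x => (θ : ℂ) * dualElt p (h x)) := by
  have hbound (x : α) : ‖s.indicator (fun x => (θ : ℂ) * dualElt p (h x)) x‖ ≤
      ‖(θ : ℂ)‖ * B ^ (p - 1) := by
    refine (norm_indicator_le_norm_self _ x).trans ?_
    rw [norm_mul, norm_dualElt hp]
    gcongr
    exact hB x
  have hg : StronglyMeasurable (s.indicator fun x => (θ : ℂ) * dualElt p (h x)) :=
    (((measurable_dualElt p).comp hmeas.measurable).const_mul _ |>.indicator hs).stronglyMeasurable
  have : IsFiniteMeasure (volume.restrict s) := ⟨by simpa using hfin⟩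
  refine ⟨hg, ?_, _, hbound⟩
  rw [← integrableOn_iff_integrable_of_support_subset (s := s) Set.support_indicator_subset]
  exact Integrable.of_bound hg.aestronglyMeasurable _ (Filter.Eventually.of_forall hbound)

lemma mul_setIntegral_norm_rpow_le (hpq : p.HolderConjugate q) (hmeas : StronglyMeasurable h)
    (hB : ∀ x, ‖h x‖ ≤ B)
    (hpair : ∀ g, IsTest g → ‖∫ x, h x * g x‖ ≤ a + b * ∫ x, ‖g x‖ ^ q)
    (hs : MeasurableSet s) (hfin : volume s < ∞) {θ : ℝ} (hθ : 0 ≤ θ) :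
    θ * ∫ x in s, ‖h x‖ ^ p ≤ a + b * (θ ^ q * ∫ x in s, ‖h x‖ ^ p) := by
  have hp := hpq.lt
  have hpower (z : ℂ) : ‖(θ : ℂ) * dualElt p z‖ ^ q = θ ^ q * ‖z‖ ^ p := by
    rw [norm_mul, norm_dualElt hp, Complex.norm_of_nonneg hθ,
      Real.mul_rpow hθ (by positivity), ← Real.rpow_mul (norm_nonneg _), hpq.sub_one_mul_conj]
  have hpairing : ∫ x, h x * s.indicator (fun x => (θ : ℂ) * dualElt p (h x)) x =
      ((θ * ∫ x in s, ‖h x‖ ^ p : ℝ) : ℂ) := by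
    simp only [← Set.indicator_mul_right, mul_left_comm _ (θ : ℂ), mul_dualElt hp]
    rw [integral_indicator hs, integral_const_mul, integral_complex_ofReal, ofReal_mul]
  have hnorm : ∫ x, ‖s.indicator (fun x => (θ : ℂ) * dualElt p (h x)) x‖ ^ q =
      θ ^ q * ∫ x in s, ‖h x‖ ^ p := by
    rw [← integral_const_mul, ← integral_indicator hs]
    refine integral_congr_ae (Filter.Eventually.of_forall fun x => ?_)
    by_cases hx : x ∈ s
    · simp only [hx, Set.indicator_of_mem, hpower]
    · simp [hx, Real.zero_rpow hpq.symm.ne_zero]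
  have key := hpair _ (isTest_indicator_const_mul_dualElt hp hmeas hB hs hfin θ)
  rwa [hpairing, hnorm, Complex.norm_of_nonneg
    (mul_nonneg hθ (integral_nonneg fun x => by positivity))] at key

lemma exists_pos_mul_rpow_le_half {q b : ℝ} (hq : 1 < q) (hb : 0 ≤ b) :
    ∃ θ : ℝ, 0 < θ ∧ b * θ ^ q ≤ θ / 2 := by
  set θ : ℝ := (2 * (b + 1))⁻¹ ^ (q - 1)⁻¹
  have hθ : 0 < θ := by positivity
  have hpow : θ ^ (q - 1) = (2 * (b + 1))⁻¹ :=
    Real.rpow_inv_rpow (by positivity) (by linarith)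
  refine ⟨θ, hθ, ?_⟩
  rw [← mul_rpow_sub_one hq.le hθ.le, hpow, mul_left_comm, div_eq_mul_inv]
  gcongr
  rw [mul_inv, mul_left_comm]
  exact mul_le_of_le_one_right (by norm_num) (mul_inv_le_one_of_le₀ (by linarith) (by linarith))

lemma aecover_spanningSets {α : Type*} [MeasurableSpace α] (μ : Measure α) [SigmaFinite μ] :
    AECover μ Filter.atTop (spanningSets μ) := by
  refine ⟨Filter.Eventually.of_forall fun x => ?_, measurableSet_spanningSets μ⟩
  filter_upwards [Filter.eventually_ge_atTop (spanningSetsIndex μ x)] with n hn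
  exact mem_spanningSets_of_index_le μ x hn

lemma exists_integral_norm_rpow_le_of_pairing_le [SigmaFinite (volume : Measure α)]
    (hpq : p.HolderConjugate q) (hb : 0 ≤ b) :
    ∃ K, 0 ≤ K ∧ ∀ (a : ℝ) (h : α → ℂ), StronglyMeasurable h → (∃ B, ∀ x, ‖h x‖ ≤ B) →
      (∀ g, IsTest g → ‖∫ x, h x * g x‖ ≤ a + b * ∫ x, ‖g x‖ ^ q) →
      Integrable (fun x => ‖h x‖ ^ p) ∧ ∫ x, ‖h x‖ ^ p ≤ K * a := by
  obtain ⟨θ, hθ, hhalf⟩ := exists_pos_mul_rpow_le_half hpq.symm.lt hb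
  refine ⟨2 / θ, by positivity, fun a h hmeas ⟨B, hB⟩ hpair => ?_⟩
  have hbound (n : ℕ) : ∫ x in spanningSets volume n, ‖h x‖ ^ p ≤ 2 / θ * a := by
    have key := mul_setIntegral_norm_rpow_le hpq hmeas hB hpair
      (measurableSet_spanningSets volume n) (measure_spanningSets_lt_top volume n) hθ.le
    have hnonneg : 0 ≤ ∫ x in spanningSets volume n, ‖h x‖ ^ p :=
      integral_nonneg fun x => by positivity
    rw [div_mul_eq_mul_div, le_div_iff₀ hθ]
    linarith [mul_le_mul_of_nonneg_right hhalf hnonneg]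
  have hlocal (n : ℕ) : IntegrableOn (fun x => ‖h x‖ ^ p) (spanningSets volume n) := by
    have : IsFiniteMeasure (volume.restrict (spanningSets (volume : Measure α) n)) :=
      ⟨by simpa using measure_spanningSets_lt_top volume n⟩
    refine Integrable.of_bound (hmeas.norm.measurable.pow_const _).aestronglyMeasurable (B ^ p)
      (Filter.Eventually.of_forall fun x => ?_)
    rw [Real.norm_of_nonneg (by positivity)]
    exact Real.rpow_le_rpow (norm_nonneg _) (hB x) hpq.nonneg
  have hcover := aecover_spanningSets (volume : Measure α)
  have hint : Integrable fun x => ‖h x‖ ^ p :=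
    hcover.integrable_of_integral_bounded_of_nonneg_ae (2 / θ * a) hlocal
      (Filter.Eventually.of_forall fun x => by positivity) (Filter.Eventually.of_forall hbound)
  exact ⟨hint, le_of_tendsto (hcover.integral_tendsto_of_countably_generated hint)
    (Filter.Eventually.of_forall hbound)⟩

lemma exists_integral_norm_sum_band_rpow_le (hp : 1 < p) :
    ∃ C, 0 ≤ C ∧ ∀ (S : Finset ℤ) (c : ℤ → ℂ), (∀ j, ‖c j‖ ≤ 1) → ∀ f : ℝ → ℂ,
      IsTest f → ∫ x, ‖∑ j ∈ S, c j * band j f x‖ ^ p ≤ C * ∫ x, ‖f x‖ ^ p := by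
  have hpq := Real.HolderConjugate.conjExponent hp
  obtain ⟨C, hC, hpair⟩ := exists_norm_integral_sum_band_mul_le hpq
  obtain ⟨K, hK, hdual⟩ := exists_integral_norm_rpow_le_of_pairing_le (α := ℝ) hpq hC
  refine ⟨K * C, by positivity, fun S c hc f hf => ?_⟩
  have htest : IsTest fun x => ∑ j ∈ S, c j * band j f x :=
    IsTest.sum S fun j _ => (hf.band j).const_mul _
  rw [mul_assoc]
  refine (hdual _ _ htest.stronglyMeasurable htest.bounded fun g hg => ?_).2
  rw [← mul_add]
  exact hpair S c hc f g hf hg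

end Duality

section Signs

variable {ι : Type*} [Fintype ι] [DecidableEq ι]

lemma sum_units_smul_mul {R : Type*} [CommRing R] [IsAddTorsionFree R] (j k : ι) (a b : R) :
    ∑ e : ι → ℤˣ, (e j • a) * (e k • b) =
      if j = k then Fintype.card (ι → ℤˣ) * (a * b) else 0 := by
  simp only [Units.smul_def, smul_mul_smul_comm, ← Units.val_mul]
  split_ifs with h
  · subst h
    simp only [Int.units_mul_self, Units.val_one, one_smul, Finset.sum_const, Finset.card_univ,
      nsmul_eq_mul]
  · -- Flipping the sign at `j` changes the sign of the sum.
    let flip : ι → ℤˣ := Pi.mulSingle j (-1)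
    have hflip (e : ι → ℤˣ) : (flip * e) j * (flip * e) k = -(e j * e k) := by
      simp [flip, Pi.mulSingle_eq_of_ne (Ne.symm h)]
    have hsum := Equiv.sum_comp (Equiv.mulLeft flip) fun e : ι → ℤˣ =>
      ((e j * e k : ℤˣ) : ℤ) • (a * b)
    simp only [Equiv.coe_mulLeft, hflip, Units.val_neg, neg_smul, Finset.sum_neg_distrib] at hsum
    exact self_eq_neg.1 hsum.symm

lemma sum_sum_units_smul_mul_sum_units_smul {R : Type*} [CommRing R] [IsAddTorsionFree R]
    (a b : ι → R) :
    ∑ e : ι → ℤˣ, (∑ j, e j • a j) * ∑ k, e k • b k =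
      Fintype.card (ι → ℤˣ) * ∑ j, a j * b j := by
  simp only [Finset.sum_mul_sum]
  rw [Finset.sum_comm, Finset.mul_sum]
  refine Finset.sum_congr rfl fun j _ => ?_
  rw [Finset.sum_comm]
  simp only [sum_units_smul_mul, Finset.sum_ite_eq, Finset.mem_univ, if_true]

variable {E : Type*} [NormedAddCommGroup E]

lemma convexOn_norm_rpow [NormedSpace ℝ E] {p : ℝ} (hp : 1 ≤ p) :
    ConvexOn ℝ Set.univ fun z : E => ‖z‖ ^ p := by
  refine ⟨convex_univ, fun x _ y _ a b ha hb hab => ?_⟩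
  calc ‖a • x + b • y‖ ^ p ≤ (a • ‖x‖ + b • ‖y‖) ^ p := by
        gcongr
        exact convexOn_univ_norm.2 (Set.mem_univ x) (Set.mem_univ y) ha hb hab
    _ ≤ a • ‖x‖ ^ p + b • ‖y‖ ^ p :=
        (convexOn_rpow hp).2 (norm_nonneg x) (norm_nonneg y) ha hb hab

lemma sum_signs_convexOn_le {V : Type*} [AddCommGroup V] [Module ℝ V] {φ : V → ℝ}
    (hφ : ConvexOn ℝ Set.univ φ) (z : ι → V) {c : ι → ℝ} (hc : ∀ j, |c j| ≤ 1) :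
    ∑ e : ι → ℤˣ, φ (∑ j, e j • c j • z j) ≤ ∑ e : ι → ℤˣ, φ (∑ j, e j • z j) := by
  have hconvex : ConvexOn ℝ Set.univ fun c : ι → ℝ => ∑ e : ι → ℤˣ, φ (∑ j, e j • c j • z j) := by
    refine ⟨convex_univ, fun x _ y _ a b ha hb hab => ?_⟩
    simp only [Finset.smul_sum, ← Finset.sum_add_distrib]
    refine Finset.sum_le_sum fun e _ => ?_
    convert hφ.2 (Set.mem_univ (∑ j, e j • x j • z j)) (Set.mem_univ (∑ j, e j • y j • z j))
      ha hb hab using 2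
    simp only [Finset.smul_sum, ← Finset.sum_add_distrib, Pi.add_apply, Pi.smul_apply, add_smul,
      smul_add, smul_comm _ (e _), smul_assoc]
  have hmem : c ∈ convexHull ℝ (Set.univ.pi fun _ : ι => ({-1, 1} : Set ℝ)) := by
    rw [convexHull_pi, Set.mem_univ_pi]
    intro j
    rw [convexHull_pair, segment_eq_Icc (by norm_num)]
    exact abs_le.1 (hc j)
  obtain ⟨y, hy, hle⟩ := hconvex.exists_ge_of_mem_convexHull (Set.subset_univ _) hmem
  have hsign (j : ι) : ∃ e : ℤˣ, ∀ v : V, y j • v = e • v := by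
    rcases hy j (Set.mem_univ j) with h | h
    · exact ⟨-1, fun v => by rw [h, neg_smul, one_smul, Units.neg_smul, one_smul]⟩
    · exact ⟨1, fun v => by rw [h, one_smul, one_smul]⟩
  choose τ hτ using hsign
  refine hle.trans_eq ?_
  simp only [hτ, smul_smul]
  exact Equiv.sum_comp (Equiv.mulRight τ) fun e : ι → ℤˣ => φ (∑ j, e j • z j)

lemma add_rpow_le_mul_rpow_add_rpow {a b p : ℝ} (ha : 0 ≤ a) (hb : 0 ≤ b) (hp : 1 ≤ p) :
    (a + b) ^ p ≤ 2 ^ (p - 1) * (a ^ p + b ^ p) := by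
  lift a to ℝ≥0 using ha
  lift b to ℝ≥0 using hb
  exact_mod_cast NNReal.rpow_add_le_mul_rpow_add_rpow a b hp

lemma sum_signs_norm_rpow_le [NormedSpace ℂ E] {p : ℝ} (hp : 1 ≤ p) (z : ι → E) {c : ι → ℂ}
    (hc : ∀ j, ‖c j‖ ≤ 1) :
    ∑ e : ι → ℤˣ, ‖∑ j, e j • c j • z j‖ ^ p ≤
      2 ^ p * ∑ e : ι → ℤˣ, ‖∑ j, e j • z j‖ ^ p := by
  have hre := sum_signs_convexOn_le (convexOn_norm_rpow hp) z
    fun j => (abs_re_le_norm (c j)).trans (hc j)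
  have him := sum_signs_convexOn_le (convexOn_norm_rpow hp) z
    fun j => (abs_im_le_norm (c j)).trans (hc j)
  have hsplit (e : ι → ℤˣ) : ‖∑ j, e j • c j • z j‖ ^ p ≤ 2 ^ (p - 1) *
      (‖∑ j, e j • (c j).re • z j‖ ^ p + ‖∑ j, e j • (c j).im • z j‖ ^ p) := by
    have hreim (j : ι) : c j • z j = (c j).re • z j + I • (c j).im • z j := by
      rw [← coe_smul, ← coe_smul, smul_smul, ← add_smul, mul_comm, re_add_im]
    have hsum : ∑ j, e j • c j • z j =
        ∑ j, e j • (c j).re • z j + I • ∑ j, e j • (c j).im • z j := by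
      simp only [hreim, Finset.smul_sum, ← Finset.sum_add_distrib, smul_add, smul_comm I (e _)]
    refine le_trans ?_ (add_rpow_le_mul_rpow_add_rpow (norm_nonneg _) (norm_nonneg _) hp)
    gcongr
    simpa only [hsum, norm_smul, norm_I, one_mul] using
      norm_add_le (∑ j, e j • (c j).re • z j) (I • ∑ j, e j • (c j).im • z j)
  calc _ ≤ ∑ e : ι → ℤˣ, 2 ^ (p - 1) *
        (‖∑ j, e j • (c j).re • z j‖ ^ p + ‖∑ j, e j • (c j).im • z j‖ ^ p) :=
        Finset.sum_le_sum fun e _ => hsplit e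
    _ = 2 ^ (p - 1) * (∑ e : ι → ℤˣ, ‖∑ j, e j • (c j).re • z j‖ ^ p +
        ∑ e : ι → ℤˣ, ‖∑ j, e j • (c j).im • z j‖ ^ p) := by
        rw [← Finset.mul_sum, Finset.sum_add_distrib]
    _ ≤ 2 ^ (p - 1) * (2 * ∑ e : ι → ℤˣ, ‖∑ j, e j • z j‖ ^ p) := by
        rw [two_mul]
        gcongr
    _ = _ := by rw [← mul_assoc, ← Real.rpow_add_one two_ne_zero, sub_add_cancel]

end Signs

section RightHalfPlane

variable {p : ℝ}

lemma exists_one_le_mul_cos_rpow_sub (hp1 : 1 < p) (hp2 : p ≤ 2) :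
    ∃ A B : ℝ, 0 ≤ A ∧ 0 ≤ B ∧ ∀ φ, 0 ≤ φ → φ < Real.pi / 2 →
      1 ≤ A * Real.cos φ ^ p - B * Real.cos (p * φ) := by
  have hpi := Real.pi_pos
  have : 0 < p := by linarith
  -- `cos (p * φ)` is negative for `θ ≤ φ`, while `cos φ` is bounded below for `φ ≤ θ`.
  obtain ⟨θ, hθ1, hθ2⟩ : ∃ θ, Real.pi / (2 * p) < θ ∧ θ < Real.pi / 2 :=
    exists_between (div_lt_div_of_pos_left hpi (by norm_num) (by linarith))
  have hθ0 : 0 < θ := lt_trans (by positivity) hθ1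
  have hpθ : Real.pi / 2 < p * θ := by
    rw [div_lt_iff₀ (by positivity)] at hθ1
    linarith
  have hpθ' : p * θ < Real.pi := by nlinarith
  have hcosθ : 0 < Real.cos θ := Real.cos_pos_of_mem_Ioo ⟨by linarith, hθ2⟩
  have hcospθ : Real.cos (p * θ) < 0 :=
    Real.cos_neg_of_pi_div_two_lt_of_lt hpθ (by linarith)
  set B : ℝ := -(Real.cos (p * θ))⁻¹
  have hB : 0 ≤ B := neg_nonneg.2 (inv_nonpos.2 hcospθ.le)
  have hBcos : B * Real.cos (p * θ) = -1 := by rw [neg_mul, inv_mul_cancel₀ hcospθ.ne]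
  refine ⟨(1 + B) / Real.cos θ ^ p, B, by positivity, hB, fun φ hφ0 hφ => ?_⟩
  have hcosφ : 0 < Real.cos φ := Real.cos_pos_of_mem_Ioo ⟨by linarith, hφ⟩
  rcases le_total φ θ with h | h
  · have hcos : Real.cos θ ≤ Real.cos φ :=
      Real.cos_le_cos_of_nonneg_of_le_pi hφ0 (by linarith) h
    have hA : 1 + B ≤ (1 + B) / Real.cos θ ^ p * Real.cos φ ^ p := by
      rw [div_mul_eq_mul_div, le_div_iff₀ (by positivity)]
      gcongr
    have : B * Real.cos (p * φ) ≤ B := mul_le_of_le_one_right hB (Real.cos_le_one _)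
    linarith
  · have hcos : Real.cos (p * φ) ≤ Real.cos (p * θ) :=
      Real.cos_le_cos_of_nonneg_of_le_pi (by positivity) (by nlinarith) (by gcongr)
    have := mul_le_mul_of_nonneg_left hcos hB
    have : 0 ≤ (1 + B) / Real.cos θ ^ p * Real.cos φ ^ p := by positivity
    linarith

lemma exists_norm_rpow_le_re_rpow_sub (hp1 : 1 < p) (hp2 : p ≤ 2) :
    ∃ A B : ℝ, 0 ≤ A ∧ 0 ≤ B ∧ ∀ ζ : ℂ, 0 < ζ.re →
      ‖ζ‖ ^ p ≤ A * ζ.re ^ p - B * (ζ ^ (p : ℂ)).re := by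
  obtain ⟨A, B, hA, hB, hcos⟩ := exists_one_le_mul_cos_rpow_sub hp1 hp2
  refine ⟨A, B, hA, hB, fun ζ hζ => ?_⟩
  have hp0 : 0 < p := by linarith
  have harg : |arg ζ| < Real.pi / 2 := abs_arg_lt_pi_div_two_iff.2 (Or.inl hζ)
  have hre : ζ.re = ‖ζ‖ * Real.cos |arg ζ| := by rw [Real.cos_abs, norm_mul_cos_arg]
  have hpow : (ζ ^ (p : ℂ)).re = ‖ζ‖ ^ p * Real.cos (p * |arg ζ|) := by
    rw [cpow_ofReal_re, ← Real.cos_abs (arg ζ * p), abs_mul, abs_of_pos hp0, mul_comm p]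
  have hcosφ : 0 ≤ Real.cos |arg ζ| :=
    Real.cos_nonneg_of_mem_Icc ⟨by linarith [abs_nonneg (arg ζ), Real.pi_pos], harg.le⟩
  calc ‖ζ‖ ^ p ≤ ‖ζ‖ ^ p * (A * Real.cos |arg ζ| ^ p - B * Real.cos (p * |arg ζ|)) :=
        le_mul_of_one_le_right (by positivity) (hcos _ (abs_nonneg _) harg)
    _ = A * ζ.re ^ p - B * (ζ ^ (p : ℂ)).re := by
        rw [hpow, hre, Real.mul_rpow (norm_nonneg _) hcosφ]
        ring

end RightHalfPlane

section CauchyTransform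

variable {𝕜 : Type*} [NormedField 𝕜] [NormedAlgebra 𝕜 ℂ] {h : ℝ → 𝕜} {u : ℝ → ℝ} {z : ℂ}

/-- The Cauchy transform in the upper half plane, normalised so that nonnegative functions have
transforms with nonnegative real part. -/
noncomputable def cauchy (h : ℝ → 𝕜) (z : ℂ) : ℂ := ∫ t : ℝ, h t • (I / (z - t))

lemma cauchy_ofReal (u : ℝ → ℝ) : cauchy (fun t => (u t : ℂ)) = cauchy u := by
  ext z
  simp only [cauchy, coe_smul]

lemma sub_ofReal_ne_zero (hz : 0 < z.im) (t : ℝ) : z - t ≠ 0 := fun h => by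
  simpa [hz.ne'] using congrArg im h

lemma im_le_norm_sub_ofReal (z : ℂ) (t : ℝ) : z.im ≤ ‖z - t‖ := by
  simpa using im_le_norm (z - t)

lemma norm_I_div (z : ℂ) : ‖I / z‖ = ‖z‖⁻¹ := by rw [norm_div, norm_I, one_div]

lemma norm_I_div_sub_ofReal_le (hz : 0 < z.im) (t : ℝ) : ‖I / (z - t)‖ ≤ z.im⁻¹ := by
  rw [norm_I_div]
  exact inv_anti₀ hz (im_le_norm_sub_ofReal z t)

lemma integrable_smul_I_div (hh : Integrable h) (hz : 0 < z.im) :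
    Integrable fun t : ℝ => h t • (I / (z - t)) :=
  hh.smul_bdd z.im⁻¹ (Measurable.aestronglyMeasurable (by fun_prop))
    (Filter.Eventually.of_forall fun t => norm_I_div_sub_ofReal_le hz t)

lemma cauchy_add {k : ℝ → 𝕜} (hh : Integrable h) (hk : Integrable k) (hz : 0 < z.im) :
    cauchy (fun t => h t + k t) z = cauchy h z + cauchy k z := by
  simp only [cauchy, add_smul]
  exact integral_add (integrable_smul_I_div hh hz) (integrable_smul_I_div hk hz)

lemma cauchy_const_mul (c : ℂ) (h : ℝ → ℂ) (z : ℂ) :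
    cauchy (fun t => c * h t) z = c * cauchy h z := by
  simp only [cauchy, smul_eq_mul, mul_assoc, integral_const_mul]

lemma norm_cauchy_le (hh : Integrable h) {d : ℝ} (hd : 0 < d)
    (hz : ∀ t, h t ≠ 0 → d ≤ ‖z - t‖) : ‖cauchy h z‖ ≤ d⁻¹ * ∫ t, ‖h t‖ := by
  rw [← integral_const_mul]
  refine norm_integral_le_of_norm_le (hh.norm.const_mul _)
    (Filter.Eventually.of_forall fun t => ?_)
  rw [norm_smul, norm_I_div, mul_comm]
  rcases eq_or_ne (h t) 0 with h0 | h0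
  · rw [h0, norm_zero, mul_zero, mul_zero]
  · gcongr
    exact hz t h0

lemma differentiableAt_cauchy (hh : Integrable h) (hz : 0 < z.im) :
    DifferentiableAt ℂ (cauchy h) z := by
  have hball : ∀ w ∈ Metric.ball z (z.im / 2), z.im / 2 < w.im := fun w hw => by
    have hdist : ‖w - z‖ < z.im / 2 := mem_ball_iff_norm.1 hw
    have := (abs_le.1 (abs_im_le_norm (w - z))).1
    rw [sub_im] at this
    linarith
  have hpos : ∀ w ∈ Metric.ball z (z.im / 2), 0 < w.im := fun w hw =>
    (half_pos hz).trans (hball w hw)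
  have hderiv := hasDerivAt_integral_of_dominated_loc_of_deriv_le (μ := volume) (𝕜 := ℂ)
    (F := fun (w : ℂ) (t : ℝ) => h t • (I / (w - t)))
    (F' := fun (w : ℂ) (t : ℝ) => h t • (-I / (w - t) ^ 2))
    (bound := fun t => ‖h t‖ * (z.im / 2)⁻¹ ^ 2) (x₀ := z)
    (Metric.ball_mem_nhds z (half_pos hz))
    (Filter.Eventually.of_forall fun w =>
      hh.aestronglyMeasurable.smul (Measurable.aestronglyMeasurable (by fun_prop)))
    (integrable_smul_I_div hh hz)
    (hh.aestronglyMeasurable.smul (Measurable.aestronglyMeasurable (by fun_prop)))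
    (Filter.Eventually.of_forall fun t w hw => ?_)
    (hh.norm.mul_const _)
    (Filter.Eventually.of_forall fun t w hw => ?_)
  · exact hderiv.2.differentiableAt
  · have hnorm : ‖-I / (w - t) ^ 2‖ = ‖w - t‖⁻¹ ^ 2 := by
      rw [norm_div, norm_neg, norm_I, one_div, norm_pow, inv_pow]
    rw [norm_smul, hnorm]
    gcongr
    exact (hball w hw).le.trans (im_le_norm_sub_ofReal w t)
  · have hsub : HasDerivAt (fun w : ℂ => w - t) 1 w := (hasDerivAt_id w).sub_const _
    have hdiv := (hasDerivAt_const w I).div hsub (sub_ofReal_ne_zero (hpos w hw) t)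
    exact (hdiv.const_smul (h t)).congr_deriv (by rw [zero_mul, mul_one, zero_sub])

lemma re_I_div_sub_ofReal (z : ℂ) (t : ℝ) :
    (I / (z - t)).re = z.im / ((z.re - t) ^ 2 + z.im ^ 2) := by
  rw [div_re]
  simp [normSq_apply, pow_two]

lemma integrable_mul_poisson (hu : Integrable u) (hz : 0 < z.im) :
    Integrable fun t => u t * (z.im / ((z.re - t) ^ 2 + z.im ^ 2)) := by
  simpa only [RCLike.re_to_complex, smul_re, smul_eq_mul, re_I_div_sub_ofReal] using
    (integrable_smul_I_div hu hz).re

lemma re_cauchy (hu : Integrable u) (hz : 0 < z.im) :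
    (cauchy u z).re = ∫ t, u t * (z.im / ((z.re - t) ^ 2 + z.im ^ 2)) := by
  rw [cauchy, ← RCLike.re_to_complex, ← integral_re (integrable_smul_I_div hu hz)]
  simp only [RCLike.re_to_complex, smul_re, smul_eq_mul, re_I_div_sub_ofReal]

lemma re_cauchy_pos (hu : Integrable u) (hu0 : 0 ≤ u) (hne : ¬ u =ᵐ[volume] 0)
    (hz : 0 < z.im) : 0 < (cauchy u z).re := by
  have hker (t : ℝ) : 0 < z.im / ((z.re - t) ^ 2 + z.im ^ 2) := by positivity
  have hnonneg (t : ℝ) : 0 ≤ u t * (z.im / ((z.re - t) ^ 2 + z.im ^ 2)) :=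
    mul_nonneg (hu0 t) (hker t).le
  rw [re_cauchy hu hz]
  refine lt_of_le_of_ne (integral_nonneg hnonneg) fun h => hne ?_
  filter_upwards [(integral_eq_zero_iff_of_nonneg hnonneg (integrable_mul_poisson hu hz)).1 h.symm]
    with t ht
  exact (mul_eq_zero.1 ht).resolve_right (hker t).ne'

lemma im_ofReal_add_mul_I (x ε : ℝ) : ((x : ℂ) + ε * I).im = ε := by simp

lemma re_cauchy_eq_avg (hu : Integrable u) {ε : ℝ≥0} (hε : 0 < ε) (x : ℝ) :
    (cauchy u (x + ε * I)).re =
      Real.pi * avg (ProbabilityTheory.cauchyMeasure 0 ε) u x := by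
  have him : 0 < ((x : ℂ) + ε * I).im := (im_ofReal_add_mul_I x ε).symm ▸ NNReal.coe_pos.2 hε
  have hpdf (y : ℝ) : ProbabilityTheory.cauchyPDF 0 ε y =
      ((ProbabilityTheory.cauchyPDFReal 0 ε y).toNNReal : ℝ≥0∞) := rfl
  rw [re_cauchy hu him, avg, ProbabilityTheory.cauchyMeasure_of_scale_ne_zero _ hε.ne',
    funext hpdf, integral_withDensity_eq_integral_smul
      (ProbabilityTheory.measurable_cauchyPDFReal 0 ε).real_toNNReal,
    ← integral_const_mul, ← integral_sub_left_eq_self _ _ x]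
  refine integral_congr_ae (Filter.Eventually.of_forall fun y => ?_)
  dsimp only
  rw [NNReal.smul_def, Real.coe_toNNReal _ (ProbabilityTheory.cauchyPDF_pos 0 hε.ne' y).le,
    ProbabilityTheory.cauchyPDFReal_def, im_ofReal_add_mul_I]
  have := Real.pi_ne_zero
  simp only [add_re, ofReal_re, re_ofReal_mul, I_re, mul_zero, add_zero, sub_sub_cancel,
    sub_zero, smul_eq_mul]
  field_simp

lemma continuous_cauchy_horizontal (hh : Integrable h) {ε : ℝ} (hε : 0 < ε) :
    Continuous fun x : ℝ => cauchy h (x + ε * I) :=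
  continuous_iff_continuousAt.2 fun x =>
    (differentiableAt_cauchy hh ((im_ofReal_add_mul_I x ε).symm ▸ hε)).continuousAt.comp
      (f := fun x : ℝ => (x : ℂ) + ε * I) (by fun_prop)

end CauchyTransform

section RieszPositive

variable {p ε X R : ℝ} {u : ℝ → ℝ}

lemma norm_intervalIntegral_horizontal_le {G : ℂ → ℂ} {D : ℝ} (hεX : ε ≤ X) (hX : 0 ≤ X)
    (hε : 0 ≤ ε) (hG : ∀ z : ℂ, ε ≤ z.im → DifferentiableAt ℂ G z)
    (hD : ∀ z : ℂ, ε ≤ z.im → |z.re| = X ∨ z.im = X → ‖G z‖ ≤ D) :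
    ‖∫ x in (-X)..X, G (x + ε * I)‖ ≤ 4 * X * D := by
  have hrect := integral_boundary_rect_eq_zero_of_differentiableOn G (-X + ε * I) (X + X * I)
    fun z hz => by
      have hzim : z.im ∈ Set.uIcc ε X := by simpa using hz.2
      rw [Set.uIcc_of_le hεX] at hzim
      exact (hG z hzim.1).differentiableWithinAt
  simp only [add_re, neg_re, ofReal_re, mul_re, I_re, mul_zero, ofReal_im, I_im, mul_one, sub_self,
    add_zero, add_im, neg_im, neg_zero, mul_im, zero_add] at hrect
  have htop : ‖∫ x in (-X)..X, G (x + X * I)‖ ≤ D * (2 * X) := by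
    refine (intervalIntegral.norm_integral_le_of_norm_le_const fun x _ =>
      hD (x + X * I) (by simpa using hεX) (Or.inr (by simp))).trans_eq ?_
    rw [sub_neg_eq_add, ← two_mul, abs_of_nonneg (by positivity)]
  have hside (Y : ℝ) (hY : |Y| = X) : ‖∫ y in ε..X, G (Y + y * I)‖ ≤ D * X := by
    have hbound : ∀ y ∈ Set.uIoc ε X, ‖G (Y + y * I)‖ ≤ D := fun y hy => by
      rw [Set.uIoc_of_le hεX] at hy
      exact hD _ (by simpa using hy.1.le) (Or.inl (by simpa using hY))
    have hD0 : 0 ≤ D :=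
      (norm_nonneg _).trans (hD (Y + ε * I) (by simp) (Or.inl (by simpa using hY)))
    refine (intervalIntegral.norm_integral_le_of_norm_le_const hbound).trans ?_
    rw [abs_of_nonneg (sub_nonneg.2 hεX)]
    gcongr
    linarith
  have hright := hside X (abs_of_nonneg hX)
  have hleft := hside (-X) (by rw [abs_neg, abs_of_nonneg hX])
  push_cast at hleft
  have hbottom : ∫ x in (-X)..X, G (x + ε * I) =
      (∫ x in (-X)..X, G (x + X * I)) - I • (∫ y in ε..X, G (X + y * I)) +
        I • ∫ y in ε..X, G (-X + y * I) := by
    push_cast at hrect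
    linear_combination hrect
  rw [hbottom]
  refine (norm_add_le_of_le (norm_sub_le _ _) le_rfl).trans ?_
  rw [norm_smul, norm_smul, norm_I, one_mul, one_mul]
  linarith

lemma norm_intervalIntegral_cauchy_cpow_le (hp : 0 ≤ p) (hu : Integrable u) (hu0 : 0 ≤ u)
    (hne : ¬ u =ᵐ[volume] 0) (hsupp : ∀ x, u x ≠ 0 → |x| ≤ R) (hε : 0 < ε)
    (hRX : 2 * R ≤ X) (hεX : ε ≤ X) :
    ‖∫ x in (-X)..X, cauchy u (x + ε * I) ^ (p : ℂ)‖ ≤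
      4 * X * ((X / 2)⁻¹ * ∫ x, ‖u x‖) ^ p := by
  have hX : 0 < X := hε.trans_le hεX
  refine norm_intervalIntegral_horizontal_le (G := fun z => cauchy u z ^ (p : ℂ)) hεX hX.le hε.le
    (fun z hz => ?_) fun z hz hzX => ?_
  · have hzim := hε.trans_le hz
    exact (differentiableAt_cauchy hu hzim).cpow_const (Or.inl (re_cauchy_pos hu hu0 hne hzim))
  · rw [norm_cpow_real]
    gcongr
    refine norm_cauchy_le hu (half_pos hX) fun t ht => ?_
    rcases hzX with hre | him
    · have hdist : |z.re| - |t| ≤ ‖z - t‖ :=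
        (abs_sub_abs_le_abs_sub _ _).trans (by simpa using abs_re_le_norm (z - t))
      linarith [hsupp t ht]
    · linarith [im_le_norm_sub_ofReal z t]

lemma avg_rpow_le (hp : 1 ≤ p) (μ : Measure ℝ) [IsProbabilityMeasure μ] (hu : IsTest u)
    (hu0 : 0 ≤ u) (x : ℝ) : avg μ u x ^ p ≤ avg μ (fun y => u y ^ p) x := by
  obtain ⟨B, hB⟩ := hu.bounded
  have hmeas : Measurable fun y => u (x - y) := by
    have := hu.stronglyMeasurable.measurable
    fun_prop
  refine (convexOn_rpow hp).map_integral_le (f := fun y => u (x - y))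
    (Real.continuous_rpow_const (by linarith)).continuousOn isClosed_Ici
    (Filter.Eventually.of_forall fun y => hu0 _)
    (Integrable.of_bound hmeas.aestronglyMeasurable B
      (Filter.Eventually.of_forall fun y => hB _))
    (Integrable.of_bound (hmeas.pow_const p).aestronglyMeasurable (B ^ p)
      (Filter.Eventually.of_forall fun y => ?_))
  rw [Function.comp_apply, Real.norm_of_nonneg (Real.rpow_nonneg (hu0 _) _)]
  exact Real.rpow_le_rpow (hu0 _) ((Real.le_norm_self _).trans (hB _)) (by linarith)

lemma intervalIntegral_re_cauchy_rpow_le (hp : 1 ≤ p) (hu : IsTest u) (hu0 : 0 ≤ u)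
    {ε : ℝ≥0} (hε : 0 < ε) (hX : 0 ≤ X) :
    ∫ x in (-X)..X, (cauchy u (x + ε * I)).re ^ p ≤ Real.pi ^ p * ∫ x, u x ^ p := by
  set μ := ProbabilityTheory.cauchyMeasure 0 ε
  have hmeas : StronglyMeasurable fun x => u x ^ p :=
    (hu.stronglyMeasurable.measurable.pow_const p).stronglyMeasurable
  have hint : Integrable fun x => u x ^ p := by
    simpa only [Real.norm_of_nonneg (hu0 _)] using hu.integrable_norm_rpow hp
  have havg : Integrable fun x => Real.pi ^ p * avg μ (fun y => u y ^ p) x :=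
    (integrable_avg hmeas hint).const_mul _
  have hle (x : ℝ) : (cauchy u (x + ε * I)).re ^ p ≤
      Real.pi ^ p * avg μ (fun y => u y ^ p) x := by
    have havg0 : 0 ≤ avg μ u x := integral_nonneg fun y => hu0 (x - y)
    rw [re_cauchy_eq_avg hu.integrable hε, Real.mul_rpow Real.pi_pos.le havg0]
    gcongr
    exact avg_rpow_le hp μ hu hu0 x
  have hcont : Continuous fun x : ℝ => (cauchy u (x + ε * I)).re ^ p :=
    (continuous_re.comp (continuous_cauchy_horizontal hu.integrable hε)).rpow_const
      fun _ => Or.inr (by linarith)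
  rw [← integral_avg hmeas hint (μ := μ), ← integral_const_mul,
    intervalIntegral.integral_of_le (by linarith)]
  refine (setIntegral_mono hcont.integrableOn_Ioc havg.integrableOn hle).trans
    (setIntegral_le_integral havg (Filter.Eventually.of_forall fun x => ?_))
  exact mul_nonneg (by positivity) (integral_nonneg fun y => Real.rpow_nonneg (hu0 _) _)

lemma exists_intervalIntegral_norm_cauchy_rpow_le (hp1 : 1 < p) (hp2 : p ≤ 2) :
    ∃ A B : ℝ, 0 ≤ A ∧ ∀ (u : ℝ → ℝ) (R X : ℝ) (ε : ℝ≥0), IsTest u → 0 ≤ u →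
      ¬ u =ᵐ[volume] 0 → (∀ x, u x ≠ 0 → |x| ≤ R) → 0 < ε → 2 * R ≤ X → ε ≤ X →
      ∫ x in (-X)..X, ‖cauchy u (x + ε * I)‖ ^ p ≤
        A * (∫ x, u x ^ p) + B * (4 * X * ((X / 2)⁻¹ * ∫ x, ‖u x‖) ^ p) := by
  obtain ⟨A, B, hA, hB, hAB⟩ := exists_norm_rpow_le_re_rpow_sub hp1 hp2
  refine ⟨A * Real.pi ^ p, B, by positivity, fun u R X ε hu hu0 hne hsupp hε hRX hεX => ?_⟩
  have hX : 0 ≤ X := ε.2.trans hεX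
  set F : ℝ → ℂ := fun x => cauchy u (x + ε * I)
  have hF : Continuous F := continuous_cauchy_horizontal hu.integrable hε
  have hre (x : ℝ) : 0 < (F x).re :=
    re_cauchy_pos hu.integrable hu0 hne ((im_ofReal_add_mul_I x ε).symm ▸ NNReal.coe_pos.2 hε)
  have hnorm : Continuous fun x => ‖F x‖ ^ p :=
    hF.norm.rpow_const fun _ => Or.inr (by linarith)
  have hrerpow : Continuous fun x => A * (F x).re ^ p :=
    ((continuous_re.comp hF).rpow_const fun _ => Or.inr (by linarith)).const_mul A
  have hcpow : Continuous fun x => F x ^ (p : ℂ) :=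
    hF.cpow continuous_const fun x => Or.inl (hre x)
  have hrecpow : Continuous fun x => B * (F x ^ (p : ℂ)).re :=
    (continuous_re.comp hcpow).const_mul B
  calc ∫ x in (-X)..X, ‖F x‖ ^ p
      ≤ ∫ x in (-X)..X, (A * (F x).re ^ p - B * (F x ^ (p : ℂ)).re) :=
        intervalIntegral.integral_mono (by linarith) (hnorm.intervalIntegrable _ _)
          ((hrerpow.sub hrecpow).intervalIntegrable _ _) fun x => hAB _ (hre x)
    _ = A * (∫ x in (-X)..X, (F x).re ^ p) - B * (∫ x in (-X)..X, F x ^ (p : ℂ)).re := by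
        rw [intervalIntegral.integral_sub (hrerpow.intervalIntegrable _ _)
          (hrecpow.intervalIntegrable _ _), intervalIntegral.integral_const_mul,
          intervalIntegral.integral_const_mul]
        congr 2
        exact reCLM.intervalIntegral_comp_comm (hcpow.intervalIntegrable _ _)
    _ ≤ A * (∫ x in (-X)..X, (F x).re ^ p) + B * ‖∫ x in (-X)..X, F x ^ (p : ℂ)‖ := by
        rw [sub_eq_add_neg, ← mul_neg]
        gcongr
        exact (neg_le_abs _).trans (abs_re_le_norm _)
    _ ≤ A * (Real.pi ^ p * ∫ x, u x ^ p) + B * (4 * X * ((X / 2)⁻¹ * ∫ x, ‖u x‖) ^ p) := by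
        gcongr
        · exact intervalIntegral_re_cauchy_rpow_le hp1.le hu hu0 hε hX
        · exact norm_intervalIntegral_cauchy_cpow_le (by linarith) hu.integrable hu0 hne hsupp
            (NNReal.coe_pos.2 hε) hRX hεX
    _ = _ := by rw [← mul_assoc A]

lemma integrable_and_integral_le_of_tendsto {f b : ℝ → ℝ} {L : ℝ} (hf : Continuous f)
    (hf0 : 0 ≤ f) (hb : Filter.Tendsto b Filter.atTop (nhds L))
    (hle : ∀ᶠ X in Filter.atTop, ∫ x in (-X)..X, f x ≤ b X) :
    Integrable f ∧ ∫ x, f x ≤ L := by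
  have hint : Integrable f := by
    refine integrable_of_intervalIntegral_norm_bounded (L + 1) (fun X => hf.integrableOn_Ioc)
      Filter.tendsto_neg_atTop_atBot Filter.tendsto_id ?_
    filter_upwards [hle, hb.eventually_le_const (lt_add_one L)] with X hX hbX
    simpa only [Real.norm_of_nonneg (hf0 _), id_eq] using hX.trans hbX
  exact ⟨hint, le_of_tendsto_of_tendsto (intervalIntegral_tendsto_integral hint
    Filter.tendsto_neg_atTop_atBot Filter.tendsto_id) hb hle⟩

lemma tendsto_mul_inv_half_mul_rpow (hp : 1 < p) {M : ℝ} (hM : 0 ≤ M) :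
    Filter.Tendsto (fun X : ℝ => 4 * X * ((X / 2)⁻¹ * M) ^ p) Filter.atTop (nhds 0) := by
  have hdecay := (tendsto_rpow_neg_atTop (sub_pos.2 hp)).const_mul (4 * (2 * M) ^ p)
  rw [mul_zero] at hdecay
  refine hdecay.congr' ?_
  filter_upwards [Filter.eventually_gt_atTop 0] with X hX
  rw [show (X / 2)⁻¹ * M = 2 * M / X by field_simp, Real.div_rpow (by positivity) hX.le,
    Real.rpow_neg hX.le, Real.rpow_sub_one hX.ne']
  field_simp

lemma exists_integral_norm_cauchy_rpow_le (hp1 : 1 < p) (hp2 : p ≤ 2) :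
    ∃ C, 0 ≤ C ∧ ∀ (u : ℝ → ℝ) (R : ℝ) (ε : ℝ≥0), IsTest u → 0 ≤ u →
      (∀ x, u x ≠ 0 → |x| ≤ R) → 0 < ε →
      Integrable (fun x : ℝ => ‖cauchy u (x + ε * I)‖ ^ p) ∧
        ∫ x : ℝ, ‖cauchy u (x + ε * I)‖ ^ p ≤ C * ∫ x, u x ^ p := by
  obtain ⟨A, B, hA, hAB⟩ := exists_intervalIntegral_norm_cauchy_rpow_le hp1 hp2
  refine ⟨A, hA, fun u R ε hu hu0 hsupp hε => ?_⟩
  by_cases hne : u =ᵐ[volume] 0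
  · have hzero (z : ℂ) : cauchy u z = 0 := integral_eq_zero_of_ae <| by
      filter_upwards [hne] with t ht
      rw [ht, Pi.zero_apply, zero_smul, Pi.zero_apply]
    simp only [hzero, norm_zero, Real.zero_rpow (by linarith : p ≠ 0), integral_zero]
    exact ⟨integrable_zero _ _ _,
      mul_nonneg hA (integral_nonneg fun x => Real.rpow_nonneg (hu0 x) _)⟩
  · have hM : 0 ≤ ∫ x, ‖u x‖ := integral_nonneg fun x => norm_nonneg _
    have hlim := ((tendsto_mul_inv_half_mul_rpow hp1 hM).const_mul B).const_add
      (A * ∫ x, u x ^ p)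
    rw [mul_zero, add_zero] at hlim
    refine integrable_and_integral_le_of_tendsto ?_ (fun x => by positivity) hlim ?_
    · exact (continuous_cauchy_horizontal hu.integrable hε).norm.rpow_const
        fun _ => Or.inr (by linarith)
    · filter_upwards [Filter.eventually_ge_atTop (2 * R), Filter.eventually_ge_atTop (ε : ℝ)]
        with X hRX hεX
      exact hAB u R X ε hu hu0 hne hsupp hε hRX hεX

end RieszPositive

section RieszProjection

lemma IsTest.mono {α E F : Type*} [MeasureSpace α] [NormedAddCommGroup E] [NormedAddCommGroup F]
    {f : α → E} {g : α → F} (hg : IsTest g) (hf : StronglyMeasurable f)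
    (hle : ∀ x, ‖f x‖ ≤ ‖g x‖) : IsTest f := by
  obtain ⟨B, hB⟩ := hg.bounded
  exact ⟨hf, hg.integrable.mono hf.aestronglyMeasurable (Filter.Eventually.of_forall hle), B,
    fun x => (hle x).trans (hB x)⟩

lemma norm_le_four_mul_of_forall_nonneg {α : Type*} [MeasureSpace α] {T : (α → ℂ) → ℂ} {B : ℝ}
    {h : α → ℂ} (hadd : ∀ f g, IsTest f → IsTest g → T (fun x => f x + g x) = T f + T g)
    (hmul : ∀ c f, T (fun x => c * f x) = c * T f) (hh : IsTest h)
    (hB : ∀ u : α → ℝ, IsTest u → 0 ≤ u → (∀ x, u x ≤ ‖h x‖) → ‖T fun x => u x‖ ≤ B) :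
    ‖T h‖ ≤ 4 * B := by
  set u : ℂ → α → ℝ := fun c x => max (c * h x).re 0
  have hule {c : ℂ} (hc : ‖c‖ = 1) (x : α) : u c x ≤ ‖h x‖ :=
    max_le ((re_le_norm _).trans (by rw [norm_mul, hc, one_mul])) (norm_nonneg _)
  have hu {c : ℂ} (hc : ‖c‖ = 1) : IsTest (u c) := by
    refine hh.mono ?_ fun x => by
      rw [Real.norm_of_nonneg (le_max_right _ _)]
      exact hule hc x
    exact (by fun_prop : Continuous fun z : ℂ => max (c * z).re 0).comp_stronglyMeasurable
      hh.stronglyMeasurable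
  have hu' {c : ℂ} (hc : ‖c‖ = 1) : IsTest fun x => (u c x : ℂ) :=
    (hu hc).mono (continuous_ofReal.comp_stronglyMeasurable (hu hc).stronglyMeasurable)
      fun x => (norm_real _).le
  have hTu {c : ℂ} (hc : ‖c‖ = 1) : ‖T fun x => u c x‖ ≤ B :=
    hB _ (hu hc) (fun x => le_max_right _ _) (hule hc)
  have hone : ‖(1 : ℂ)‖ = 1 := norm_one
  have hnegone : ‖(-1 : ℂ)‖ = 1 := by rw [norm_neg, norm_one]
  have hnegI : ‖-I‖ = 1 := by rw [norm_neg, norm_I]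
  have hmax (r : ℝ) : max r 0 - max (-r) 0 = r := by
    rcases le_total r 0 with hr | hr <;> simp [hr]
  have hdecomp : h = fun x => ((u 1 x : ℂ) + -1 * u (-1) x) + (I * u (-I) x + -I * u I x) := by
    ext x
    apply Complex.ext
    · simp [u, ← sub_eq_add_neg, hmax]
    · simp [u, ← sub_eq_add_neg, hmax]
  have hT : T h = (T (fun x => u 1 x) + -1 * T fun x => u (-1) x) +
      (I * T (fun x => u (-I) x) + -I * T fun x => u I x) := by
    conv_lhs => rw [hdecomp]
    rw [hadd _ _ ((hu' hone).add ((hu' hnegone).const_mul _))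
      (((hu' hnegI).const_mul _).add ((hu' norm_I).const_mul _)),
      hadd _ _ (hu' hone) ((hu' hnegone).const_mul _),
      hadd _ _ ((hu' hnegI).const_mul _) ((hu' norm_I).const_mul _), hmul, hmul, hmul]
  have hbound := norm_add₄_le (a := T fun x => u 1 x) (b := -1 * T fun x => u (-1) x)
    (c := I * T fun x => u (-I) x) (d := -I * T fun x => u I x)
  simp only [norm_mul, norm_neg, norm_one, norm_I, one_mul] at hbound
  rw [hT, ← add_assoc]
  linarith [hTu hone, hTu hnegone, hTu hnegI, hTu norm_I]

variable {p q ε : ℝ} {h k : ℝ → ℂ}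

lemma norm_cauchy_horizontal_le (hh : Integrable h) (hε : 0 < ε) (x : ℝ) :
    ‖cauchy h (x + ε * I)‖ ≤ ε⁻¹ * ∫ t, ‖h t‖ :=
  norm_cauchy_le hh hε fun t _ => by
    simpa only [im_ofReal_add_mul_I] using im_le_norm_sub_ofReal (x + ε * I) t

lemma integrable_cauchy_mul (hh : Integrable h) (hk : Integrable k) (hε : 0 < ε) :
    Integrable fun x : ℝ => cauchy h (x + ε * I) * k x :=
  hk.bdd_mul (continuous_cauchy_horizontal hh hε).aestronglyMeasurable
    (Filter.Eventually.of_forall (norm_cauchy_horizontal_le hh hε))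

lemma norm_integral_cauchy_mul_le (hh : Integrable h) (hk : Integrable k) (hε : 0 < ε) :
    ‖∫ x : ℝ, cauchy h (x + ε * I) * k x‖ ≤ ε⁻¹ * (∫ t, ‖h t‖) * ∫ x, ‖k x‖ := by
  rw [← integral_const_mul]
  refine norm_integral_le_of_norm_le (hk.norm.const_mul _)
    (Filter.Eventually.of_forall fun x => ?_)
  rw [norm_mul]
  gcongr
  exact norm_cauchy_horizontal_le hh hε x

lemma integral_cauchy_add_mul {h₁ h₂ : ℝ → ℂ} (hh₁ : Integrable h₁) (hh₂ : Integrable h₂)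
    (hk : Integrable k) (hε : 0 < ε) :
    ∫ x : ℝ, cauchy (fun t => h₁ t + h₂ t) (x + ε * I) * k x =
      (∫ x : ℝ, cauchy h₁ (x + ε * I) * k x) + ∫ x : ℝ, cauchy h₂ (x + ε * I) * k x := by
  rw [← integral_add (integrable_cauchy_mul hh₁ hk hε) (integrable_cauchy_mul hh₂ hk hε)]
  congr 1 with x
  rw [cauchy_add hh₁ hh₂ ((im_ofReal_add_mul_I x ε).symm ▸ hε), add_mul]

lemma exists_norm_integral_cauchy_mul_le_of_nonneg (hpq : p.HolderConjugate q) (hp2 : p ≤ 2) :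
    ∃ C, 0 ≤ C ∧ ∀ (u : ℝ → ℝ) (k : ℝ → ℂ) (R ε : ℝ), IsTest u → 0 ≤ u →
      (∀ x, u x ≠ 0 → |x| ≤ R) → IsTest k → 0 < ε →
      ‖∫ x : ℝ, cauchy u (x + ε * I) * k x‖ ≤ C * (∫ x, u x ^ p) + ∫ x, ‖k x‖ ^ q := by
  obtain ⟨C, hC, hle⟩ := exists_integral_norm_cauchy_rpow_le hpq.lt hp2
  refine ⟨C, hC, fun u k R ε hu hu0 hsupp hk hε => ?_⟩
  lift ε to ℝ≥0 using hε.le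
  obtain ⟨hint, hup⟩ := hle u R ε hu hu0 hsupp (NNReal.coe_pos.1 hε)
  have hkq := hk.integrable_norm_rpow hpq.symm.lt.le
  calc ‖∫ x : ℝ, cauchy u (x + ε * I) * k x‖
      ≤ ∫ x : ℝ, (‖cauchy u (x + ε * I)‖ ^ p + ‖k x‖ ^ q) := by
        refine norm_integral_le_of_norm_le (hint.add hkq)
          (Filter.Eventually.of_forall fun x => ?_)
        rw [norm_mul]
        exact (Real.young_inequality_of_nonneg (norm_nonneg _) (norm_nonneg _) hpq).trans
          (add_le_add (div_le_self (by positivity) hpq.lt.le)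
            (div_le_self (by positivity) hpq.symm.lt.le))
    _ = (∫ x : ℝ, ‖cauchy u (x + ε * I)‖ ^ p) + ∫ x, ‖k x‖ ^ q := integral_add hint hkq
    _ ≤ C * (∫ x, u x ^ p) + ∫ x, ‖k x‖ ^ q := by gcongr

lemma exists_norm_integral_cauchy_mul_le_of_support (hpq : p.HolderConjugate q) (hp2 : p ≤ 2) :
    ∃ C, 0 ≤ C ∧ ∀ (h k : ℝ → ℂ) (R ε : ℝ), IsTest h → (∀ x, h x ≠ 0 → |x| ≤ R) →
      IsTest k → 0 < ε →
      ‖∫ x : ℝ, cauchy h (x + ε * I) * k x‖ ≤ C * ((∫ x, ‖h x‖ ^ p) + ∫ x, ‖k x‖ ^ q) := by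
  obtain ⟨C, hC, hle⟩ := exists_norm_integral_cauchy_mul_le_of_nonneg hpq hp2
  refine ⟨4 * (C + 1), by linarith, fun h k R ε hh hsupp hk hε => ?_⟩
  rw [mul_assoc]
  refine norm_le_four_mul_of_forall_nonneg (T := fun f => ∫ x : ℝ, cauchy f (x + ε * I) * k x)
    (fun f g hf hg => integral_cauchy_add_mul hf.integrable hg.integrable hk.integrable hε)
    (fun c f => by simp only [cauchy_const_mul, mul_assoc, integral_const_mul]) hh
    fun u hu hu0 huh => ?_
  have husupp (x : ℝ) (hx : u x ≠ 0) : |x| ≤ R := hsupp x fun h0 =>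
    hx (le_antisymm (by simpa only [h0, norm_zero] using huh x) (hu0 x))
  have hup : ∫ x, u x ^ p ≤ ∫ x, ‖h x‖ ^ p :=
    integral_mono_of_nonneg (Filter.Eventually.of_forall fun x => Real.rpow_nonneg (hu0 x) _)
      (hh.integrable_norm_rpow hpq.lt.le)
      (Filter.Eventually.of_forall fun x => Real.rpow_le_rpow (hu0 x) (huh x) hpq.pos.le)
  have hhp : 0 ≤ ∫ x, ‖h x‖ ^ p := by positivity
  have hkq : 0 ≤ ∫ x, ‖k x‖ ^ q := by positivity
  simp only [cauchy_ofReal]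
  calc ‖∫ x : ℝ, cauchy u (x + ε * I) * k x‖
      ≤ C * (∫ x, u x ^ p) + ∫ x, ‖k x‖ ^ q := hle u k R ε hu hu0 husupp hk hε
    _ ≤ C * (∫ x, ‖h x‖ ^ p) + ∫ x, ‖k x‖ ^ q := by gcongr
    _ ≤ (C + 1) * ((∫ x, ‖h x‖ ^ p) + ∫ x, ‖k x‖ ^ q) := by nlinarith [mul_nonneg hC hkq]

lemma exists_norm_integral_cauchy_mul_le (hpq : p.HolderConjugate q) (hp2 : p ≤ 2) :
    ∃ C, 0 ≤ C ∧ ∀ (h k : ℝ → ℂ) (ε : ℝ), IsTest h → IsTest k → 0 < ε →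
      ‖∫ x : ℝ, cauchy h (x + ε * I) * k x‖ ≤ C * ((∫ x, ‖h x‖ ^ p) + ∫ x, ‖k x‖ ^ q) := by
  obtain ⟨C, hC, hle⟩ := exists_norm_integral_cauchy_mul_le_of_support hpq hp2
  refine ⟨C, hC, fun h k ε hh hk hε => ?_⟩
  have htrunc {s : Set ℝ} (hs : MeasurableSet s) : IsTest (s.indicator h) :=
    hh.mono (hh.stronglyMeasurable.indicator hs) (norm_indicator_le_norm_self h)
  have hbound (n : ℕ) : ‖∫ x : ℝ, cauchy h (x + ε * I) * k x‖ ≤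
      C * ((∫ x, ‖h x‖ ^ p) + ∫ x, ‖k x‖ ^ q) +
        ε⁻¹ * ((∫ x, ‖h x‖) - ∫ x in Set.Icc (-n : ℝ) n, ‖h x‖) * ∫ x, ‖k x‖ := by
    set s := Set.Icc (-n : ℝ) n
    have hs : MeasurableSet s := measurableSet_Icc
    have hsplit : h = fun x => s.indicator h x + sᶜ.indicator h x :=
      (Set.indicator_self_add_compl s h).symm
    have hsupp (x : ℝ) (hx : s.indicator h x ≠ 0) : |x| ≤ n :=
      abs_le.2 (Set.mem_Icc.1 (Set.mem_of_indicator_ne_zero hx))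
    have hcompl : ∫ x, ‖sᶜ.indicator h x‖ = (∫ x, ‖h x‖) - ∫ x in s, ‖h x‖ := by
      simp only [norm_indicator_eq_indicator_norm]
      rw [integral_indicator hs.compl, ← integral_add_compl hs hh.integrable.norm,
        add_sub_cancel_left]
    conv_lhs => rw [hsplit]
    rw [integral_cauchy_add_mul (htrunc hs).integrable (htrunc hs.compl).integrable
      hk.integrable hε]
    refine norm_add_le_of_le ((hle _ k n ε (htrunc hs) hsupp hk hε).trans ?_) ?_
    · gcongr
      · exact (htrunc hs).integrable_norm_rpow hpq.lt.le
      · exact hh.integrable_norm_rpow hpq.lt.le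
      · intro x
        have := hpq.pos
        dsimp only
        gcongr
        exact norm_indicator_le_norm_self h x
    · rw [← hcompl]
      exact norm_integral_cauchy_mul_le (htrunc hs.compl).integrable hk.integrable hε
  have hcover : AECover volume Filter.atTop fun n : ℕ => Set.Icc (-n : ℝ) n :=
    aecover_Icc (Filter.tendsto_neg_atTop_atBot.comp tendsto_natCast_atTop_atTop)
      tendsto_natCast_atTop_atTop
  have hlim := hcover.integral_tendsto_of_countably_generated hh.integrable.norm
  have hlim' := (((hlim.const_sub (∫ x, ‖h x‖)).const_mul ε⁻¹).mul_const
    (∫ x, ‖k x‖)).const_add (C * ((∫ x, ‖h x‖ ^ p) + ∫ x, ‖k x‖ ^ q))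
  rw [sub_self, mul_zero, zero_mul, add_zero] at hlim'
  exact ge_of_tendsto' hlim' hbound

lemma integral_Ioi_cexp_I_mul {w : ℂ} (hw : 0 < w.im) :
    ∫ ξ : ℝ in Set.Ioi 0, cexp (I * w * ξ) = I / w := by
  have hre : (I * w).re < 0 := by simpa using hw
  have hw0 : w ≠ 0 := fun h0 => by simp [h0] at hw
  rw [integral_exp_mul_complex_Ioi hre, div_eq_div_iff (mul_ne_zero I_ne_zero hw0) hw0,
    ofReal_zero, mul_zero, Complex.exp_zero]
  linear_combination -w * I_sq

lemma integrable_mul_cexp_I_mul (hh : Integrable h) (hk : Integrable k) (hε : 0 < ε) :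
    Integrable (fun w : ℝ × ℝ × ℝ =>
        h w.2.1 * k w.2.2 * cexp (I * (w.2.2 + ε * I - w.2.1) * w.1))
      ((volume.restrict (Set.Ioi 0)).prod volume) := by
  have hexp : Integrable (fun ξ : ℝ => (Real.exp (-ε * ξ) : ℂ)) (volume.restrict (Set.Ioi 0)) :=
    (exp_neg_integrableOn_Ioi 0 hε).ofReal
  have hmul := (hexp.mul_prod (hh.mul_prod hk)).mul_bdd (c := 1)
    (g := fun w : ℝ × ℝ × ℝ => cexp ((w.1 * (w.2.2 - w.2.1) : ℝ) * I))
    (Measurable.aestronglyMeasurable (by fun_prop))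
    (Filter.Eventually.of_forall fun w => (norm_exp_ofReal_mul_I _).le)
  refine hmul.congr (Filter.Eventually.of_forall fun w => ?_)
  dsimp only
  rw [mul_right_comm, ofReal_exp, ← Complex.exp_add, mul_comm]
  congr 2
  push_cast
  linear_combination (-(ε : ℂ) * w.1) * I_sq

lemma integral_mul_cexp_I_mul (h k : ℝ → ℂ) (ε ξ : ℝ) :
    ∫ z : ℝ × ℝ, h z.1 * k z.2 * cexp (I * (z.2 + ε * I - z.1) * ξ) =
      (Real.exp (-ε * ξ) : ℂ) * (ft h ξ * ft k (-ξ)) := by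
  rw [ft, ft, ← integral_prod_mul, ← integral_const_mul]
  congr 1 with z
  have hexp : cexp (I * (z.2 + ε * I - z.1) * ξ) = (Real.exp (-ε * ξ) : ℂ) *
      (cexp (-(I * z.1 * ξ)) * cexp (-(I * z.2 * ((-ξ : ℝ) : ℂ)))) := by
    rw [ofReal_exp, ← Complex.exp_add, ← Complex.exp_add]
    congr 1
    push_cast
    linear_combination ((ε : ℂ) * ξ) * I_sq
  rw [hexp]
  ring

lemma integral_cauchy_mul_eq (hh : Integrable h) (hk : Integrable k) (hε : 0 < ε) :
    ∫ x : ℝ, cauchy h (x + ε * I) * k x =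
      ∫ ξ in Set.Ioi (0 : ℝ), (Real.exp (-ε * ξ) : ℂ) * (ft h ξ * ft k (-ξ)) := by
  have hker := integrable_mul_cexp_I_mul hh hk hε
  have hlaplace (z : ℝ × ℝ) :
      ∫ ξ : ℝ in Set.Ioi 0, h z.1 * k z.2 * cexp (I * (z.2 + ε * I - z.1) * ξ) =
        h z.1 * (I / (z.2 + ε * I - z.1)) * k z.2 := by
    have him : 0 < ((z.2 : ℂ) + ε * I - z.1).im := by simpa using hε
    rw [integral_const_mul, integral_Ioi_cexp_I_mul him, mul_right_comm]
  calc ∫ x : ℝ, cauchy h (x + ε * I) * k x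
      = ∫ x : ℝ, ∫ t : ℝ, h t * (I / (x + ε * I - t)) * k x := by
        simp only [cauchy, smul_eq_mul, integral_mul_const]
    _ = ∫ z : ℝ × ℝ, h z.1 * (I / (z.2 + ε * I - z.1)) * k z.2 :=
        (integral_prod_symm (fun z : ℝ × ℝ => h z.1 * (I / (z.2 + ε * I - z.1)) * k z.2)
          (hker.integral_prod_right.congr (Filter.Eventually.of_forall hlaplace))).symm
    _ = ∫ z : ℝ × ℝ, ∫ ξ : ℝ in Set.Ioi 0,
          h z.1 * k z.2 * cexp (I * (z.2 + ε * I - z.1) * ξ) := by simp only [hlaplace]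
    _ = ∫ ξ : ℝ in Set.Ioi 0, ∫ z : ℝ × ℝ,
          h z.1 * k z.2 * cexp (I * (z.2 + ε * I - z.1) * ξ) :=
        (integral_integral_swap hker).symm
    _ = _ := by simp only [integral_mul_cexp_I_mul]

lemma tendsto_integral_Ioi_exp_neg_mul {F : ℝ → ℂ} (hF : IntegrableOn F (Set.Ioi 0)) :
    Filter.Tendsto (fun ε : ℝ => ∫ ξ in Set.Ioi 0, (Real.exp (-ε * ξ) : ℂ) * F ξ)
      (nhdsWithin 0 (Set.Ioi 0)) (nhds (∫ ξ in Set.Ioi 0, F ξ)) := by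
  refine tendsto_integral_filter_of_dominated_convergence (fun ξ => ‖F ξ‖)
    (Filter.Eventually.of_forall fun ε =>
      (Measurable.aestronglyMeasurable (by fun_prop)).mul hF.aestronglyMeasurable)
    ?_ hF.norm (Filter.Eventually.of_forall fun ξ => ?_)
  · filter_upwards [self_mem_nhdsWithin] with ε hε
    filter_upwards [ae_restrict_mem measurableSet_Ioi] with ξ hξ
    rw [norm_mul, Complex.norm_of_nonneg (Real.exp_pos _).le]
    refine mul_le_of_le_one_left (norm_nonneg _) (Real.exp_le_one_iff.2 ?_)
    exact mul_nonpos_of_nonpos_of_nonneg (neg_nonpos.2 (le_of_lt hε)) (le_of_lt hξ)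
  · have hcont : Continuous fun ε : ℝ => (Real.exp (-ε * ξ) : ℂ) * F ξ := by fun_prop
    simpa using (hcont.tendsto 0).mono_left nhdsWithin_le_nhds

lemma exists_norm_integral_Ioi_ft_mul_le_of_le_two (hpq : p.HolderConjugate q) (hp2 : p ≤ 2) :
    ∃ C, 0 ≤ C ∧ ∀ h k : ℝ → ℂ, IsTest h → IsTest k →
      IntegrableOn (fun ξ => ft h ξ * ft k (-ξ)) (Set.Ioi 0) →
      ‖∫ ξ in Set.Ioi (0 : ℝ), ft h ξ * ft k (-ξ)‖ ≤
        C * ((∫ x, ‖h x‖ ^ p) + ∫ x, ‖k x‖ ^ q) := by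
  obtain ⟨C, hC, hle⟩ := exists_norm_integral_cauchy_mul_le hpq hp2
  refine ⟨C, hC, fun h k hh hk hint => ?_⟩
  refine le_of_tendsto (tendsto_integral_Ioi_exp_neg_mul hint).norm ?_
  filter_upwards [self_mem_nhdsWithin] with ε hε
  rw [← integral_cauchy_mul_eq hh.integrable hk.integrable hε]
  exact hle h k ε hh hk hε

lemma exists_norm_integral_Ioi_ft_mul_le (hpq : p.HolderConjugate q) :
    ∃ C, 0 ≤ C ∧ ∀ h k : ℝ → ℂ, IsTest h → IsTest k →
      IntegrableOn (fun ξ => ft h ξ * ft k (-ξ)) (Set.Ioi 0) →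
      ‖∫ ξ in Set.Ioi (0 : ℝ), ft h ξ * ft k (-ξ)‖ ≤
        C * ((∫ x, ‖h x‖ ^ p) + ∫ x, ‖k x‖ ^ q) := by
  rcases le_total p 2 with hp2 | hp2
  · exact exists_norm_integral_Ioi_ft_mul_le_of_le_two hpq hp2
  -- The pairing is symmetric up to `x ↦ -x`, so exchanging `h` and `k` exchanges `p` and `q`.
  have hq2 : q ≤ 2 := by nlinarith [hpq.mul_eq_add, hpq.lt, hpq.symm.lt]
  obtain ⟨C, hC, hle⟩ := exists_norm_integral_Ioi_ft_mul_le_of_le_two hpq.symm hq2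
  refine ⟨C, hC, fun h k hh hk hint => ?_⟩
  have hsymm (ξ : ℝ) :
      ft (fun x => k (-x)) ξ * ft (fun x => h (-x)) (-ξ) = ft h ξ * ft k (-ξ) := by
    rw [ft_comp_neg, ft_comp_neg, neg_neg, mul_comm]
  have hswap := hle _ _ hk.comp_neg hh.comp_neg (by simpa only [hsymm] using hint)
  simp only [hsymm] at hswap
  rwa [integral_neg_eq_self (fun x => ‖k x‖ ^ q), integral_neg_eq_self (fun x => ‖h x‖ ^ p),
    add_comm] at hswap

end RieszProjection

section RandomisedBands

variable {ι : Type*} {p q : ℝ} {f g : ℝ → ℂ}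

lemma IsTest.units_smul (hf : IsTest f) (e : ℤˣ) : IsTest fun x => e • f x := by
  simpa only [Units.smul_def, zsmul_eq_mul] using hf.const_mul ((e : ℤ) : ℂ)

lemma exists_sum_signs_integral_norm_mul_band_rpow_le (hp : 1 < p) :
    ∃ C, 0 ≤ C ∧ ∀ (S : Finset ℤ) (c : S → ℝ → ℂ), (∀ j, Measurable (c j)) →
      (∀ j x, ‖c j x‖ ≤ 1) → ∀ f : ℝ → ℂ, IsTest f →
      ∑ e : S → ℤˣ, ∫ x, ‖∑ j : S, e j • (c j x * band j f x)‖ ^ p ≤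
        C * Fintype.card (S → ℤˣ) * ∫ x, ‖f x‖ ^ p := by
  obtain ⟨C, hC, hband⟩ := exists_integral_norm_sum_band_rpow_le hp
  refine ⟨2 ^ p * C, by positivity, fun S c hmeas hc f hf => ?_⟩
  have hint (e : S → ℤˣ) : Integrable fun x => ‖∑ j : S, e j • (c j x * band j f x)‖ ^ p :=
    (IsTest.sum Finset.univ fun (j : S) _ => ((hf.band j).bdd_mul (hmeas j).stronglyMeasurable
      (hc j)).units_smul _).integrable_norm_rpow hp.le
  have hint' (e : S → ℤˣ) : Integrable fun x => ‖∑ j : S, e j • band j f x‖ ^ p :=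
    (IsTest.sum Finset.univ fun (j : S) _ => (hf.band j).units_smul _).integrable_norm_rpow hp.le
  have hle (e : S → ℤˣ) : ∫ x, ‖∑ j : S, e j • band j f x‖ ^ p ≤ C * ∫ x, ‖f x‖ ^ p := by
    refine le_of_eq_of_le ?_ (hband S
      (fun j => if hj : j ∈ S then ((e ⟨j, hj⟩ : ℤ) : ℂ) else 0) (fun j => ?_) f hf)
    · congr 1 with x
      rw [← Finset.sum_coe_sort S]
      simp [Units.smul_def]
    · split_ifs with hj
      · rcases Int.units_eq_one_or (e ⟨j, hj⟩) with he | he <;> simp [he]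
      · simp
  calc ∑ e : S → ℤˣ, ∫ x, ‖∑ j : S, e j • (c j x * band j f x)‖ ^ p
      = ∫ x, ∑ e : S → ℤˣ, ‖∑ j : S, e j • (c j x * band j f x)‖ ^ p :=
        (integral_finsetSum _ fun e _ => hint e).symm
    _ ≤ ∫ x, 2 ^ p * ∑ e : S → ℤˣ, ‖∑ j : S, e j • band j f x‖ ^ p :=
        integral_mono (integrable_finsetSum _ fun e _ => hint e)
          ((integrable_finsetSum _ fun e _ => hint' e).const_mul _)
          fun x => sum_signs_norm_rpow_le hp.le _ fun j => hc j x
    _ = 2 ^ p * ∑ e : S → ℤˣ, ∫ x, ‖∑ j : S, e j • band j f x‖ ^ p := by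
        rw [integral_const_mul, integral_finsetSum _ fun e _ => hint' e]
    _ ≤ 2 ^ p * ∑ _ : S → ℤˣ, C * ∫ x, ‖f x‖ ^ p := by
        gcongr
        exact hle _
    _ = _ := by
        rw [Finset.sum_const, Finset.card_univ, nsmul_eq_mul]
        ring

lemma ft_sum_units_smul [Fintype ι] {F : ι → ℝ → ℂ} (hF : ∀ i, Integrable (F i)) (e : ι → ℤˣ)
    (ξ : ℝ) : ft (fun x => ∑ i, e i • F i x) ξ = ∑ i, e i • ft (F i) ξ := by
  simp only [Units.smul_def, zsmul_eq_mul]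
  rw [ft_sum _ fun i _ => (hF i).const_mul _]
  simp only [ft_const_mul]

lemma integrable_ft_mul_ft_neg (hf : Integrable (ft f)) (hg : Integrable g) :
    Integrable fun ξ => ft f ξ * ft g (-ξ) :=
  hf.mul_bdd (c := ∫ x, ‖g x‖) ((continuous_ft hg).comp continuous_neg).aestronglyMeasurable
    (Filter.Eventually.of_forall fun _ => norm_ft_le _ _)

lemma exists_card_mul_norm_sum_integral_Ioi_ft_mul_le (hpq : p.HolderConjugate q) :
    ∃ C, 0 ≤ C ∧ ∀ (S : Finset ℤ) (F G : S → ℝ → ℂ), (∀ j, IsTest (F j)) →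
      (∀ j, IsTest (G j)) → (∀ j, Integrable (ft (F j))) →
      Fintype.card (S → ℤˣ) * ‖∑ j, ∫ ξ in Set.Ioi (0 : ℝ), ft (F j) ξ * ft (G j) (-ξ)‖ ≤
        C * ((∑ e : S → ℤˣ, ∫ x, ‖∑ j, e j • F j x‖ ^ p) +
          ∑ e : S → ℤˣ, ∫ x, ‖∑ j, e j • G j x‖ ^ q) := by
  obtain ⟨C, hC, hriesz⟩ := exists_norm_integral_Ioi_ft_mul_le hpq
  refine ⟨C, hC, fun S F G hF hG hftF => ?_⟩
  have hsumF (e : S → ℤˣ) : IsTest fun x => ∑ j, e j • F j x :=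
    IsTest.sum _ fun j _ => (hF j).units_smul _
  have hsumG (e : S → ℤˣ) : IsTest fun x => ∑ j, e j • G j x :=
    IsTest.sum _ fun j _ => (hG j).units_smul _
  have hftsumF (e : S → ℤˣ) : Integrable (ft fun x => ∑ j, e j • F j x) := by
    rw [funext (ft_sum_units_smul (fun j => (hF j).integrable) e)]
    simp only [Units.smul_def, zsmul_eq_mul]
    exact integrable_finsetSum _ fun j _ => (hftF j).const_mul _
  have hint (e : S → ℤˣ) : IntegrableOn (fun ξ => ft (fun x => ∑ j, e j • F j x) ξ *
      ft (fun x => ∑ j, e j • G j x) (-ξ)) (Set.Ioi 0) :=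
    (integrable_ft_mul_ft_neg (hftsumF e) (hsumG e).integrable).integrableOn
  have hdecouple :
      Fintype.card (S → ℤˣ) * ∑ j, ∫ ξ in Set.Ioi (0 : ℝ), ft (F j) ξ * ft (G j) (-ξ) =
      ∑ e : S → ℤˣ, ∫ ξ in Set.Ioi (0 : ℝ), ft (fun x => ∑ j, e j • F j x) ξ *
        ft (fun x => ∑ j, e j • G j x) (-ξ) := by
    rw [← integral_finsetSum _ fun e _ => hint e, ← integral_finsetSum _ fun j _ =>
      (integrable_ft_mul_ft_neg (hftF j) (hG j).integrable).integrableOn, ← integral_const_mul]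
    simp only [ft_sum_units_smul fun j => (hF j).integrable,
      ft_sum_units_smul fun j => (hG j).integrable, sum_sum_units_smul_mul_sum_units_smul]
  rw [← Complex.norm_natCast, ← norm_mul, hdecouple, ← Finset.sum_add_distrib, Finset.mul_sum]
  exact (norm_sum_le _ _).trans
    (Finset.sum_le_sum fun e _ => hriesz _ _ (hsumF e) (hsumG e) (hint e))

lemma continuous_profile : Continuous profile := by
  unfold profile
  fun_prop

lemma abs_profile_le_one (s : ℝ) : |profile s| ≤ 1 := by
  have hexp (r : ℝ) (hr : 0 ≤ r) : Real.exp (-r) ≤ 1 := Real.exp_le_one_iff.2 (neg_nonpos.2 hr)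
  exact abs_sub_le_of_nonneg_of_le (Real.exp_pos _).le (hexp _ (by positivity))
    (Real.exp_pos _).le (hexp _ (by positivity))

lemma profile_neg (s : ℝ) : profile (-s) = profile s := by simp only [profile, neg_sq]

lemma profile_pos {s : ℝ} (hs : s ≠ 0) : 0 < profile s := by
  have : 0 < s ^ 2 := by positivity
  exact sub_pos.2 (Real.exp_lt_exp.2 (by linarith))

lemma integrable_ft_band (hf : IsTest f) (hft : Integrable (ft f)) (j : ℤ) :
    Integrable (ft (band j f)) := by
  simp only [funext (ft_band j hf)]
  refine hft.bdd_mul (c := 1) ?_ (Filter.Eventually.of_forall fun ξ => ?_)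
  · exact (continuous_ofReal.comp
      (continuous_profile.comp (continuous_id.div_const _))).aestronglyMeasurable
  · rw [norm_real]
    exact abs_profile_le_one _

lemma setIntegral_Ioi_add_right {E : Type*} [NormedAddCommGroup E] [NormedSpace ℝ E] (F : ℝ → E)
    (α : ℝ) : ∫ ξ in Set.Ioi 0, F (ξ + α) = ∫ ξ in Set.Ioi α, F ξ := by
  simpa using (measurePreserving_add_right volume α).setIntegral_preimage_emb
    (measurableEmbedding_addRight α) F (Set.Ioi α)

lemma setIntegral_Ioi_ft_modulate_mul (f g : ℝ → ℂ) (a : ℂ) (α : ℝ) :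
    ∫ ξ in Set.Ioi (0 : ℝ), ft (fun x => a * cexp (-(I * x * α)) * f x) ξ *
        ft (fun x => cexp (-(I * x * (-α : ℝ))) * g x) (-ξ) =
      a * ∫ ξ in Set.Ioi α, ft f ξ * ft g (-ξ) := by
  rw [← setIntegral_Ioi_add_right _ α, ← integral_const_mul]
  simp only [mul_assoc (a := a), ft_const_mul, ft_modulate, neg_add]

lemma exists_norm_sum_integral_Ioi_band_le (hpq : p.HolderConjugate q) :
    ∃ C, 0 ≤ C ∧ ∀ (S : Finset ℤ) (a : ℤ → ℂ) (α : ℤ → ℝ), (∀ j, ‖a j‖ ≤ 1) →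
      ∀ f g : ℝ → ℂ, IsTest f → IsTest g → Integrable (ft f) →
      ‖∑ j ∈ S, a j * ∫ ξ in Set.Ioi (α j), ft (band j f) ξ * ft (band j g) (-ξ)‖ ≤
        C * ((∫ x, ‖f x‖ ^ p) + ∫ x, ‖g x‖ ^ q) := by
  obtain ⟨C, hC, hdecouple⟩ := exists_card_mul_norm_sum_integral_Ioi_ft_mul_le hpq
  obtain ⟨C₁, hC₁, hbandf⟩ := exists_sum_signs_integral_norm_mul_band_rpow_le hpq.lt
  obtain ⟨C₂, hC₂, hbandg⟩ := exists_sum_signs_integral_norm_mul_band_rpow_le hpq.symm.lt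
  refine ⟨C * (C₁ + C₂), by positivity, fun S a α ha f g hf hg hft => ?_⟩
  let c : S → ℝ → ℂ := fun j x => a j * cexp (-(I * x * α j))
  let d : S → ℝ → ℂ := fun j x => cexp (-(I * x * (-α j : ℝ)))
  have hcm (j : S) : Measurable (c j) := by fun_prop
  have hdm (j : S) : Measurable (d j) := by fun_prop
  have hc (j : S) (x : ℝ) : ‖c j x‖ ≤ 1 := by
    simpa only [c, norm_mul, norm_exp_neg_I_mul, mul_one] using ha j
  have hd (j : S) (x : ℝ) : ‖d j x‖ ≤ 1 := (norm_exp_neg_I_mul _ _).le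
  have hftF (j : S) : Integrable (ft fun x => c j x * band j f x) := by
    simp only [c, mul_assoc (a j), funext (ft_const_mul (a j) _), ft_modulate]
    exact ((integrable_ft_band hf hft j).comp_add_right (α j)).const_mul _
  have hmain := hdecouple S (fun j x => c j x * band j f x) (fun j x => d j x * band j g x)
    (fun j => (hf.band j).bdd_mul (hcm j).stronglyMeasurable (hc j))
    (fun j => (hg.band j).bdd_mul (hdm j).stronglyMeasurable (hd j)) hftF
  simp only [c, d, setIntegral_Ioi_ft_modulate_mul] at hmain
  rw [Finset.sum_coe_sort S
    (fun j => a j * ∫ ξ in Set.Ioi (α j), ft (band j f) ξ * ft (band j g) (-ξ))] at hmain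
  have hcard : (0 : ℝ) < Fintype.card (S → ℤˣ) := by exact_mod_cast Fintype.card_pos
  have hfp : 0 ≤ ∫ x, ‖f x‖ ^ p := by positivity
  have hgq : 0 ≤ ∫ x, ‖g x‖ ^ q := by positivity
  refine le_of_mul_le_mul_left (hmain.trans ?_) hcard
  calc C * ((∑ e : S → ℤˣ, ∫ x, ‖∑ j, e j • (c j x * band j f x)‖ ^ p) +
        ∑ e : S → ℤˣ, ∫ x, ‖∑ j, e j • (d j x * band j g x)‖ ^ q)
      ≤ C * (C₁ * Fintype.card (S → ℤˣ) * (∫ x, ‖f x‖ ^ p) +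
          C₂ * Fintype.card (S → ℤˣ) * ∫ x, ‖g x‖ ^ q) := by
        gcongr
        · exact hbandf S c hcm hc f hf
        · exact hbandg S d hdm hd g hg
    _ ≤ C * (C₁ * Fintype.card (S → ℤˣ) * ((∫ x, ‖f x‖ ^ p) + ∫ x, ‖g x‖ ^ q) +
          C₂ * Fintype.card (S → ℤˣ) * ((∫ x, ‖f x‖ ^ p) + ∫ x, ‖g x‖ ^ q)) := by
        gcongr <;> linarith
    _ = _ := by ring

end RandomisedBands

section LacunaryBlocks

variable {p q : ℝ} {f g : ℝ → ℂ}

lemma contDiffOn_inv_profile_sq : ContDiffOn ℝ 1 (fun s => (profile s ^ 2)⁻¹) {0}ᶜ := by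
  have hsmooth : ContDiff ℝ 1 fun s => profile s ^ 2 := by
    unfold profile
    fun_prop
  exact hsmooth.contDiffOn.inv fun s hs => pow_ne_zero 2 (profile_pos hs).ne'

lemma norm_intervalIntegral_mul_deriv_le {a b W : ℝ} {U : Set ℝ} {β : ℝ → ℝ} {Γ Γ' : ℝ → ℂ}
    (hab : a ≤ b) (hU : IsOpen U) (hsub : Set.Icc a b ⊆ U) (hβ : ContDiffOn ℝ 1 β U)
    (hΓ : ∀ s ∈ Set.Icc a b, HasDerivAt Γ (Γ' s) s) (hΓ' : ContinuousOn Γ' (Set.Icc a b))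
    (hW : ∀ s ∈ Set.Icc a b, ‖Γ s‖ ≤ W) :
    ‖∫ s in a..b, (β s : ℂ) * Γ' s‖ ≤ (|β b| + |β a| + ∫ s in a..b, |deriv β s|) * W := by
  have hderiv (s : ℝ) (hs : s ∈ Set.uIcc a b) : HasDerivAt β (deriv β s) s :=
    ((hβ.differentiableOn one_ne_zero).differentiableAt
      (hU.mem_nhds (hsub (by rwa [Set.uIcc_of_le hab] at hs)))).hasDerivAt
  have hcont : ContinuousOn (deriv β) (Set.uIcc a b) := by
    rw [Set.uIcc_of_le hab]
    exact (hβ.continuousOn_deriv_of_isOpen hU le_rfl).mono hsub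
  rw [← Set.uIcc_of_le hab] at hΓ hΓ'
  have hparts := intervalIntegral.integral_mul_deriv_eq_deriv_mul
    (fun s hs => (hderiv s hs).ofReal_comp) hΓ
    (continuous_ofReal.comp_continuousOn hcont).intervalIntegrable hΓ'.intervalIntegrable
  have hmul (r : ℝ) {s : ℝ} (hs : s ∈ Set.Icc a b) : ‖(r : ℂ) * Γ s‖ ≤ |r| * W := by
    rw [norm_mul, norm_real, Real.norm_eq_abs]
    gcongr
    exact hW s hs
  have hint : ‖∫ s in a..b, ((deriv β s : ℝ) : ℂ) * Γ s‖ ≤ ∫ s in a..b, |deriv β s| * W :=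
    intervalIntegral.norm_integral_le_of_norm_le hab
      (Filter.Eventually.of_forall fun s hs => hmul _ (Set.Ioc_subset_Icc_self hs))
      (hcont.abs.mul continuousOn_const).intervalIntegrable
  rw [intervalIntegral.integral_mul_const] at hint
  rw [hparts, add_mul, add_mul]
  exact norm_sub_le_of_le (norm_sub_le_of_le (hmul _ (Set.right_mem_Icc.2 hab))
    (hmul _ (Set.left_mem_Icc.2 hab))) hint

lemma hasDerivAt_integral_Ioi_mul {H : ℝ → ℂ} (hH : Integrable H) (hc : Continuous H) (r s : ℝ) :
    HasDerivAt (fun s => ∫ ξ in Set.Ioi (r * s), H ξ) (-(r * H (r * s))) s := by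
  have hsplit (t : ℝ) :
      ∫ ξ in Set.Ioi t, H ξ = (∫ ξ in Set.Ioi 0, H ξ) - ∫ ξ in (0 : ℝ)..t, H ξ := by
    rw [← intervalIntegral.integral_Ioi_sub_Ioi' hH.integrableOn hH.integrableOn, sub_sub_cancel]
  have htail : HasDerivAt (fun t => ∫ ξ in Set.Ioi t, H ξ) (-H (r * s)) (r * s) := by
    rw [funext hsplit]
    exact (hc.integral_hasStrictDerivAt 0 (r * s)).hasDerivAt.const_sub _
  simpa [Function.comp_def] using htail.scomp s ((hasDerivAt_id s).const_mul r)

lemma intervalIntegral_two_zpow_ft_mul_ft (hf : IsTest f) (hg : IsTest g) (j : ℤ) :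
    ∫ ξ in (2 : ℝ) ^ j..2 ^ (j + 1), ft f ξ * ft g (-ξ) =
      ∫ s in (1 : ℝ)..2, ((profile s ^ 2)⁻¹ : ℝ) *
        (((2 : ℝ) ^ j : ℝ) * (ft (band j f) (2 ^ j * s) * ft (band j g) (-(2 ^ j * s)))) := by
  have hdilate := intervalIntegral.smul_integral_comp_mul_left (a := 1) (b := 2)
    (fun ξ => ft f ξ * ft g (-ξ)) ((2 : ℝ) ^ j)
  rw [mul_one, ← zpow_add_one₀ two_ne_zero] at hdilate
  rw [← hdilate, ← intervalIntegral.integral_smul]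
  refine intervalIntegral.integral_congr fun s hs => ?_
  rw [Set.uIcc_of_le one_le_two] at hs
  have hprofile : (profile s : ℂ) ≠ 0 :=
    ofReal_ne_zero.2 (profile_pos (by linarith [hs.1])).ne'
  rw [ft_band j hf, ft_band j hg, neg_div, profile_neg, mul_div_cancel_left₀ _ (by positivity),
    real_smul, ofReal_inv, ofReal_pow]
  field_simp

lemma exists_norm_sum_integral_two_zpow_le (hpq : p.HolderConjugate q) :
    ∃ C, 0 ≤ C ∧ ∀ (S : Finset ℤ) (a : ℤ → ℂ), (∀ j, ‖a j‖ ≤ 1) →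
      ∀ f g : ℝ → ℂ, IsTest f → IsTest g → Integrable (ft f) →
      ‖∑ j ∈ S, a j * ∫ ξ in (2 : ℝ) ^ j..2 ^ (j + 1), ft f ξ * ft g (-ξ)‖ ≤
        C * ((∫ x, ‖f x‖ ^ p) + ∫ x, ‖g x‖ ^ q) := by
  obtain ⟨C, hC, hcutoff⟩ := exists_norm_sum_integral_Ioi_band_le hpq
  let β : ℝ → ℝ := fun s => (profile s ^ 2)⁻¹
  have hsub : Set.Icc (1 : ℝ) 2 ⊆ {0}ᶜ := fun s hs => (one_pos.trans_le hs.1).ne'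
  have : 0 ≤ ∫ s in (1 : ℝ)..2, |deriv β s| :=
    intervalIntegral.integral_nonneg one_le_two fun s _ => abs_nonneg _
  refine ⟨(|β 2| + |β 1| + ∫ s in (1 : ℝ)..2, |deriv β s|) * C, by positivity,
    fun S a ha f g hf hg hft => ?_⟩
  let H : ℤ → ℝ → ℂ := fun j ξ => ft (band j f) ξ * ft (band j g) (-ξ)
  let Γ : ℝ → ℂ := fun s => ∑ j ∈ S, a j * ∫ ξ in Set.Ioi ((2 : ℝ) ^ j * s), H j ξ
  let Γ' : ℝ → ℂ := fun s => ∑ j ∈ S, a j * -(((2 : ℝ) ^ j : ℝ) * H j (2 ^ j * s))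
  have hHcont (j : ℤ) : Continuous (H j) := (continuous_ft (hf.band j).integrable).mul
    ((continuous_ft (hg.band j).integrable).comp continuous_neg)
  have hHint (j : ℤ) : Integrable (H j) :=
    integrable_ft_mul_ft_neg (integrable_ft_band hf hft j) (hg.band j).integrable
  have hΓ (s : ℝ) : HasDerivAt Γ (Γ' s) s :=
    HasDerivAt.fun_sum fun j _ =>
      (hasDerivAt_integral_Ioi_mul (hHint j) (hHcont j) _ s).const_mul _
  have hΓ' : Continuous Γ' := continuous_finsetSum _ fun j _ => continuous_const.mul
    (continuous_const.mul ((hHcont j).comp (continuous_const_mul _))).neg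
  have hsum : ∑ j ∈ S, a j * ∫ ξ in (2 : ℝ) ^ j..2 ^ (j + 1), ft f ξ * ft g (-ξ) =
      -∫ s in (1 : ℝ)..2, (β s : ℂ) * Γ' s := by
    have hβcont : ContinuousOn (fun s => (β s : ℂ)) (Set.uIcc 1 2) := by
      rw [Set.uIcc_of_le one_le_two]
      exact continuous_ofReal.comp_continuousOn (contDiffOn_inv_profile_sq.continuousOn.mono hsub)
    simp only [intervalIntegral_two_zpow_ft_mul_ft hf hg, ← intervalIntegral.integral_const_mul]
    rw [← intervalIntegral.integral_finsetSum, ← intervalIntegral.integral_neg]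
    · congr 1 with s
      simp only [Γ', H, β, Finset.mul_sum, ← Finset.sum_neg_distrib]
      exact Finset.sum_congr rfl fun j _ => by ring
    · exact fun j _ => ContinuousOn.intervalIntegrable
        (continuousOn_const.mul (hβcont.mul (continuous_const.mul
          ((hHcont j).comp (continuous_const_mul _))).continuousOn))
  rw [hsum, norm_neg, mul_assoc]
  exact norm_intervalIntegral_mul_deriv_le one_le_two isOpen_compl_singleton hsub
    contDiffOn_inv_profile_sq (fun s _ => hΓ s) hΓ'.continuousOn fun s _ =>
    hcutoff S a (fun j => 2 ^ j * s) ha f g hf hg hft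

lemma iUnion_Ico_two_zpow : ⋃ j : ℤ, Set.Ico ((2 : ℝ) ^ j) (2 ^ (j + 1)) = Set.Ioi 0 := by
  ext ξ
  simp only [Set.mem_iUnion, Set.mem_Ioi]
  exact ⟨fun ⟨j, hj⟩ => (zpow_pos two_pos j).trans_le hj.1,
    fun hξ => exists_mem_Ico_zpow hξ one_lt_two⟩

lemma pairwise_disjoint_Ico_two_zpow :
    Pairwise (Function.onFun Disjoint fun j : ℤ => Set.Ico ((2 : ℝ) ^ j) (2 ^ (j + 1))) :=
  Monotone.pairwise_disjoint_on_Ico_succ (zpow_right_mono₀ (one_le_two : (1 : ℝ) ≤ 2))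

lemma exists_norm_integral_Ioi_step_le (hpq : p.HolderConjugate q) :
    ∃ C, 0 ≤ C ∧ ∀ (m : ℝ → ℂ) (a : ℤ → ℂ), (∀ j, ‖a j‖ ≤ 1) →
      (∀ j : ℤ, ∀ ξ ∈ Set.Ico ((2 : ℝ) ^ j) (2 ^ (j + 1)), m ξ = a j) →
      ∀ f g : ℝ → ℂ, IsTest f → IsTest g → Integrable (ft f) →
      ‖∫ ξ in Set.Ioi (0 : ℝ), m ξ * (ft f ξ * ft g (-ξ))‖ ≤
        C * ((∫ x, ‖f x‖ ^ p) + ∫ x, ‖g x‖ ^ q) := by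
  obtain ⟨C, hC, hblocks⟩ := exists_norm_sum_integral_two_zpow_le hpq
  refine ⟨C, hC, fun m a ha hma f g hf hg hft => ?_⟩
  have hm : AEStronglyMeasurable m (volume.restrict (Set.Ioi 0)) := by
    rw [← iUnion_Ico_two_zpow, aestronglyMeasurable_iUnion_iff]
    exact fun j => aestronglyMeasurable_const.congr
      (ae_restrict_of_forall_mem measurableSet_Ico fun ξ hξ => (hma j ξ hξ).symm)
  have hint : IntegrableOn (fun ξ => m ξ * (ft f ξ * ft g (-ξ))) (Set.Ioi 0) := by
    refine (integrable_ft_mul_ft_neg hft hg.integrable).integrableOn.bdd_mul (c := 1)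
      hm ?_
    filter_upwards [ae_restrict_mem measurableSet_Ioi] with ξ hξ
    obtain ⟨j, hj⟩ := exists_mem_Ico_zpow (Set.mem_Ioi.1 hξ) one_lt_two
    rw [hma j ξ hj]
    exact ha j
  have hblock (j : ℤ) :
      ∫ ξ in Set.Ico ((2 : ℝ) ^ j) (2 ^ (j + 1)), m ξ * (ft f ξ * ft g (-ξ)) =
        a j * ∫ ξ in (2 : ℝ) ^ j..2 ^ (j + 1), ft f ξ * ft g (-ξ) := by
    rw [intervalIntegral.integral_of_le (zpow_le_zpow_right₀ one_le_two (by lia)),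
      integral_Ioc_eq_integral_Ioo, ← integral_Ico_eq_integral_Ioo, ← integral_const_mul]
    exact setIntegral_congr_fun measurableSet_Ico fun ξ hξ => by simp only [hma j ξ hξ]
  have hsum := hasSum_integral_iUnion (μ := volume)
    (fun j : ℤ => measurableSet_Ico (a := (2 : ℝ) ^ j) (b := 2 ^ (j + 1)))
    pairwise_disjoint_Ico_two_zpow (by rwa [iUnion_Ico_two_zpow])
  simp only [iUnion_Ico_two_zpow, hblock] at hsum
  exact le_of_tendsto hsum.norm
    (Filter.Eventually.of_forall fun S => hblocks S a ha f g hf hg hft)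

end LacunaryBlocks

section Multiplier

variable {p q A : ℝ} {m f g : ℝ → ℂ} {a : ℤ × Bool → ℂ}

lemma isTest_schwartz (f : SchwartzMap ℝ ℂ) : IsTest f :=
  ⟨f.continuous.stronglyMeasurable, f.integrable, _, fun x => f.norm_le_seminorm ℝ x⟩

lemma integrable_ft_schwartz (f : SchwartzMap ℝ ℂ) : Integrable (ft f) := by
  have hft : ft f = fun ξ => FourierTransform.fourier f (ξ / (2 * Real.pi)) := by
    ext ξ
    rw [SchwartzMap.fourier_coe, Real.fourier_real_eq_integral_exp_smul, ft]
    congr 1 with x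
    rw [smul_eq_mul, mul_comm]
    congr 2
    push_cast
    field_simp
  rw [hft]
  exact (SchwartzMap.integrable _).comp_div (by positivity)

lemma mem_lacI_true {k : ℤ} {ξ : ℝ} : ξ ∈ lacI k true ↔ ξ ∈ Set.Ico ((2 : ℝ) ^ k) (2 ^ (k + 1)) :=
  Iff.rfl

lemma mem_lacI_false {k : ℤ} {ξ : ℝ} :
    ξ ∈ lacI k false ↔ -ξ ∈ Set.Ico ((2 : ℝ) ^ k) (2 ^ (k + 1)) :=
  ⟨fun hξ => ⟨le_neg.1 hξ.2, neg_lt.1 hξ.1⟩, fun hξ => ⟨neg_lt.1 hξ.2, le_neg.1 hξ.1⟩⟩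

lemma measurableSet_lacI : ∀ (k : ℤ) (ε : Bool), MeasurableSet (lacI k ε)
  | _, true => measurableSet_Ico
  | _, false => measurableSet_Ioc

lemma exists_mem_lacI {ξ : ℝ} (hξ : ξ ≠ 0) : ∃ w : ℤ × Bool, ξ ∈ lacI w.1 w.2 := by
  rcases hξ.lt_or_gt with hneg | hpos
  · obtain ⟨k, hk⟩ := exists_mem_Ico_zpow (neg_pos.2 hneg) one_lt_two
    exact ⟨(k, false), mem_lacI_false.2 hk⟩
  · obtain ⟨k, hk⟩ := exists_mem_Ico_zpow hpos one_lt_two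
    exact ⟨(k, true), mem_lacI_true.2 hk⟩

lemma ae_exists_mem_lacI : ∀ᵐ ξ : ℝ, ∃ w : ℤ × Bool, ξ ∈ lacI w.1 w.2 :=
  (Measure.ae_ne volume 0).mono fun _ hξ => exists_mem_lacI hξ

lemma ae_norm_le_of_eq_on_lacI (ha : ∀ w, ‖a w‖ ≤ A)
    (hma : ∀ (k : ℤ) (ε : Bool), ∀ ξ ∈ lacI k ε, m ξ = a (k, ε)) : ∀ᵐ ξ, ‖m ξ‖ ≤ A := by
  filter_upwards [ae_exists_mem_lacI] with ξ ⟨w, hw⟩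
  exact (hma _ _ ξ hw).symm ▸ ha w

lemma aestronglyMeasurable_of_eq_on_lacI
    (hma : ∀ (k : ℤ) (ε : Bool), ∀ ξ ∈ lacI k ε, m ξ = a (k, ε)) :
    AEStronglyMeasurable m := by
  have hcover : (⋃ w : ℤ × Bool, lacI w.1 w.2) =ᵐ[volume] Set.univ :=
    Filter.eventuallyEq_univ.2 
      (ae_exists_mem_lacI.mono fun _ hξ => Set.mem_iUnion.2 hξ)
  rw [← Measure.restrict_univ (μ := volume), ← Measure.restrict_congr_set hcover,
    aestronglyMeasurable_iUnion_iff]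
  exact fun w => aestronglyMeasurable_const.congr
    (ae_restrict_of_forall_mem (measurableSet_lacI _ _) fun ξ hξ => (hma _ _ ξ hξ).symm)

lemma norm_exp_I_mul (ξ x : ℝ) : ‖cexp (I * ξ * x)‖ = 1 := by
  rw [mul_assoc, mul_comm, ← ofReal_mul, norm_exp_ofReal_mul_I]

lemma continuous_multOp (hmf : Integrable fun ξ => m ξ * ft f ξ) : Continuous (multOp m f) := by
  refine continuous_of_dominated (fun x => ?_)
    (fun x => Filter.Eventually.of_forall fun ξ => ?_) hmf.norm
    (Filter.Eventually.of_forall fun ξ => by fun_prop)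
  · exact hmf.aestronglyMeasurable.mul (by fun_prop)
  · rw [norm_mul, norm_exp_I_mul, mul_one]

lemma norm_multOp_le (m f : ℝ → ℂ) (x : ℝ) : ‖multOp m f x‖ ≤ ∫ ξ, ‖m ξ * ft f ξ‖ := by
  refine (norm_integral_le_integral_norm _).trans_eq ?_
  congr 1 with ξ
  rw [norm_mul, norm_exp_I_mul, mul_one]

lemma multOp_congr_ae {m m' : ℝ → ℂ} (hm : m =ᵐ[volume] m') (f : ℝ → ℂ) :
    multOp m f = multOp m' f := by
  ext x
  refine integral_congr_ae ?_
  filter_upwards [hm] with ξ hξ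
  rw [hξ]

lemma multOp_const_mul (c : ℂ) (m f : ℝ → ℂ) : multOp (fun ξ => c * m ξ) f = c • multOp m f := by
  ext x
  simp only [multOp, Pi.smul_apply, smul_eq_mul, mul_assoc, integral_const_mul]

lemma integral_multOp_mul (hmf : Integrable fun ξ => m ξ * ft f ξ) (hg : Integrable g) :
    ∫ x, multOp m f x * g x = ∫ ξ, m ξ * (ft f ξ * ft g (-ξ)) := by
  have hint : Integrable (Function.uncurry fun x ξ : ℝ => m ξ * ft f ξ * cexp (I * ξ * x) * g x)
      (volume.prod volume) := by
    refine ((hg.mul_prod hmf).mul_bdd (c := 1) (g := fun z : ℝ × ℝ => cexp (I * z.2 * z.1))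
      (by fun_prop) (Filter.Eventually.of_forall fun z => (norm_exp_I_mul _ _).le)).congr
      (Filter.Eventually.of_forall fun z => ?_)
    simp only [Function.uncurry]
    ring
  calc ∫ x, multOp m f x * g x
      = ∫ x : ℝ, ∫ ξ : ℝ, m ξ * ft f ξ * cexp (I * ξ * x) * g x := by
        simp only [multOp, integral_mul_const]
    _ = ∫ ξ : ℝ, ∫ x : ℝ, m ξ * ft f ξ * cexp (I * ξ * x) * g x := integral_integral_swap hint
    _ = ∫ ξ : ℝ, m ξ * (ft f ξ * ft g (-ξ)) := by
        congr 1 with ξ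
        rw [← mul_assoc, ft.eq_1 g, ← integral_const_mul]
        congr 1 with x
        have hphase : -(I * (x : ℂ) * ((-ξ : ℝ) : ℂ)) = I * ξ * x := by
          push_cast
          ring
        rw [hphase]
        ring

lemma exists_norm_integral_step_le (hpq : p.HolderConjugate q) :
    ∃ C, 0 ≤ C ∧ ∀ (m : ℝ → ℂ) (a : ℤ × Bool → ℂ), (∀ w, ‖a w‖ ≤ 1) →
      (∀ (k : ℤ) (ε : Bool), ∀ ξ ∈ lacI k ε, m ξ = a (k, ε)) →
      ∀ f g : ℝ → ℂ, IsTest f → IsTest g → Integrable (ft f) →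
      ‖∫ ξ, m ξ * (ft f ξ * ft g (-ξ))‖ ≤ C * ((∫ x, ‖f x‖ ^ p) + ∫ x, ‖g x‖ ^ q) := by
  obtain ⟨C, hC, hhalf⟩ := exists_norm_integral_Ioi_step_le hpq
  refine ⟨2 * C, by positivity, fun m a ha hma f g hf hg hft => ?_⟩
  have hint : Integrable fun ξ => m ξ * (ft f ξ * ft g (-ξ)) :=
    (integrable_ft_mul_ft_neg hft hg.integrable).bdd_mul (aestronglyMeasurable_of_eq_on_lacI hma)
      (ae_norm_le_of_eq_on_lacI ha hma)
  have hpos := hhalf m (fun k => a (k, true)) (fun k => ha _)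
    (fun k ξ hξ => hma k true ξ (mem_lacI_true.2 hξ)) f g hf hg hft
  have hft_reflect : Integrable (ft fun x => f (-x)) := by
    rw [funext (ft_comp_neg f)]
    exact hft.comp_neg
  have hneg := hhalf (fun ξ => m (-ξ)) (fun k => a (k, false)) (fun k => ha _)
    (fun k ξ hξ => hma k false (-ξ) (mem_lacI_false.2 (by rwa [neg_neg]))) _ _ hf.comp_neg
    hg.comp_neg hft_reflect
  simp only [ft_comp_neg] at hneg
  rw [integral_neg_eq_self (fun x => ‖f x‖ ^ p), integral_neg_eq_self (fun x => ‖g x‖ ^ q),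
    integral_comp_neg_Ioi (0 : ℝ) (fun ξ => m ξ * (ft f ξ * ft g (-ξ))), neg_zero] at hneg
  rw [← integral_add_compl (measurableSet_Ioi (a := (0 : ℝ))) hint, Set.compl_Ioi]
  refine (norm_add_le _ _).trans ?_
  linarith

lemma eLpNorm_eq_ofReal_integral_norm_rpow {α E : Type*} [MeasurableSpace α] {μ : Measure α}
    [NormedAddCommGroup E] {u : α → E} (hp : 0 < p) (hu : AEStronglyMeasurable u μ)
    (hint : Integrable (fun x => ‖u x‖ ^ p) μ) :
    eLpNorm u (ENNReal.ofReal p) μ = ENNReal.ofReal ((∫ x, ‖u x‖ ^ p ∂μ) ^ p⁻¹) := by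
  have hp0 : ENNReal.ofReal p ≠ 0 := (ENNReal.ofReal_pos.2 hp).ne'
  have htoReal : (ENNReal.ofReal p).toReal = p := ENNReal.toReal_ofReal hp.le
  have hLp : MemLp u (ENNReal.ofReal p) μ := by
    rwa [← integrable_norm_rpow_iff hu hp0 ENNReal.ofReal_ne_top, htoReal]
  rw [hLp.eLpNorm_eq_integral_rpow_norm hp0 ENNReal.ofReal_ne_top, htoReal]

lemma exists_eLpNorm_multOp_le_of_norm_le_one (hp : 1 < p) :
    ∃ C, 0 < C ∧ ∀ (m : ℝ → ℂ) (a : ℤ × Bool → ℂ), (∀ w, ‖a w‖ ≤ 1) →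
      (∀ (k : ℤ) (ε : Bool), ∀ ξ ∈ lacI k ε, m ξ = a (k, ε)) →
      ∀ f : ℝ → ℂ, IsTest f → Integrable (ft f) →
        eLpNorm (multOp m f) (ENNReal.ofReal p) volume ≤
          ENNReal.ofReal C * eLpNorm f (ENNReal.ofReal p) volume := by
  have hpq := Real.HolderConjugate.conjExponent hp
  obtain ⟨C, hC, hpairing⟩ := exists_norm_integral_step_le hpq
  obtain ⟨K, hK, hdual⟩ := exists_integral_norm_rpow_le_of_pairing_le (α := ℝ) hpq hC
  refine ⟨(K * C + 1) ^ p⁻¹, by positivity, fun m a ha hma f hf hft => ?_⟩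
  have hmf : Integrable fun ξ => m ξ * ft f ξ :=
    hft.bdd_mul (aestronglyMeasurable_of_eq_on_lacI hma) (ae_norm_le_of_eq_on_lacI ha hma)
  have hmeas : StronglyMeasurable (multOp m f) := (continuous_multOp hmf).stronglyMeasurable
  obtain ⟨hint, hle⟩ := hdual (C * ∫ x, ‖f x‖ ^ p) (multOp m f) hmeas ⟨_, norm_multOp_le m f⟩
    fun g hg => by
      rw [integral_multOp_mul hmf hg.integrable, ← mul_add]
      exact hpairing m a ha hma f g hf hg hft
  have hfp : 0 ≤ ∫ x, ‖f x‖ ^ p := by positivity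
  have : 0 ≤ ∫ x, ‖multOp m f x‖ ^ p := by positivity
  rw [eLpNorm_eq_ofReal_integral_norm_rpow hpq.pos hmeas.aestronglyMeasurable hint,
    eLpNorm_eq_ofReal_integral_norm_rpow hpq.pos hf.stronglyMeasurable.aestronglyMeasurable
      (hf.integrable_norm_rpow hp.le), ← ENNReal.ofReal_mul (by positivity),
    ← Real.mul_rpow (by positivity) hfp]
  gcongr
  linarith

end Multiplier

end LacunaryMultiplier

open LacunaryMultiplier in
theorem lacunary_step_multiplier_general {p : ℝ} (hp : 1 < p) :
    ∃ C : ℝ, 0 < C ∧ ∀ (m : ℝ → ℂ) (a : ℤ × Bool → ℂ) (A : ℝ), (∀ w, ‖a w‖ ≤ A) →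
      (∀ (k : ℤ) (ε : Bool), ∀ ξ ∈ lacI k ε, m ξ = a (k, ε)) →
      ∀ f : ℝ → ℂ, IsTest f → Integrable (ft f) →
        eLpNorm (multOp m f) (ENNReal.ofReal p) volume ≤
          ENNReal.ofReal (C * A) * eLpNorm f (ENNReal.ofReal p) volume := by
  obtain ⟨C, hC, hunit⟩ := exists_eLpNorm_multOp_le_of_norm_le_one hp
  refine ⟨C, hC, fun m a A ha hma f hf hft => ?_⟩
  have hA : 0 ≤ A := (norm_nonneg _).trans (ha (0, true))
  have hm : m =ᵐ[volume] fun ξ => A * (m ξ / A) := by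
    filter_upwards [ae_norm_le_of_eq_on_lacI ha hma] with ξ hξ
    refine (mul_div_cancel_of_imp' fun hA0 => ?_).symm
    rwa [ofReal_eq_zero.1 hA0, norm_le_zero_iff] at hξ
  have hnormalised := hunit (fun ξ => m ξ / A) (fun w => a w / A)
    (fun w => by
      rw [norm_div, Complex.norm_of_nonneg hA]
      exact div_le_one_of_le₀ (ha w) hA)
    (fun k ε ξ hξ => by rw [hma k ε ξ hξ]) f hf hft
  rw [multOp_congr_ae hm, multOp_const_mul, eLpNorm_const_smul, mul_comm C A,
    ENNReal.ofReal_mul hA, mul_assoc, ← ofReal_norm, Complex.norm_of_nonneg hA]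
  gcongr

/-- **Step multipliers constant on the lacunary intervals** (a form of the
Marcinkiewicz multiplier theorem).  If `m = ∑_{ω ∈ Δ} a_ω 1_ω` with `|a_ω| ≤ A`, then
for every `1 < p < ∞`, `‖A_m f‖_p ≤ C_p A ‖f‖_p` for all Schwartz `f`, i.e.
`‖A_m‖_{L^p→L^p} ≤ C_p sup_{ω∈Δ} |a_ω|`. -/
theorem lacunary_step_multiplier (p : ℝ) (hp1 : 1 < p) :
    ∃ C : ℝ, 0 < C ∧
      ∀ (m : ℝ → ℂ) (a : ℤ × Bool → ℂ) (A : ℝ),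
        Measurable m →
        (∀ w : ℤ × Bool, ‖a w‖ ≤ A) →
        (∀ (k : ℤ) (ε : Bool), ∀ ξ ∈ lacI k ε, m ξ = a (k, ε)) →
        m 0 = 0 →
        ∀ f : SchwartzMap ℝ ℂ,
          eLpNorm (multOp m (⇑f)) (ENNReal.ofReal p) volume
            ≤ ENNReal.ofReal (C * A) * eLpNorm (⇑f) (ENNReal.ofReal p) volume := by
  obtain ⟨C, hC, hbound⟩ := lacunary_step_multiplier_general hp1
  exact ⟨C, hC, fun m a A _ ha hma _ f =>
    hbound m a A ha hma f (LacunaryMultiplier.isTest_schwartz f)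
      (LacunaryMultiplier.integrable_ft_schwartz f)⟩
end
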